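/- arXiv:1208.0509 — 3 statements merged into one kernel-verified Lean document; each statement's English description precedes it below -/
import Mathlib

section
/- Let d ≥ 2, let r ≥ 2d+2 be a prime, and let N = (d+1)(r−1). Let f : Δ_N → ℝ^d be an affine map on the standard N-simplex whose N+1 vertices are colored with d+2 colors with color classes satisfying |C_0| = … = |C_d| = r−1 and |C_{d+1}| = 1, and suppose the N+1 image points f(v) of the vertices are in general position. Then T(f) ≥ 2^{r−2d−1}. -/
/-!
The existence of one partition follows Blagojević, Matschke and Ziegler. Count the assignments of
the vertices to `r` blocks whose blocks have a common point, each with the sign of its permutations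
times that of a determinant. By the cocycle identity for oriented simplicial cones, moving one
vertex changes this number by a multiple of `r`: the terms cancel under a sign-reversing swap, or
come in orbits under the translations of all blocks by `ℤ/r`. For a standard configuration the
number is `± ((r - 1)!) ^ (d + 1)`, which the prime `r` does not divide.

For the lower bound, let `x` be a common point of the blocks. At least `r - d` of them contain all
`d + 1` large colors. Cut these into points and rematch: every perfect matching all of whose rainbow
simplices contain `x` yields another partition. After a generic perturbation the number of such
matchings is even whenever there are more than `d + 1` points of each color, again by the cocycle
identity, now modulo 2. A second matching differs from the first in some simplex, so fixing either
of two simplices and inducting gives at least `2 ^ ((r - d) - (d + 1))` of them.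
-/

open scoped Classical

/-- A set of points in `ℝ^d` is in *general position* if for every `j < d`,
no `j + 2` of the points lie on a common `j`-dimensional affine subspace. -/
def GenPos (d : ℕ) (P : Set (Fin d → ℝ)) : Prop :=
  ∀ j < d, ∀ S : Finset (Fin d → ℝ), ↑S ⊆ P → S.card = j + 2 →
    ¬ ∃ A : AffineSubspace ℝ (Fin d → ℝ),
        Module.finrank ℝ A.direction = j ∧ (S : Set (Fin d → ℝ)) ⊆ (A : Set (Fin d → ℝ))

/-- `tverbergCount d N r f c` is the number of unordered colored Tverberg partitions for the
affine map `f` on the standard `N`-simplex (vertex `i` being `Pi.single i 1`), whose vertices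
are colored by `c` with `d + 2` colors: partitions of the `N + 1` vertices into `r` rainbow
blocks whose images under `f` have intersecting convex hulls. -/
noncomputable def tverbergCount (d N r : ℕ) (f : (Fin (N + 1) → ℝ) →ᵃ[ℝ] (Fin d → ℝ))
    (c : Fin (N + 1) → Fin (d + 2)) : ℕ :=
  Set.ncard { P : Finset (Finset (Fin (N + 1))) |
    P.card = r ∧
    (∀ B ∈ P, ∀ B' ∈ P, B ≠ B' → Disjoint B B') ∧
    P.biUnion id = Finset.univ ∧
    (∀ B ∈ P, ∀ j : Fin (d + 2), (B.filter fun i => c i = j).card ≤ 1) ∧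
    ∃ x : Fin d → ℝ, ∀ B ∈ P,
      x ∈ convexHull ℝ ((fun i => f (Pi.single i 1)) '' (B : Set (Fin (N + 1)))) }

section Ray

variable {𝕜 J : Type*} [Field 𝕜] [LinearOrder 𝕜] {F : Finset J} {α β : J → 𝕜}

/-- The ray `t ↦ β - t • α`, `t > 0`, passes through the relative interior of the `j`-th facet of
the orthant `{x | ∀ i ∈ F, 0 ≤ x i}`. -/
def CrossesFacet (F : Finset J) (α β : J → 𝕜) (j : J) : Prop :=
  ∃ t, 0 < t ∧ t * α j = β j ∧ ∀ i ∈ F, i ≠ j → t * α i < β i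

/-- The ray `t ↦ β - t • α`, `t ≥ 0`, neither starts on the boundary of the orthant
`{x | ∀ i ∈ F, 0 ≤ x i}` nor meets a face of codimension two. -/
def RayGeneric (F : Finset J) (α β : J → 𝕜) : Prop :=
  ∀ t, 0 ≤ t → (∀ i ∈ F, t * α i ≤ β i) →
    (∀ i ∈ F, ∀ j ∈ F, t * α i = β i → t * α j = β j → i = j) ∧ (t = 0 → ∀ i ∈ F, β i ≠ 0)

theorem RayGeneric.crossesFacet (hgen : RayGeneric F α β) {t : 𝕜} (ht : 0 ≤ t)
    (hle : ∀ i ∈ F, t * α i ≤ β i) {j : J} (hj : j ∈ F) (heq : t * α j = β j) :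
    CrossesFacet F α β j := by
  obtain ⟨honly, hstart⟩ := hgen t ht hle
  refine ⟨t, ht.lt_of_ne fun h => hstart h.symm j hj ?_, heq, fun i hi hij =>
    (hle i hi).lt_of_ne fun h => hij (honly i hi j hj h heq)⟩
  rw [← heq, ← h, zero_mul]

theorem CrossesFacet.exists_le {j : J} (h : CrossesFacet F α β j) :
    ∃ t, 0 < t ∧ t * α j = β j ∧ ∀ i ∈ F, t * α i ≤ β i := by
  obtain ⟨t, ht, heq, hlt⟩ := h
  refine ⟨t, ht, heq, fun i hi => ?_⟩
  obtain rfl | hij := eq_or_ne i j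
  exacts [heq.le, (hlt i hi hij).le]

variable [IsStrictOrderedRing 𝕜]

theorem CrossesFacet.eq_of_mul_pos {j j' : J} (hj : j ∈ F) (hj' : j' ∈ F) (h : 0 < α j * α j')
    (hc : CrossesFacet F α β j) (hc' : CrossesFacet F α β j') : j = j' := by
  obtain ⟨t, -, heq, hlt⟩ := hc
  obtain ⟨t', -, heq', hlt'⟩ := hc'
  by_contra hne
  have h₁ : 0 < (t' - t) * α j' := by linarith [hlt j' hj' (Ne.symm hne)]
  have h₂ : 0 < (t - t') * α j := by linarith [hlt' j hj hne]
  nlinarith [mul_pos h₁ h₂, mul_nonneg (sq_nonneg (t' - t)) h.le]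

theorem RayGeneric.exists_exit (hgen : RayGeneric F α β) (hpos : ∃ i ∈ F, 0 < α i) {t : 𝕜}
    (ht : 0 ≤ t) (hle : ∀ i ∈ F, t * α i ≤ β i) : ∃ j ∈ F, 0 < α j ∧ CrossesFacet F α β j := by
  obtain ⟨i₀, hi₀, hαi₀⟩ := hpos
  obtain ⟨j, hj, hmin⟩ := (F.filter (0 < α ·)).exists_min_image (fun i => β i / α i)
    ⟨i₀, Finset.mem_filter.2 ⟨hi₀, hαi₀⟩⟩
  obtain ⟨hjF, hαj⟩ := Finset.mem_filter.1 hj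
  have htj : t ≤ β j / α j := (le_div_iff₀ hαj).2 (hle j hjF)
  refine ⟨j, hjF, hαj, hgen.crossesFacet (ht.trans htj) (fun i hi => ?_) hjF
    (div_mul_cancel₀ _ hαj.ne')⟩
  obtain hαi | hαi := lt_or_ge 0 (α i)
  · exact (le_div_iff₀ hαi).1 (hmin i (Finset.mem_filter.2 ⟨hi, hαi⟩))
  · exact (mul_le_mul_of_nonpos_right htj hαi).trans (hle i hi)

theorem RayGeneric.exists_entry (hgen : RayGeneric F α β) (hstart : ∃ i ∈ F, β i ≤ 0) {t : 𝕜}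
    (ht : 0 ≤ t) (hle : ∀ i ∈ F, t * α i ≤ β i) : ∃ j ∈ F, α j < 0 ∧ CrossesFacet F α β j := by
  obtain ⟨i₀, hi₀, hβi₀⟩ := hstart
  by_cases hneg : ∃ i ∈ F, α i < 0 ∧ β i ≤ 0
  · obtain ⟨i, hi, hαi, hβi⟩ := hneg
    obtain ⟨j, hj, hmax⟩ := (F.filter (α · < 0)).exists_max_image (fun i => β i / α i)
      ⟨i, Finset.mem_filter.2 ⟨hi, hαi⟩⟩
    obtain ⟨hjF, hαj⟩ := Finset.mem_filter.1 hj
    have hj0 : 0 ≤ β j / α j := (div_nonneg_of_nonpos hβi hαi.le).trans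
      (hmax i (Finset.mem_filter.2 ⟨hi, hαi⟩))
    have hjt : β j / α j ≤ t := (div_le_iff_of_neg hαj).2 (hle j hjF)
    refine ⟨j, hjF, hαj, hgen.crossesFacet hj0 (fun k hk => ?_) hjF (div_mul_cancel₀ _ hαj.ne)⟩
    obtain hαk | hαk := lt_or_ge (α k) 0
    · exact (div_le_iff_of_neg hαk).1 (hmax k (Finset.mem_filter.2 ⟨hk, hαk⟩))
    · exact (mul_le_mul_of_nonneg_right hjt hαk).trans (hle k hk)
  · have hαi₀ : 0 ≤ α i₀ := not_lt.1 fun h => hneg ⟨i₀, hi₀, h, hβi₀⟩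
    have hβ0 : β i₀ = 0 := hβi₀.antisymm ((mul_nonneg ht hαi₀).trans (hle i₀ hi₀))
    refine absurd hβ0 ((hgen 0 le_rfl fun i hi => ?_).2 rfl i₀ hi₀)
    rw [zero_mul]
    obtain hαi | hαi := lt_or_ge (α i) 0
    · exact (not_le.1 fun h => hneg ⟨i, hi, hαi, h⟩).le
    · exact (mul_nonneg ht hαi).trans (hle i hi)

theorem sum_ite_one_zero_of_unique {ι R : Type*} [AddCommMonoidWithOne R] (s : Finset ι)
    (p : ι → Prop) [DecidablePred p] [Decidable (∃ i ∈ s, p i)]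
    (hp : ∀ i ∈ s, ∀ j ∈ s, p i → p j → i = j) :
    ∑ i ∈ s, (if p i then (1 : R) else 0) = if ∃ i ∈ s, p i then 1 else 0 := by
  split_ifs with h
  · obtain ⟨i, hi, hpi⟩ := h
    rw [Finset.sum_eq_single_of_mem i hi fun j hj hji => if_neg fun hpj =>
      hji (hp j hj i hi hpj hpi), if_pos hpi]
  · exact Finset.sum_eq_zero fun i hi => if_neg fun hpi => h ⟨i, hi, hpi⟩

/- The part of the ray inside the orthant is an interval: it has a unique exit, and a unique entry
unless the ray starts inside. -/
theorem RayGeneric.indicator_eq_sum_sign [Decidable (∀ i ∈ F, 0 < β i)]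
    (hgen : RayGeneric F α β) (hpos : ∃ i ∈ F, 0 < α i) :
    (if ∀ i ∈ F, 0 < β i then (1 : ℤ) else 0) =
      ∑ j ∈ F, if CrossesFacet F α β j then (SignType.sign (α j) : ℤ) else 0 := by
  have hsplit : ∀ j ∈ F, (if CrossesFacet F α β j then (SignType.sign (α j) : ℤ) else 0) =
      (if 0 < α j ∧ CrossesFacet F α β j then 1 else 0) -
        if α j < 0 ∧ CrossesFacet F α β j then 1 else 0 := by
    intro j _
    obtain h | h | h := lt_trichotomy (α j) 0 <;>
      by_cases hc : CrossesFacet F α β j <;> simp [h, h.not_gt, hc]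
  rw [Finset.sum_congr rfl hsplit, Finset.sum_sub_distrib,
    sum_ite_one_zero_of_unique F _ fun i hi j hj h h' =>
      h.2.eq_of_mul_pos hi hj (mul_pos h.1 h'.1) h'.2,
    sum_ite_one_zero_of_unique F _ fun i hi j hj h h' =>
      h.2.eq_of_mul_pos hi hj (mul_pos_of_neg_of_neg h.1 h'.1) h'.2]
  by_cases hβ : ∀ i ∈ F, 0 < β i
  · have hexit := hgen.exists_exit hpos le_rfl fun i hi => by simpa using (hβ i hi).le
    have hentry : ¬ ∃ j ∈ F, α j < 0 ∧ CrossesFacet F α β j := by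
      rintro ⟨j, hj, hαj, t, ht, heq, -⟩
      exact (hβ j hj).not_gt (heq ▸ mul_neg_of_pos_of_neg ht hαj)
    rw [if_pos hβ, if_pos hexit, if_neg hentry, sub_zero]
  · have hiff : (∃ j ∈ F, 0 < α j ∧ CrossesFacet F α β j) ↔
        ∃ j ∈ F, α j < 0 ∧ CrossesFacet F α β j := by
      constructor
      · rintro ⟨j, -, -, hc⟩
        obtain ⟨t, ht, -, hle⟩ := hc.exists_le
        exact hgen.exists_entry (by simpa using hβ) ht.le hle
      · rintro ⟨j, -, -, hc⟩
        obtain ⟨t, ht, -, hle⟩ := hc.exists_le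
        exact hgen.exists_exit hpos ht.le hle
    rw [if_neg hβ, if_congr hiff rfl rfl, sub_self]

end Ray

section ConeSign

open Matrix

variable {𝕜 J : Type*} [Field 𝕜] [LinearOrder 𝕜] [Fintype J]

/-- The point `b` avoids the walls spanned by the rows of `U` together with one extra vector `a`:
when `b` is written as a combination of these with nonnegative coefficients at the rows in `F` and
at `a`, at most one row in `F` gets coefficient zero, and none does if `a` gets zero. -/
def WallFree (F : Finset J) (b : J → 𝕜) (U : Matrix J J 𝕜) (a : J → 𝕜) : Prop :=
  ∀ (l : J → 𝕜) (t : 𝕜), (∀ j ∈ F, 0 ≤ l j) → 0 ≤ t → l ᵥ* U + t • a = b →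
    (∀ i ∈ F, ∀ j ∈ F, l i = 0 → l j = 0 → i = j) ∧ (t = 0 → ∀ i ∈ F, l i ≠ 0)

variable [DecidableEq J]

/-- The sign of `det U` if `b` is a combination of the rows of `U` whose coefficients at the rows
in `F` are positive, and `0` otherwise. The rows outside `F` thus act as free directions: modulo
their span, this detects whether `b` lies in the open cone over the rows in `F`. -/
noncomputable def coneSign (F : Finset J) (b : J → 𝕜) (U : Matrix J J 𝕜) : ℤ :=
  if ∃ l : J → 𝕜, l ᵥ* U = b ∧ ∀ j ∈ F, 0 < l j then (SignType.sign U.det : ℤ) else 0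

theorem vecMul_updateRow {R m n : Type*} [Semiring R] [Fintype m] [DecidableEq m]
    (U : Matrix m n R) (a : n → R) (l : m → R) (j : m) :
    l ᵥ* U.updateRow j a = Function.update l j 0 ᵥ* U + l j • a := by
  ext k
  simp only [vecMul, dotProduct, Pi.add_apply, Pi.smul_apply, smul_eq_mul]
  rw [← Finset.sum_erase_add _ _ (Finset.mem_univ j),
    ← Finset.sum_erase_add _ (fun i => Function.update l j 0 i * U i k) (Finset.mem_univ j)]
  simp only [updateRow_self, Function.update_self, zero_mul, add_zero]
  congr 1
  refine Finset.sum_congr rfl fun i hi => ?_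
  rw [updateRow_ne (Finset.ne_of_mem_erase hi), Function.update_of_ne (Finset.ne_of_mem_erase hi)]

variable {F : Finset J} {a b φ : J → 𝕜} {U : Matrix J J 𝕜}

theorem coneSign_eq_zero_of_det_eq_zero (h : U.det = 0) : coneSign F b U = 0 := by
  simp [coneSign, h]

theorem WallFree.updateRow (H : WallFree F b U a) {j : J} (hj : j ∈ F) :
    WallFree F b (U.updateRow j a) (U j) := by
  intro l t hl ht heq
  have hupdate : Function.update l j t = Function.update l j 0 + t • Pi.single j 1 := by
    ext i
    obtain rfl | hij := eq_or_ne i j <;> simp [*]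
  have hcomb : Function.update l j t ᵥ* U + l j • a = b := by
    rw [← heq, vecMul_updateRow, hupdate, add_vecMul, smul_vecMul, single_one_vecMul,
      add_right_comm]
    rfl
  have hnonneg : ∀ i ∈ F, 0 ≤ Function.update l j t i := fun i hi => by
    obtain rfl | hij := eq_or_ne i j
    · simpa using ht
    · simpa [hij] using hl i hi
  obtain ⟨honly, hnone⟩ := H _ _ hnonneg (hl j hj) hcomb
  have hne : ∀ i ∈ F, l i = 0 → l j = 0 → i = j := fun i hi hli hlj => by
    by_contra hij
    exact hnone hlj i hi (by simpa [hij] using hli)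
  refine ⟨fun i hi k hk hli hlk => ?_, fun ht0 i hi hli => ?_⟩
  · obtain rfl | hij := eq_or_ne i j
    · exact (hne k hk hlk hli).symm
    · obtain rfl | hkj := eq_or_ne k j
      · exact hne i hi hli hlk
      · exact honly i hi k hk (by simp [hij, hli]) (by simp [hkj, hlk])
  · obtain rfl | hij := eq_or_ne i j
    · exact hnone hli i hi (by simp [ht0])
    · exact hij (honly i hi j hj (by simp [hij, hli]) (by simp [ht0]))

variable [IsStrictOrderedRing 𝕜]

theorem coneSign_mul (F : Finset J) (b : J → 𝕜) (U : Matrix J J 𝕜) {G : Matrix J J 𝕜}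
    (hG : G.det ≠ 0) : coneSign F (b ᵥ* G) (U * G) = coneSign F b U * SignType.sign G.det := by
  have hinj : Function.Injective (· ᵥ* G) :=
    vecMul_injective_of_isUnit ((isUnit_iff_isUnit_det G).2 hG.isUnit)
  have hiff (l : J → 𝕜) : l ᵥ* (U * G) = b ᵥ* G ↔ l ᵥ* U = b := by
    rw [← vecMul_vecMul]
    exact hinj.eq_iff
  simp only [coneSign, hiff, det_mul, sign_mul]
  split_ifs <;> simp

theorem coneSign_submatrix_perm {σ : Equiv.Perm J} (hσ : ∀ j, σ j ∈ F ↔ j ∈ F) (b : J → 𝕜)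
    (U : Matrix J J 𝕜) :
    coneSign F b (U.submatrix σ id) = Equiv.Perm.sign σ * coneSign F b U := by
  have hvecMul (l : J → 𝕜) : (l ∘ σ) ᵥ* U.submatrix σ id = l ᵥ* U :=
    funext fun k => Equiv.sum_comp σ fun i => l i * U i k
  have hiff : (∃ l : J → 𝕜, l ᵥ* U.submatrix σ id = b ∧ ∀ j ∈ F, 0 < l j) ↔
      ∃ l : J → 𝕜, l ᵥ* U = b ∧ ∀ j ∈ F, 0 < l j := by
    constructor
    · rintro ⟨l, hl, hpos⟩
      refine ⟨l ∘ σ.symm, ?_, fun j hj => hpos _ ((hσ _).1 (by simpa using hj))⟩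
      rw [← hvecMul, Function.comp_assoc, Equiv.symm_comp_self, Function.comp_id, hl]
    · rintro ⟨l, hl, hpos⟩
      exact ⟨l ∘ σ, (hvecMul l).trans hl, fun j hj => hpos _ ((hσ j).2 hj)⟩
  rw [coneSign, coneSign, if_congr hiff rfl rfl, det_permute, sign_mul]
  split_ifs
  · obtain h | h := Int.units_eq_one_or (Equiv.Perm.sign σ) <;> simp [h]
  · simp

theorem coneSign_one (F : Finset J) (β : J → 𝕜) :
    coneSign F β 1 = if ∀ i ∈ F, 0 < β i then 1 else 0 := by
  simp [coneSign]

theorem coneSign_updateRow_one {j : J} (hj : j ∈ F) (α β : J → 𝕜) :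
    coneSign F β ((1 : Matrix J J 𝕜).updateRow j α) =
      if CrossesFacet F α β j then (SignType.sign (α j) : ℤ) else 0 := by
  have hdet : ((1 : Matrix J J 𝕜).updateRow j α).det = α j := by
    have h := det_updateRow_sum (1 : Matrix J J 𝕜) j α
    rwa [← vecMul_eq_sum, vecMul_one, det_one, smul_eq_mul, mul_one] at h
  have hiff : (∃ l : J → 𝕜, l ᵥ* (1 : Matrix J J 𝕜).updateRow j α = β ∧ ∀ i ∈ F, 0 < l i) ↔
      CrossesFacet F α β j := by
    simp only [vecMul_updateRow, vecMul_one]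
    constructor
    · rintro ⟨l, rfl, hl⟩
      refine ⟨l j, hl j hj, by simp, fun i hi hij => ?_⟩
      simpa [hij] using hl i hi
    · rintro ⟨t, ht, heq, hlt⟩
      refine ⟨Function.update (β - t • α) j t, ?_, fun i hi => ?_⟩
      · ext i
        obtain rfl | hij := eq_or_ne i j <;> simp [*]
      · obtain rfl | hij := eq_or_ne i j
        · simpa using ht
        · simpa [hij] using hlt i hi hij
  rw [coneSign, if_congr hiff rfl rfl, hdet]

/- In the coordinates given by the rows of `U`, the combinations of `b` with `a` moved to the other
side trace the ray `β - t • α`. -/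
theorem coneSign_eq_sum_updateRow_of_det_ne_zero (hdet : U.det ≠ 0) (hU : ∀ j ∈ F, 0 < U j ⬝ᵥ φ)
    (hfree : ∀ j ∉ F, U j ⬝ᵥ φ = 0) (ha : 0 < a ⬝ᵥ φ) (H : WallFree F b U a) :
    coneSign F b U = ∑ j ∈ F, coneSign F b (U.updateRow j a) := by
  obtain ⟨α, rfl⟩ : ∃ α, α ᵥ* U = a := ⟨a ᵥ* U⁻¹, by simp [hdet]⟩
  obtain ⟨β, rfl⟩ : ∃ β, β ᵥ* U = b := ⟨b ᵥ* U⁻¹, by simp [hdet]⟩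
  have hpos : ∃ i ∈ F, 0 < α i := by
    by_contra! hα
    refine ha.not_ge ?_
    rw [← dotProduct_mulVec]
    refine Finset.sum_nonpos fun j _ => ?_
    by_cases hj : j ∈ F
    · exact mul_nonpos_of_nonpos_of_nonneg (hα j hj) (hU j hj).le
    · exact (mul_eq_zero_of_right _ (hfree j hj)).le
  have hgen : RayGeneric F α β := by
    intro t ht hle
    obtain ⟨honly, hnone⟩ := H (β - t • α) t (by simpa using hle) ht
      (by rw [sub_vecMul, smul_vecMul, sub_add_cancel])
    refine ⟨fun i hi j hj hti htj => honly i hi j hj (by simp [hti]) (by simp [htj]), ?_⟩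
    rintro rfl i hi
    simpa using hnone rfl i hi
  have hrow (j : J) : U.updateRow j (α ᵥ* U) = (1 : Matrix J J 𝕜).updateRow j α * U := by
    rw [updateRow_mul, one_mul]
  have hone : coneSign F (β ᵥ* U) U = coneSign F (β ᵥ* U) (1 * U) := by rw [one_mul]
  rw [hone, coneSign_mul F β 1 hdet, coneSign_one, hgen.indicator_eq_sum_sign hpos, Finset.sum_mul]
  refine Finset.sum_congr rfl fun j hj => ?_
  rw [hrow, coneSign_mul F β _ hdet, coneSign_updateRow_one hj]

theorem updateRow_updateRow_eq_submatrix_swap {m n R : Type*} [DecidableEq m] (U : Matrix m n R)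
    (a : n → R) {i j : m} (hij : i ≠ j) :
    (U.updateRow j a).updateRow i (U j) = (U.updateRow i a).submatrix (Equiv.swap i j) id := by
  ext k l
  obtain rfl | hki := eq_or_ne k i
  · simp [updateRow_ne hij.symm]
  · obtain rfl | hkj := eq_or_ne k j
    · simp [updateRow_ne hki]
    · simp [updateRow_ne hki, updateRow_ne hkj, Equiv.swap_apply_of_ne_of_ne hki hkj]

/- The cocycle identity: the signed cones over the faces of a simplex add up to zero. -/
theorem coneSign_eq_sum_updateRow (hU : ∀ j ∈ F, 0 < U j ⬝ᵥ φ) (hfree : ∀ j ∉ F, U j ⬝ᵥ φ = 0)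
    (ha : 0 < a ⬝ᵥ φ) (H : WallFree F b U a) :
    coneSign F b U = ∑ j ∈ F, coneSign F b (U.updateRow j a) := by
  by_cases hdet : U.det = 0
  swap
  · exact coneSign_eq_sum_updateRow_of_det_ne_zero hdet hU hfree ha H
  have hU0 : coneSign F b U = 0 := coneSign_eq_zero_of_det_eq_zero hdet
  by_cases hall : ∀ j ∈ F, (U.updateRow j a).det = 0
  · rw [hU0, Finset.sum_eq_zero fun j hj => coneSign_eq_zero_of_det_eq_zero (hall j hj)]
  -- Otherwise exchange the roles of `a` and the row `U j`.
  push Not at hall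
  obtain ⟨j, hj, hjdet⟩ := hall
  have hexchange := coneSign_eq_sum_updateRow_of_det_ne_zero (φ := φ) hjdet (fun i hi => ?_)
    (fun i hi => ?_) (hU j hj) (H.updateRow hj)
  · rw [← Finset.add_sum_erase _ _ hj, updateRow_idem, updateRow_eq_self, hU0, zero_add]
      at hexchange
    rw [← Finset.add_sum_erase _ _ hj, hU0, hexchange, ← Finset.sum_add_distrib]
    refine (Finset.sum_eq_zero fun i hi => ?_).symm
    obtain ⟨hij, hiF⟩ := Finset.mem_erase.1 hi
    have hswap (k : J) : Equiv.swap i j k ∈ F ↔ k ∈ F := by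
      rw [Equiv.swap_apply_def]
      split_ifs <;> simp [*]
    rw [updateRow_updateRow_eq_submatrix_swap U a hij, coneSign_submatrix_perm hswap,
      Equiv.Perm.sign_swap hij]
    simp
  · obtain rfl | hij := eq_or_ne i j
    · simpa using ha
    · simpa [updateRow_ne hij] using hU i hi
  · rw [updateRow_ne (ne_of_mem_of_not_mem hj hi).symm]
    exact hfree i hi

end ConeSign

section RainbowMatching

variable {J I : Type*}

/-- `S` is a perfect matching between the sets `Y j`: a family of rainbow simplices (choices `s j`
of one element of each `Y j`) that covers every element of every `Y j` exactly once. -/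
def IsRainbowMatching (Y : J → Set I) (S : Finset (J → I)) : Prop :=
  ∀ j, Set.BijOn (fun s => s j) (S : Set (J → I)) (Y j)

/-- `f` enumerates a perfect matching between the sets `Y j`, in the order prescribed by the
enumeration `e` of `Y j₀`. -/
def IsMatchingEnum {X : Type*} (Y : J → Set I) (j₀ : J) (e : X → I) (f : X → J → I) : Prop :=
  (∀ x, f x j₀ = e x) ∧ ∀ j, Set.BijOn (fun x => f x j) Set.univ (Y j)

theorem isRainbowMatching_insert {Y : J → Set I} {S : Finset (J → I)} [DecidableEq (J → I)]
    {s : J → I} (hs : s ∉ S) :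
    IsRainbowMatching Y (insert s S) ↔
      (∀ j, s j ∈ Y j) ∧ IsRainbowMatching (fun j => Y j \ {s j}) S := by
  simp only [IsRainbowMatching, Finset.coe_insert]
  refine ⟨fun h => ⟨fun j => (h j).mapsTo (Set.mem_insert s _), fun j => ?_⟩, fun ⟨hsY, h⟩ j => ?_⟩
  · simpa [hs] using (h j).sdiff_singleton (Set.mem_insert s _)
  · simpa [Set.insert_eq_of_mem (hsY j)] using (h j).insert (a := s) (by simp)

theorem IsRainbowMatching.exists_mem_eq {Y : J → Set I} {S : Finset (J → I)}
    (hS : IsRainbowMatching Y S) {j : J} {i : I} (hi : i ∈ Y j) : ∃ s ∈ S, s j = i :=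
  (hS j).surjOn hi

theorem IsRainbowMatching.exists_ne_apply_eq {Y : J → Set I} {S T : Finset (J → I)}
    (hS : IsRainbowMatching Y S) (hT : IsRainbowMatching Y T) (hST : S ≠ T) (j : J) :
    ∃ s ∈ S, ∃ t ∈ T, s ≠ t ∧ s j = t j := by
  obtain ⟨s, hsS, hsT⟩ : ∃ s ∈ S, s ∉ T := by
    by_contra! hsub
    refine hST (Finset.eq_of_subset_of_card_le hsub ?_)
    rw [← Set.ncard_coe_finset, ← Set.ncard_coe_finset, (hS j).ncard_eq, (hT j).ncard_eq]
  obtain ⟨t, htT, hts⟩ := hT.exists_mem_eq ((hS j).mapsTo hsS)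
  exact ⟨s, hsS, t, htT, fun h => hsT (h ▸ htT), hts.symm⟩

theorem isRainbowMatching_image {X : Type*} [Fintype X] [DecidableEq (J → I)] {Y : J → Set I}
    {j₀ : J} {e : X → I} {f : X → J → I} (hf : IsMatchingEnum Y j₀ e f) :
    IsRainbowMatching Y (Finset.univ.image f) := by
  intro j
  rw [Finset.coe_image, Finset.coe_univ, Set.image_univ]
  refine ⟨?_, ?_, fun i hi => ?_⟩
  · rintro _ ⟨x, rfl⟩
    exact (hf.2 j).mapsTo (Set.mem_univ x)
  · rintro _ ⟨x, rfl⟩ _ ⟨y, rfl⟩ hxy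
    rw [(hf.2 j).injOn (Set.mem_univ x) (Set.mem_univ y) hxy]
  · obtain ⟨x, -, hx⟩ := (hf.2 j).surjOn hi
    exact ⟨f x, Set.mem_range_self x, hx⟩

theorem IsRainbowMatching.exists_image_eq {X : Type*} [Fintype X] [DecidableEq (J → I)]
    {Y : J → Set I} {S : Finset (J → I)} (hS : IsRainbowMatching Y S) {j₀ : J} {e : X → I}
    (he : Set.BijOn e Set.univ (Y j₀)) :
    ∃ f, IsMatchingEnum Y j₀ e f ∧ Finset.univ.image f = S := by
  choose f hfS hf using fun x => hS.exists_mem_eq (he.mapsTo (Set.mem_univ x))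
  have hfbij : Set.BijOn f Set.univ S := by
    refine ⟨fun x _ => hfS x, fun x hx y hy hxy => he.injOn hx hy ?_, fun s hs => ?_⟩
    · rw [← hf x, ← hf y, hxy]
    · obtain ⟨x, hx, hxs⟩ := he.surjOn ((hS j₀).mapsTo hs)
      exact ⟨x, hx, (hS j₀).injOn (hfS x) hs ((hf x).trans hxs)⟩
  refine ⟨f, ⟨hf, fun j => (hS j).comp hfbij⟩, ?_⟩
  rw [← Finset.coe_inj, Finset.coe_image, Finset.coe_univ, hfbij.image_eq]

theorem IsMatchingEnum.eq_of_image_eq {X : Type*} [Fintype X] [DecidableEq (J → I)]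
    {Y : J → Set I} {j₀ : J} {e : X → I} {f g : X → J → I} (hf : IsMatchingEnum Y j₀ e f)
    (hg : IsMatchingEnum Y j₀ e g) (hfg : Finset.univ.image f = Finset.univ.image g) : f = g := by
  funext x
  obtain ⟨y, -, hy⟩ := Finset.mem_image.1 (hfg ▸ Finset.mem_image_of_mem f (Finset.mem_univ x))
  have hyx : y = x := (hf.2 j₀).injOn (Set.mem_univ y) (Set.mem_univ x) <| by
    rw [hf.1, ← hg.1, hy]
  rw [← hy, hyx]

variable [DecidableEq J]

/-- Exchanges the values at `x` and `y` of an enumeration in the colors in `M`. -/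
def swapOn {X : Type*} [DecidableEq X] (M : Finset J) (x y : X) (f : X → J → I) : X → J → I :=
  fun z j => if j ∈ M then f (Equiv.swap x y z) j else f z j

theorem swapOn_swapOn {X : Type*} [DecidableEq X] (M : Finset J) (x y : X) (f : X → J → I) :
    swapOn M x y (swapOn M x y f) = f := by
  funext z j
  by_cases hj : j ∈ M <;> simp [swapOn, hj]

theorem isMatchingEnum_swapOn {X : Type*} [DecidableEq X] {Y : J → Set I} {j₀ : J} {e : X → I}
    {f : X → J → I} (hf : IsMatchingEnum Y j₀ e f) {M : Finset J} (hM : j₀ ∉ M) (x y : X) :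
    IsMatchingEnum Y j₀ e (swapOn M x y f) := by
  refine ⟨fun z => by simp [swapOn, hM, hf.1], fun j => ?_⟩
  by_cases hj : j ∈ M
  · simpa [swapOn, hj, Function.comp_def] using
      (hf.2 j).comp (Equiv.swap x y).bijective.bijOn_univ
  · simpa [swapOn, hj] using hf.2 j

theorem swapOn_ne {X : Type*} [DecidableEq X] {Y : J → Set I} {j₀ : J} {e : X → I}
    {f : X → J → I} (hf : IsMatchingEnum Y j₀ e f) {M : Finset J} (hM : M.Nonempty) {x y : X}
    (hxy : x ≠ y) : swapOn M x y f ≠ f := by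
  obtain ⟨j, hj⟩ := hM
  refine fun h => hxy ((hf.2 j).injOn (Set.mem_univ x) (Set.mem_univ y) ?_)
  simpa [swapOn, hj] using (congrFun (congrFun h x) j).symm

variable {R : Type*}

/- Swapping two simplices of a matching whose factors do not depend on the color `l` changes
neither of these factors, if the swap is in color `l` only or in all colors but `l`. -/
theorem prod_swapOn_eq [Fintype J] {X : Type*} [Fintype X] [DecidableEq X] [CommMonoid R]
    {ψ : J → (J → I) → R} (hψ : ∀ l s s', (∀ j ≠ l, s j = s' j) → ψ l s = ψ l s') {c : X → J}
    {x y : X} {l : J} (hx : c x = l) (hy : c y = l) {M : Finset J}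
    (hM : M = {l} ∨ M = Finset.univ.erase l) (f : X → J → I) :
    ∏ z, ψ (c z) (swapOn M x y f z) = ∏ z, ψ (c z) (f z) := by
  have hc (z : X) : c (Equiv.swap x y z) = c z := by
    rw [Equiv.swap_apply_def]
    split_ifs <;> simp [*]
  have hfix (z : X) (hz : c z ≠ l) : Equiv.swap x y z = z :=
    Equiv.swap_apply_of_ne_of_ne (by grind) (by grind)
  obtain rfl | rfl := hM
  · refine Finset.prod_congr rfl fun z _ => ?_
    obtain rfl | hz := eq_or_ne (c z) l
    · exact hψ _ _ _ fun j hj => by simp [swapOn, hj]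
    · congr 1
      funext j
      simp [swapOn, hfix z hz]
  · rw [← Equiv.prod_comp (Equiv.swap x y) fun z => ψ (c z) (f z)]
    refine Finset.prod_congr rfl fun z _ => ?_
    rw [hc]
    obtain rfl | hz := eq_or_ne (c z) l
    · exact hψ _ _ _ fun j hj => by simp [swapOn, hj]
    · congr 1
      funext j
      simp [swapOn, hfix z hz]

theorem sum_matchingEnum_prod_eq_zero {J I R X : Type*} [Finite J] [Nontrivial J] [CommRing R]
    [CharP R 2] [Fintype X] [Fintype (X → J → I)] {ψ : J → (J → I) → R}
    (hψ : ∀ l s s', (∀ j ≠ l, s j = s' j) → ψ l s = ψ l s') (Y : J → Set I) (j₀ : J) (e : X → I)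
    [DecidablePred (IsMatchingEnum Y j₀ e)] {c : X → J} (hc : ¬ Function.Injective c) :
    ∑ f with IsMatchingEnum Y j₀ e f, ∏ x, ψ (c x) (f x) = 0 := by
  classical
  cases nonempty_fintype J
  obtain ⟨x, y, hcxy, hxy⟩ : ∃ x y, c x = c y ∧ x ≠ y := by
    simpa [Function.Injective] using hc
  obtain ⟨M, hMl, hMne, hMj₀⟩ : ∃ M : Finset J,
      (M = {c x} ∨ M = Finset.univ.erase (c x)) ∧ M.Nonempty ∧ j₀ ∉ M := by
    obtain h | h := eq_or_ne j₀ (c x)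
    · obtain ⟨j, hj⟩ := exists_ne (c x)
      exact ⟨Finset.univ.erase (c x), .inr rfl, ⟨j, by simp [hj]⟩, by simp [h]⟩
    · exact ⟨{c x}, .inl rfl, Finset.singleton_nonempty _, by simp [h]⟩
  refine Finset.sum_involution (fun f _ => swapOn M x y f) (fun f _ => ?_) (fun f hf _ => ?_)
    (fun f hf => ?_) fun f _ => swapOn_swapOn M x y f
  · rw [prod_swapOn_eq hψ rfl hcxy.symm hMl, CharTwo.add_self_eq_zero]
  · exact swapOn_ne (Finset.mem_filter.1 hf).2 hMne hxy
  · exact Finset.mem_filter.2 ⟨Finset.mem_univ _,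
      isMatchingEnum_swapOn (Finset.mem_filter.1 hf).2 hMj₀ x y⟩

variable [Fintype J] [Fintype I]

/- Expanding the product over a matching assigns a color to each of its simplices; when there are
more simplices than colors, two of them get the same color and can be swapped. -/
theorem sum_rainbowMatching_prod_eq_zero [Nontrivial J] [CommRing R] [CharP R 2]
    {ψ : J → (J → I) → R} (hψ : ∀ l s s', (∀ j ≠ l, s j = s' j) → ψ l s = ψ l s')
    {Y : J → Set I} [DecidablePred (IsRainbowMatching Y)] {j₀ : J}
    (hY : Fintype.card J < (Y j₀).ncard) :
    ∑ S with IsRainbowMatching Y S, ∏ s ∈ S, ∑ l, ψ l s = 0 := by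
  classical
  let e : Y j₀ → I := Subtype.val
  have he : Set.BijOn e Set.univ (Y j₀) := by
    simp [e, Set.BijOn, Set.MapsTo, Set.SurjOn]
  have hinj {f : Y j₀ → J → I} (hf : IsMatchingEnum Y j₀ e f) : Function.Injective f :=
    fun x y hxy => Subtype.ext <| by simpa [hf.1, e] using congrFun hxy j₀
  calc ∑ S with IsRainbowMatching Y S, ∏ s ∈ S, ∑ l, ψ l s
      = ∑ f with IsMatchingEnum Y j₀ e f, ∏ x, ∑ l, ψ l (f x) := by
        refine (Finset.sum_bij (fun f _ => Finset.univ.image f) (fun f hf => ?_)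
          (fun f hf g hg hfg => ?_) (fun S hS => ?_) fun f hf => ?_).symm
        · simpa using isRainbowMatching_image (Finset.mem_filter.1 hf).2
        · exact (Finset.mem_filter.1 hf).2.eq_of_image_eq (Finset.mem_filter.1 hg).2 hfg
        · obtain ⟨f, hf, hfS⟩ := (Finset.mem_filter.1 hS).2.exists_image_eq he
          exact ⟨f, by simpa using hf, hfS⟩
        · rw [Finset.prod_image (hinj (Finset.mem_filter.1 hf).2).injOn]
    _ = ∑ c : Y j₀ → J, ∑ f with IsMatchingEnum Y j₀ e f, ∏ x, ψ (c x) (f x) := by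
        simp only [Finset.prod_univ_sum, Fintype.piFinset_univ]
        exact Finset.sum_comm
    _ = 0 := Finset.sum_eq_zero fun c _ => sum_matchingEnum_prod_eq_zero hψ Y j₀ e fun hc => by
        have := Fintype.card_le_of_injective c hc
        rw [← Nat.card_coe_set_eq, Nat.card_eq_fintype_card] at hY
        omega

/-- The perfect matchings between the sets `Y j` that consist of simplices with the property
`hit`. -/
noncomputable def hitMatchings (hit : (J → I) → Prop) (Y : J → Set I) :
    Finset (Finset (J → I)) :=
  {S | IsRainbowMatching Y S ∧ ∀ s ∈ S, hit s}

variable {hit : (J → I) → Prop} {Y : J → Set I}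

theorem mem_hitMatchings {S : Finset (J → I)} :
    S ∈ hitMatchings hit Y ↔ IsRainbowMatching Y S ∧ ∀ s ∈ S, hit s := by
  simp [hitMatchings]

theorem disjoint_filter_mem_hitMatchings {s t : J → I} {j : J} (hst : s ≠ t) (hj : s j = t j) :
    Disjoint (hitMatchings hit Y |>.filter (s ∈ ·)) (hitMatchings hit Y |>.filter (t ∈ ·)) :=
  Finset.disjoint_filter.2 fun _ hU hs ht => hst (((mem_hitMatchings.1 hU).1 j).injOn hs ht hj)

theorem card_filter_mem_hitMatchings [DecidableEq I] {s : J → I} (hsY : ∀ j, s j ∈ Y j)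
    (hs : hit s) [Nonempty J] :
    (hitMatchings hit Y |>.filter (s ∈ ·)).card =
      (hitMatchings hit fun j => Y j \ {s j}).card := by
  have hnotMem {S} (hS : S ∈ hitMatchings hit fun j => Y j \ {s j}) : s ∉ S := fun h =>
    ((mem_hitMatchings.1 hS).1 (Classical.arbitrary J)).mapsTo h |>.2 rfl
  have hinsert {S : Finset (J → I)} (hsS : s ∉ S) :
      insert s S ∈ hitMatchings hit Y ↔ S ∈ hitMatchings hit fun j => Y j \ {s j} := by
    simp [mem_hitMatchings, isRainbowMatching_insert hsS, hsY, hs]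
  refine Finset.card_bij' (fun S _ => S.erase s) (fun S _ => insert s S) (fun S hS => ?_)
    (fun S hS => ?_) (fun S hS => ?_) fun S hS => Finset.erase_insert (hnotMem hS)
  · obtain ⟨hS, hsS⟩ := Finset.mem_filter.1 hS
    rwa [← hinsert (Finset.notMem_erase s S), Finset.insert_erase hsS]
  · exact Finset.mem_filter.2 ⟨(hinsert (hnotMem hS)).2 hS, Finset.mem_insert_self s S⟩
  · exact Finset.insert_erase (Finset.mem_filter.1 hS).2

theorem hitMatchings_sdiff_nonempty {S : Finset (J → I)} (hS : S ∈ hitMatchings hit Y) {s : J → I}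
    (hs : s ∈ S) : (hitMatchings hit fun j => Y j \ {s j}).Nonempty := by
  classical
  obtain ⟨hSY, hhit⟩ := mem_hitMatchings.1 hS
  rw [← Finset.insert_erase hs, isRainbowMatching_insert (Finset.notMem_erase s S)] at hSY
  exact ⟨_, mem_hitMatchings.2 ⟨hSY.2, fun t ht => hhit t (Finset.mem_of_mem_erase ht)⟩⟩

/- Two different matchings contain different simplices with the same vertex in one color; each of
these can be completed in at least half as many ways as needed. -/
theorem two_pow_le_card_hitMatchings [Nonempty J] {k : ℕ}
    (heven : ∀ Y : J → Set I, (∀ j, k < (Y j).ncard) → Even (hitMatchings hit Y).card) {n : ℕ} :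
    ∀ {Y : J → Set I}, (∀ j, (Y j).ncard = n) → (hitMatchings hit Y).Nonempty →
      2 ^ (n - k) ≤ (hitMatchings hit Y).card := by
  classical
  induction n with
  | zero => exact fun _ hne => by simpa using Finset.card_pos.2 hne
  | succ n ih =>
    intro Y hY hne
    obtain hnk | hkn := le_or_gt (n + 1) k
    · simpa [Nat.sub_eq_zero_of_le hnk] using Finset.card_pos.2 hne
    obtain ⟨S, hS, T, hT, hST⟩ : ∃ S ∈ hitMatchings hit Y, ∃ T ∈ hitMatchings hit Y, S ≠ T := by
      refine Finset.one_lt_card.1 ?_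
      obtain ⟨m, hm⟩ := heven Y fun j => by rwa [hY]
      have := Finset.card_pos.2 hne
      omega
    obtain ⟨s, hsS, t, htT, hst, hstj⟩ := (mem_hitMatchings.1 hS).1.exists_ne_apply_eq
      (mem_hitMatchings.1 hT).1 hST (Classical.arbitrary J)
    have hcount {u U} (hU : U ∈ hitMatchings hit Y) (hu : u ∈ U) :
        2 ^ (n - k) ≤ (hitMatchings hit Y |>.filter (u ∈ ·)).card := by
      obtain ⟨hUY, hhit⟩ := mem_hitMatchings.1 hU
      have huY (j : J) : u j ∈ Y j := (hUY j).mapsTo hu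
      rw [card_filter_mem_hitMatchings huY (hhit u hu)]
      refine ih (fun j => ?_) (hitMatchings_sdiff_nonempty hU hu)
      rw [Set.ncard_sdiff_singleton_of_mem (huY j), hY, Nat.add_sub_cancel]
    calc 2 ^ (n + 1 - k) = 2 ^ (n - k) + 2 ^ (n - k) := by
          rw [Nat.sub_add_comm (Nat.lt_succ_iff.1 hkn), pow_succ, mul_two]
      _ ≤ _ := add_le_add (hcount hS hsS) (hcount hT htT)
      _ = _ := (Finset.card_union_of_disjoint (disjoint_filter_mem_hitMatchings hst hstj)).symm
      _ ≤ _ := Finset.card_le_card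
          (Finset.union_subset (Finset.filter_subset _ _) (Finset.filter_subset _ _))

end RainbowMatching

section Birch

open Matrix

variable {𝕜 J I : Type*}

/-- The matrix whose rows are the vertices of the rainbow simplex `s`. -/
def rainbowMatrix (p : J → I → J → 𝕜) (s : J → I) : Matrix J J 𝕜 :=
  of fun j => p j (s j)

variable [Field 𝕜] [LinearOrder 𝕜] [Fintype J] [DecidableEq J]

theorem coneSign_cast_zmod_two (F : Finset J) (b : J → 𝕜) (U : Matrix J J 𝕜) :
    (coneSign F b U : ZMod 2) = if coneSign F b U ≠ 0 then 1 else 0 := by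
  rw [coneSign]
  split_ifs with h₁ h₂ h₂
  · obtain h | h | h := SignType.trichotomy (SignType.sign U.det) <;> simp_all
  · simp_all
  · simp at h₂
  · simp

variable [IsStrictOrderedRing 𝕜] [Fintype I] [Nontrivial J] {b φ : J → 𝕜} {p : J → I → J → 𝕜}
  {Y : J → Set I}

/- The cocycle identity for a fixed extra point writes the indicator of `b` being in the cone over
a simplex, modulo two, as a sum of terms that each ignore one vertex. -/
theorem even_card_hitMatchings (hφ : ∀ j i, 0 < p j i ⬝ᵥ φ)
    (H : ∀ s j i, WallFree Finset.univ b (rainbowMatrix p s) (p j i))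
    (hY : ∀ j, Fintype.card J < (Y j).ncard) :
    Even (hitMatchings (fun s => coneSign Finset.univ b (rainbowMatrix p s) ≠ 0) Y).card := by
  let j₀ := Classical.arbitrary J
  obtain ⟨i₀, -⟩ := Set.nonempty_of_ncard_ne_zero ((Nat.zero_le _).trans_lt (hY j₀)).ne'
  have hcocycle (s : J → I) : (coneSign Finset.univ b (rainbowMatrix p s) : ZMod 2) =
      ∑ l, (coneSign Finset.univ b ((rainbowMatrix p s).updateRow l (p j₀ i₀)) : ZMod 2) := by
    rw [coneSign_eq_sum_updateRow (U := rainbowMatrix p s) (fun j _ => hφ j (s j)) (by simp)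
      (hφ j₀ i₀) (H s j₀ i₀), Int.cast_sum]
  rw [← ZMod.natCast_eq_zero_iff_even, hitMatchings, ← Finset.filter_filter, Finset.card_filter,
    Nat.cast_sum, ← sum_rainbowMatching_prod_eq_zero (R := ZMod 2) (ψ := fun l s =>
      coneSign Finset.univ b ((rainbowMatrix p s).updateRow l (p j₀ i₀))) ?_ (hY j₀)]
  · refine Finset.sum_congr rfl fun S _ => ?_
    simp_rw [← hcocycle, coneSign_cast_zmod_two, Finset.prod_ite_zero]
    simp
  · intro l s s' hss'
    congr 2
    ext j k
    obtain rfl | hj := eq_or_ne j l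
    · simp
    · simp [updateRow_ne hj, rainbowMatrix, hss' j hj]

theorem two_pow_le_card_openHitMatchings (hφ : ∀ j i, 0 < p j i ⬝ᵥ φ)
    (H : ∀ s j i, WallFree Finset.univ b (rainbowMatrix p s) (p j i)) {n : ℕ}
    (hY : ∀ j, (Y j).ncard = n)
    (hne : (hitMatchings (fun s => coneSign Finset.univ b (rainbowMatrix p s) ≠ 0) Y).Nonempty) :
    2 ^ (n - Fintype.card J) ≤
      (hitMatchings (fun s => coneSign Finset.univ b (rainbowMatrix p s) ≠ 0) Y).card :=
  two_pow_le_card_hitMatchings (fun _ hY' => even_card_hitMatchings hφ H hY') hY hne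

end Birch

section Perturbation

open Matrix Topology Filter

theorem isClosed_setOf_exists_mem {X Y : Type*} [TopologicalSpace X] [TopologicalSpace Y]
    {K : Set Y} (hK : IsCompact K) {C : Set (X × Y)} (hC : IsClosed C) :
    IsClosed {x : X | ∃ y ∈ K, (x, y) ∈ C} := by
  have : CompactSpace K := isCompact_iff_compactSpace.1 hK
  have hCK : IsClosed {z : X × K | (z.1, (z.2 : Y)) ∈ C} := hC.preimage (by fun_prop)
  convert isClosedMap_fst_of_compactSpace _ hCK using 1
  ext x
  simp

theorem dense_setOf_forall_notMem_submodule {E ι : Type*} [NormedAddCommGroup E]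
    [NormedSpace ℝ E] [FiniteDimensional ℝ E] [Countable ι] {V : ι → Submodule ℝ E}
    (hV : ∀ i, V i ≠ ⊤) : Dense {x | ∀ i, x ∉ V i} := by
  have : CompleteSpace E := FiniteDimensional.complete ℝ E
  have hdense : Dense (⋂ i, (V i : Set E)ᶜ) := by
    refine dense_iInter_of_isOpen (fun i => (V i).closed_of_finiteDimensional.isOpen_compl)
      fun i => interior_eq_empty_iff_dense_compl.1 ?_
    by_contra h
    exact hV i ((V i).eq_top_of_nonempty_interior' (Set.nonempty_iff_ne_empty.2 h))
  convert hdense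
  ext x
  simp

theorem span_image_ne_top_of_card_lt {𝕜 E ι : Type*} [DivisionRing 𝕜] [AddCommGroup E]
    [Module 𝕜 E] (g : ι → E) {T : Finset ι} (hT : T.card < Module.finrank 𝕜 E) :
    Submodule.span 𝕜 (g '' T) ≠ ⊤ := by
  intro h
  have hle := finrank_span_finset_le_card (R := 𝕜) (T.image g)
  rw [Finset.coe_image, Set.finrank, h, finrank_top] at hle
  exact (hle.trans Finset.card_image_le).not_gt hT

section OrderedField

variable {𝕜 J : Type*} [Field 𝕜] [Fintype J] {b φ l : J → 𝕜} {U : Matrix J J 𝕜}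

theorem sum_coeff_eq_dotProduct (hU : U *ᵥ φ = 1) (hl : l ᵥ* U = b) :
    ∑ j, l j = b ⬝ᵥ φ := by
  rw [← hl, ← dotProduct_mulVec, hU, dotProduct_one]

/-- Translate all rows of `U` so that their barycenter moves the fraction `ε` of the way to `b`. -/
def pullToward (b : J → 𝕜) (U : Matrix J J 𝕜) (ε : 𝕜) : Matrix J J 𝕜 :=
  U + vecMulVec 1 (ε • (b - (fun _ => (Fintype.card J : 𝕜)⁻¹) ᵥ* U))

theorem pullToward_zero (b : J → 𝕜) (U : Matrix J J 𝕜) : pullToward b U 0 = U := by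
  simp [pullToward]

theorem barycenter_coeff_dotProduct_one [CharZero 𝕜] [Nonempty J] :
    (fun _ : J => (Fintype.card J : 𝕜)⁻¹) ⬝ᵥ 1 = 1 := by
  simp [dotProduct_one]

theorem pullToward_mulVec [CharZero 𝕜] [Nonempty J] (hb : b ⬝ᵥ φ = 1) (hU : U *ᵥ φ = 1) (ε : 𝕜) :
    pullToward b U ε *ᵥ φ = 1 := by
  rw [pullToward, add_mulVec, vecMulVec_mulVec, smul_dotProduct, sub_dotProduct,
    ← dotProduct_mulVec, hU, hb, barycenter_coeff_dotProduct_one]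
  simp

variable [LinearOrder 𝕜]

theorem wallFree_of_card_filter_le {F : Finset J} {a : J → 𝕜}
    (h : ∀ (l : J → 𝕜) (t : 𝕜), (∀ j ∈ F, 0 ≤ l j) → 0 ≤ t → l ᵥ* U + t • a = b →
      (F.filter (l · = 0)).card + (if t = 0 then 1 else 0) ≤ 1) : WallFree F b U a := by
  intro l t hl ht heq
  have hcard := h l t hl ht heq
  refine ⟨fun i hi j hj hli hlj => ?_, fun ht0 i hi hli => ?_⟩
  · exact Finset.card_le_one.1 ((Nat.le_add_right _ _).trans hcard) i
      (Finset.mem_filter.2 ⟨hi, hli⟩) j (Finset.mem_filter.2 ⟨hj, hlj⟩)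
  · rw [if_pos ht0] at hcard
    have hempty := Finset.card_eq_zero.1 (Nat.le_zero.1 (Nat.le_of_add_le_add_right hcard))
    exact Finset.filter_eq_empty_iff.1 hempty hi hli

theorem wallFree_of_forall_notMem_span {ι : Type*} {g : ι → J → 𝕜}
    (hg : ∀ T : Finset ι, T.card < Fintype.card J → b ∉ Submodule.span 𝕜 (g '' T))
    (v : J → ι) (w : ι) : WallFree Finset.univ b (of fun j => g (v j)) (g w) := by
  refine wallFree_of_card_filter_le fun l t _ _ heq => ?_
  by_contra! hcard
  have hsupp := Finset.card_filter_add_card_filter_not (s := Finset.univ) (l · = 0)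
  rw [Finset.card_univ] at hsupp
  let T := (Finset.univ.filter (¬ l · = 0)).image v ∪ if t = 0 then ∅ else {w}
  refine hg T ?_ ?_
  · have hle := Finset.card_union_le ((Finset.univ.filter (¬ l · = 0)).image v)
      (if t = 0 then ∅ else {w})
    have hle' := Finset.card_image_le (s := Finset.univ.filter (¬ l · = 0)) (f := v)
    change T.card ≤ _ at hle
    split_ifs at hcard hle <;> simp only [Finset.card_empty, Finset.card_singleton] at hle <;> omega
  · rw [← heq, vecMul_eq_sum]
    refine Submodule.add_mem _ (Submodule.sum_mem _ fun j _ => ?_) ?_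
    · by_cases hj : l j = 0
      · simp [hj]
      · refine Submodule.smul_mem _ _ (Submodule.subset_span ⟨v j, ?_, rfl⟩)
        exact Finset.mem_union_left _ (Finset.mem_image_of_mem v (by simpa using hj))
    · by_cases ht : t = 0
      · simp [ht]
      · exact Submodule.smul_mem _ _ (Submodule.subset_span ⟨w, by simp [T, ht], rfl⟩)

/-- The point `b` lies in the closed cone over the rows of `U`. -/
def MemCone (U : Matrix J J 𝕜) (b : J → 𝕜) : Prop :=
  ∃ l : J → 𝕜, (∀ j, 0 ≤ l j) ∧ l ᵥ* U = b

variable [IsStrictOrderedRing 𝕜]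

theorem exists_pos_vecMul_pullToward_eq [Nonempty J] (hl : ∀ j, 0 ≤ l j) (hsum : ∑ j, l j = 1)
    (hlb : l ᵥ* U = b) {ε : 𝕜} (hε₀ : 0 < ε) (hε₁ : ε < 1) :
    ∃ l' : J → 𝕜, (∀ j, 0 < l' j) ∧ l' ᵥ* pullToward b U ε = b := by
  let w : J → 𝕜 := fun _ => (Fintype.card J : 𝕜)⁻¹
  have hw (j : J) : 0 < w j := inv_pos.2 (Nat.cast_pos.2 Fintype.card_pos)
  refine ⟨(1 - ε) • l + ε • w, fun j => ?_, ?_⟩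
  · exact add_pos_of_nonneg_of_pos (mul_nonneg (sub_nonneg.2 hε₁.le) (hl j)) (mul_pos hε₀ (hw j))
  · have hone : ((1 - ε) • l + ε • w) ⬝ᵥ 1 = 1 := by
      rw [add_dotProduct, smul_dotProduct, smul_dotProduct, barycenter_coeff_dotProduct_one,
        dotProduct_one, hsum]
      simp
    rw [pullToward, vecMul_add, vecMul_vecMulVec, hone, one_smul, add_vecMul, smul_vecMul,
      smul_vecMul, hlb]
    module

end OrderedField

variable {J I : Type*} [Fintype J]

theorem continuous_pullToward (b : J → ℝ) (U : Matrix J J ℝ) : Continuous (pullToward b U) := by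
  refine continuous_pi fun i => continuous_pi fun j => ?_
  simp only [pullToward, Matrix.add_apply, vecMulVec_apply, Pi.smul_apply, smul_eq_mul]
  fun_prop

theorem eventually_not_memCone {b φ : J → ℝ} {U : Matrix J J ℝ} (h : ¬ MemCone U b) :
    ∀ᶠ z : Matrix J J ℝ × (J → ℝ) in 𝓝 (U, b), z.1 *ᵥ φ = 1 → ¬ MemCone z.1 z.2 := by
  let K : Set (J → ℝ) := Set.Icc 0 fun _ => b ⬝ᵥ φ + 1
  have hclosed : IsClosed {z : Matrix J J ℝ × (J → ℝ) | ∃ l ∈ K, (z, l) ∈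
      {w : (Matrix J J ℝ × (J → ℝ)) × (J → ℝ) | w.2 ᵥ* w.1.1 = w.1.2}} :=
    isClosed_setOf_exists_mem isCompact_Icc (isClosed_eq
      (continuous_snd.matrix_vecMul (by fun_prop)) (by fun_prop))
  have hdot : Continuous fun z : Matrix J J ℝ × (J → ℝ) => z.2 ⬝ᵥ φ :=
    Continuous.dotProduct continuous_snd continuous_const
  filter_upwards [hclosed.isOpen_compl.mem_nhds fun ⟨l, hl, hlb⟩ => h ⟨l, hl.1, hlb⟩,
    hdot.continuousAt.eventually_lt_const (lt_add_one (b ⬝ᵥ φ))] with z hz hzφ hφ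
  rintro ⟨l, hl, hlz⟩
  refine hz ⟨l, ⟨hl, fun j => ?_⟩, hlz⟩
  calc l j ≤ ∑ i, l i := Finset.single_le_sum (fun i _ => hl i) (Finset.mem_univ j)
    _ = z.2 ⬝ᵥ φ := sum_coeff_eq_dotProduct hφ hlz
    _ ≤ b ⬝ᵥ φ + 1 := hzφ.le

/-- Each diagonal simplex, formed by the points `p j i` for a fixed `i`, is pulled toward `b`. -/
noncomputable def pullDiagonals (b : J → ℝ) (p : J → I → J → ℝ) (ε : ℝ) (j : J) (i : I) : J → ℝ :=
  pullToward b (rainbowMatrix p fun _ => i) ε j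

theorem pullDiagonals_zero (b : J → ℝ) (p : J → I → J → ℝ) : pullDiagonals b p 0 = p :=
  funext₂ fun j _ => congrFun (pullToward_zero b _) j

theorem continuous_rainbowMatrix_pullDiagonals (b : J → ℝ) (p : J → I → J → ℝ) (s : J → I) :
    Continuous fun ε => rainbowMatrix (pullDiagonals b p ε) s :=
  continuous_pi fun j => show Continuous fun ε => pullToward b (rainbowMatrix p fun _ => s j) ε j
    from (continuous_apply j).comp (continuous_pullToward b _)

section

variable [Nonempty J] {b φ : J → ℝ} {p : J → I → J → ℝ}

theorem pullDiagonals_dotProduct (hp : ∀ j i, p j i ⬝ᵥ φ = 1) (hb : b ⬝ᵥ φ = 1) (ε : ℝ) (j : J)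
    (i : I) : pullDiagonals b p ε j i ⬝ᵥ φ = 1 :=
  congrFun (pullToward_mulVec hb (U := rainbowMatrix p fun _ => i) (funext fun j => hp j i) ε) j

theorem eventually_memCone_of_memCone_pullDiagonals (hp : ∀ j i, p j i ⬝ᵥ φ = 1)
    (hb : b ⬝ᵥ φ = 1) (s : J → I) : ∀ᶠ ε in 𝓝 (0 : ℝ), ∀ᶠ c in 𝓝 b,
      MemCone (rainbowMatrix (pullDiagonals b p ε) s) c → MemCone (rainbowMatrix p s) b := by
  by_cases hs : MemCone (rainbowMatrix p s) b
  · simp [hs]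
  have htendsto : Tendsto (fun ε => (rainbowMatrix (pullDiagonals b p ε) s, b)) (𝓝 0)
      (𝓝 (rainbowMatrix p s, b)) :=
    ((continuous_rainbowMatrix_pullDiagonals b p s).prodMk continuous_const).tendsto' 0 _
      (by rw [pullDiagonals_zero])
  have hnear := eventually_eventually_nhds.2 (eventually_not_memCone (φ := φ) hs)
  filter_upwards [htendsto.eventually hnear] with ε hε
  filter_upwards [(Continuous.prodMk_right _).continuousAt.eventually hε] with c hc h
  exact absurd h (hc (funext fun j => pullDiagonals_dotProduct hp hb ε j (s j)))

end

variable [DecidableEq J]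

theorem eventually_coneSign_ne_zero {b l : J → ℝ} {U : Matrix J J ℝ} (hU : U.det ≠ 0)
    (hl : ∀ j, 0 < l j) (hlb : l ᵥ* U = b) : ∀ᶠ c in 𝓝 b, coneSign Finset.univ c U ≠ 0 := by
  have hcont : Continuous fun c : J → ℝ => c ᵥ* U⁻¹ :=
    Continuous.matrix_vecMul continuous_id continuous_const
  have hinv : b ᵥ* U⁻¹ = l := by
    rw [← hlb, vecMul_vecMul, mul_nonsing_inv _ hU.isUnit, vecMul_one]
  have hpos : ∀ᶠ c in 𝓝 b, ∀ j, 0 < (c ᵥ* U⁻¹) j := eventually_all.2 fun j =>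
    ((continuous_apply j).comp hcont).continuousAt.eventually_const_lt (by simp [hinv, hl])
  filter_upwards [hpos] with c hc
  have hcU : c ᵥ* U⁻¹ ᵥ* U = c := by
    rw [vecMul_vecMul, nonsing_inv_mul _ hU.isUnit, vecMul_one]
  rw [coneSign, if_pos ⟨_, hcU, fun j _ => hc j⟩]
  obtain h | h := hU.lt_or_gt <;> simp [h]

variable [Nontrivial J] {b φ : J → ℝ} {p : J → I → J → ℝ}

/- First pull every diagonal simplex so that `b` becomes interior to it, then move `b` to a generic
point nearby; being outside a cone is an open condition, so no new simplices are hit. -/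
theorem exists_generic_perturbation [Finite I] (hp : ∀ j i, p j i ⬝ᵥ φ = 1) (hb : b ⬝ᵥ φ = 1)
    (hdet : ∀ i, (rainbowMatrix p fun _ => i).det ≠ 0)
    (hmem : ∀ i, MemCone (rainbowMatrix p fun _ => i) b) :
    ∃ (q : J → I → J → ℝ) (c : J → ℝ), (∀ j i, q j i ⬝ᵥ φ = 1) ∧
      (∀ s, MemCone (rainbowMatrix q s) c → MemCone (rainbowMatrix p s) b) ∧
      (∀ i, coneSign Finset.univ c (rainbowMatrix q fun _ => i) ≠ 0) ∧
      ∀ s j i, WallFree Finset.univ c (rainbowMatrix q s) (q j i) := by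
  have hmiss := eventually_all.2 (eventually_memCone_of_memCone_pullDiagonals hp hb)
  have hdet' : ∀ᶠ ε in 𝓝 (0 : ℝ), ∀ i,
      (rainbowMatrix (pullDiagonals b p ε) fun _ => i).det ≠ 0 := eventually_all.2 fun i =>
    (continuous_rainbowMatrix_pullDiagonals b p _).matrix_det.continuousAt.eventually_ne
      (by rw [pullDiagonals_zero]; exact hdet i)
  obtain ⟨ε, ⟨hεmiss, hεdet⟩, hε₀, hε₁⟩ :=
    (((hmiss.and hdet').filter_mono nhdsWithin_le_nhds).and
      (Ioo_mem_nhdsGT (zero_lt_one' ℝ))).exists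
  let q := pullDiagonals b p ε
  have hhit : ∀ᶠ c in 𝓝 b, ∀ i, coneSign Finset.univ c (rainbowMatrix q fun _ => i) ≠ 0 :=
    eventually_all.2 fun i => by
      obtain ⟨l, hl, hlb⟩ := hmem i
      obtain ⟨l', hl', hlb'⟩ := exists_pos_vecMul_pullToward_eq hl
        ((sum_coeff_eq_dotProduct (funext fun j => hp j i) hlb).trans hb) hlb hε₀ hε₁
      exact eventually_coneSign_ne_zero (hεdet i) hl' hlb'
  obtain ⟨c, ⟨hcmiss, hchit⟩, hc⟩ := mem_closure_iff_nhds.1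
    (dense_setOf_forall_notMem_submodule
      (fun T : {T : Finset (J × I) // T.card < Fintype.card J} =>
        span_image_ne_top_of_card_lt (𝕜 := ℝ) (fun v : J × I => q v.1 v.2)
          (by simpa using T.2)) b) _ ((eventually_all.2 hεmiss).and hhit)
  exact ⟨q, c, pullDiagonals_dotProduct hp hb ε, hcmiss, hchit, fun s j i =>
    wallFree_of_forall_notMem_span (g := fun v : J × I => q v.1 v.2) (fun T hT => hc ⟨T, hT⟩)
      (fun j => (j, s j)) (j, i)⟩

/- The diagonal simplices form one matching that is hit, so the bound for generic points applies. -/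
theorem two_pow_le_card_closedHitMatchings [Fintype I] (hp : ∀ j i, p j i ⬝ᵥ φ = 1)
    (hb : b ⬝ᵥ φ = 1) (hdet : ∀ i, (rainbowMatrix p fun _ => i).det ≠ 0)
    (hmem : ∀ i, MemCone (rainbowMatrix p fun _ => i) b) :
    2 ^ (Fintype.card I - Fintype.card J) ≤
      (hitMatchings (fun s => MemCone (rainbowMatrix p s) b) fun _ => Set.univ).card := by
  obtain ⟨q, c, hqφ, hmiss, hhit, hfree⟩ := exists_generic_perturbation hp hb hdet hmem
  have hne : (hitMatchings (fun s => coneSign Finset.univ c (rainbowMatrix q s) ≠ 0)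
      fun _ : J => (Set.univ : Set I)).Nonempty := by
    refine ⟨Finset.univ.image fun i _ => i, mem_hitMatchings.2
      ⟨fun j => ?_, by simpa using hhit⟩⟩
    simp [Set.BijOn, Set.MapsTo, Set.InjOn, Set.SurjOn, Set.subset_def]
  refine (two_pow_le_card_openHitMatchings (fun j i => (hqφ j i).symm ▸ one_pos) hfree
    (fun _ => by rw [Set.ncard_univ, Nat.card_eq_fintype_card]) hne).trans
    (Finset.card_le_card fun S hS => ?_)
  obtain ⟨hS, hSc⟩ := mem_hitMatchings.1 hS
  refine mem_hitMatchings.2 ⟨hS, fun s hs => hmiss s ?_⟩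
  by_contra hnot
  exact hSc s hs (if_neg fun ⟨l, hl, hlpos⟩ =>
    hnot ⟨l, fun j => (hlpos j (Finset.mem_univ j)).le, hl⟩)

end Perturbation

section SignedCount

open Matrix

variable {K R 𝕜 : Type*} [AddCommGroup R]

/-- Translation of the second component of the colored indices. The coordinates of `𝕜^(K × R)`
form one copy of `𝕜^K` for each block `t : R`, so this moves a vector from block `0` to block
`i`. -/
def blockShift (K : Type*) (i : R) : Equiv.Perm (Option (K × R)) :=
  (Equiv.prodCongrRight fun _ : K => Equiv.subRight i).optionCongr

@[simp] theorem blockShift_none (i : R) : blockShift K i none = none := rfl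

@[simp] theorem blockShift_some (i : R) (k : K) (t : R) :
    blockShift K i (some (k, t)) = some (k, t - i) := rfl

theorem blockShift_add (i j : R) : blockShift K (i + j) = blockShift K i * blockShift K j := by
  ext1 v
  obtain _ | ⟨k, t⟩ := v
  · rfl
  · simp [sub_sub, add_comm]

/-- The block to which each vertex is assigned: the vertex `none`, which is alone in its color
class, goes to block `0`, and the vertex `a` of color `k` goes to block `π k a`. -/
def blockAssignment (π : K → Equiv.Perm R) : Option (K × R) → R
  | none => 0
  | some (k, a) => π k a

@[simp] theorem blockAssignment_none (π : K → Equiv.Perm R) : blockAssignment π none = 0 := rfl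

@[simp] theorem blockAssignment_some (π : K → Equiv.Perm R) (k : K) (a : R) :
    blockAssignment π (some (k, a)) = π k a := rfl

/-- The matrix whose row `v` is the vector `u v` moved to the block of `v`. -/
def tverbergMatrix (u : Option (K × R) → Option (K × R) → 𝕜) (π : K → Equiv.Perm R) :
    Matrix (Option (K × R)) (Option (K × R)) 𝕜 :=
  of fun v => u v ∘ blockShift K (blockAssignment π v)

theorem tverbergMatrix_row (u : Option (K × R) → Option (K × R) → 𝕜) (π : K → Equiv.Perm R)
    (v : Option (K × R)) :
    tverbergMatrix u π v = u v ∘ blockShift K (blockAssignment π v) := rfl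

theorem tverbergMatrix_apply (u : Option (K × R) → Option (K × R) → 𝕜) (π : K → Equiv.Perm R)
    (v w : Option (K × R)) :
    tverbergMatrix u π v w = u v (blockShift K (blockAssignment π v) w) := rfl

theorem tverbergMatrix_update [DecidableEq K] [DecidableEq R]
    (u : Option (K × R) → Option (K × R) → 𝕜) (π : K → Equiv.Perm R) (v : Option (K × R))
    (q : Option (K × R) → 𝕜) :
    tverbergMatrix (Function.update u v q) π =
      (tverbergMatrix u π).updateRow v (q ∘ blockShift K (blockAssignment π v)) := by
  ext w x
  obtain rfl | hw := eq_or_ne w v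
  · simp [tverbergMatrix_apply]
  · simp [tverbergMatrix_apply, hw]

/-- The indicator of the coordinates of color `k`. -/
def colorIndicator [DecidableEq K] [Zero 𝕜] [One 𝕜] (k : K) : Option (K × R) → 𝕜
  | none => 0
  | some (k', _) => if k' = k then 1 else 0

theorem colorIndicator_comp_blockShift [DecidableEq K] [Zero 𝕜] [One 𝕜] (k : K) (i : R) :
    (colorIndicator k : Option (K × R) → 𝕜) ∘ blockShift K i = colorIndicator k := by
  funext v
  obtain _ | ⟨k, t⟩ := v <;> rfl

variable [Fintype R]

theorem exists_add_self_eq (hR : Odd (Fintype.card R)) (c : R) : ∃ c', c' + c' = c := by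
  obtain ⟨c', hc'⟩ := (Nat.Coprime.nsmul_right_bijective (G := R) (n := 2)
    (by rwa [Nat.card_eq_fintype_card, Nat.coprime_two_right])).surjective c
  exact ⟨c', (two_nsmul c').symm.trans hc'⟩

theorem card_dvd_sum_of_equivariant {Ω A : Type*} [Fintype Ω] [CommRing A] {X : Ω → A}
    (f : Ω → R) (T : R → Equiv.Perm Ω) (hf : ∀ c ω, f (T c ω) = c + f ω)
    (hX : ∀ c ω, X (T c ω) = X ω) : (Fintype.card R : A) ∣ ∑ ω, X ω := by
  have hfiber (c : R) : ∑ ω with f ω = c, X ω = ∑ ω with f ω = 0, X ω :=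
    (Finset.sum_equiv (T c) (by simp [hf]) fun ω _ => (hX c ω).symm).symm
  rw [← Finset.sum_fiberwise Finset.univ f X]
  simp [hfiber]

variable [DecidableEq R]

theorem sign_addLeft_of_odd_card (hR : Odd (Fintype.card R)) (c : R) :
    Equiv.Perm.sign (Equiv.addLeft c) = 1 := by
  obtain ⟨c', rfl⟩ := exists_add_self_eq hR c
  have hsquare : Equiv.addLeft (c' + c') = Equiv.addLeft c' * Equiv.addLeft c' := by
    ext
    simp
  rw [hsquare, Equiv.Perm.sign_mul, Int.units_mul_self]

variable [Fintype K]

/-- The product of the signs of a family of permutations. -/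
def signProd {R : Type*} [Fintype R] [DecidableEq R] (π : K → Equiv.Perm R) : ℤ :=
  ∏ k, ((Equiv.Perm.sign (π k) : ℤˣ) : ℤ)

theorem signProd_mul {R : Type*} [Fintype R] [DecidableEq R] (π ρ : K → Equiv.Perm R) :
    signProd (π * ρ) = signProd π * signProd ρ := by
  simp [signProd, Finset.prod_mul_distrib]

theorem signProd_mul_self {R : Type*} [Fintype R] [DecidableEq R] (π : K → Equiv.Perm R) :
    signProd π * signProd π = 1 := by
  simp [signProd, ← Finset.prod_mul_distrib, ← Units.val_mul]

theorem signProd_const_addLeft (hR : Odd (Fintype.card R)) (c : R) :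
    signProd (fun _ : K => Equiv.addLeft c) = 1 := by
  simp [signProd, sign_addLeft_of_odd_card hR]

variable [DecidableEq K]

theorem signProd_mulSingle_swap {R : Type*} [Fintype R] [DecidableEq R] (k : K) {a b : R}
    (hab : a ≠ b) : signProd (Pi.mulSingle k (Equiv.swap a b)) = -1 := by
  rw [signProd, Finset.prod_eq_single_of_mem k (Finset.mem_univ k) fun j _ hj => by
    simp [Pi.mulSingle_eq_of_ne hj], Pi.mulSingle_eq_same, Equiv.Perm.sign_swap hab]
  simp

theorem sign_blockShift (hR : Odd (Fintype.card R)) (c : R) :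
    Equiv.Perm.sign (blockShift K c) = 1 := by
  obtain ⟨c', rfl⟩ := exists_add_self_eq hR c
  rw [blockShift_add, Equiv.Perm.sign_mul, Int.units_mul_self]

/-- The indices of actual vertices. The index `(k, 0)` instead belongs to the row
`colorIndicator k`, a free direction that accounts for the vectors which agree in all blocks. -/
def properVertices (K R : Type*) [AddCommGroup R] [DecidableEq K] [DecidableEq R] [Fintype K]
    [Fintype R] : Finset (Option (K × R)) :=
  Finset.univ.filter fun v => ∀ k, v ≠ some (k, 0)

@[simp] theorem none_mem_properVertices : none ∈ properVertices K R := by simp [properVertices]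

@[simp] theorem some_mem_properVertices {k : K} {a : R} :
    some (k, a) ∈ properVertices K R ↔ a ≠ 0 := by
  simp [properVertices]

theorem notMem_properVertices {v : Option (K × R)} :
    v ∉ properVertices K R ↔ ∃ k, v = some (k, 0) := by
  simp [properVertices]

section ConeSign

variable [Field 𝕜] [LinearOrder 𝕜]

/-- The apex coordinate vector, the combination of the rows of a `tverbergMatrix` that is sought:
if the coefficients at the actual vertices are nonnegative, they sum up to `1` when all these rows
have apex coordinate `1`, and the weighted block sums agree in every block. -/
def apexVector (K R 𝕜 : Type*) [DecidableEq K] [DecidableEq R] [Zero 𝕜] [One 𝕜] :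
    Option (K × R) → 𝕜 :=
  Pi.single none 1

/-- The number of block assignments for which the apex vector is a combination of the rows with
positive coefficients at the actual vertices, counted with signs. -/
noncomputable def signedCount (u : Option (K × R) → Option (K × R) → 𝕜) : ℤ :=
  ∑ π : K → Equiv.Perm R,
    signProd π * coneSign (properVertices K R) (apexVector K R 𝕜) (tverbergMatrix u π)

/-- The contribution to `signedCount u` after the row `s` has been replaced by the vector `q`,
placed in the block of the vertex `v`. -/
noncomputable def exchangeCount (u : Option (K × R) → Option (K × R) → 𝕜) (v : Option (K × R))
    (q : Option (K × R) → 𝕜) (s : Option (K × R)) : ℤ :=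
  ∑ π : K → Equiv.Perm R, signProd π * coneSign (properVertices K R) (apexVector K R 𝕜)
    ((tverbergMatrix u π).updateRow s (q ∘ blockShift K (blockAssignment π v)))

theorem exchangeCount_self (u : Option (K × R) → Option (K × R) → 𝕜) (v : Option (K × R))
    (q : Option (K × R) → 𝕜) : exchangeCount u v q v = signedCount (Function.update u v q) := by
  simp only [exchangeCount, signedCount, tverbergMatrix_update]

variable {u : Option (K × R) → Option (K × R) → 𝕜} {q : Option (K × R) → 𝕜} {v : Option (K × R)}

/- Swapping the images of `a` and `0` under `π l` is a sign-reversing involution: it only affects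
the rows `(l, a)`, which is replaced, and `(l, 0)`, which is invariant under shifts. -/
theorem exchangeCount_some_eq_zero {l : K} {a : R} (hu : u (some (l, 0)) = colorIndicator l)
    (ha : a ≠ 0) (hv : v ∈ properVertices K R) (hva : v ≠ some (l, a)) :
    exchangeCount u v q (some (l, a)) = 0 := by
  let τ : K → Equiv.Perm R := Pi.mulSingle l (Equiv.swap a 0)
  have hassign (π : K → Equiv.Perm R) {w : Option (K × R)} (hwa : w ≠ some (l, a))
      (hw0 : w ≠ some (l, 0)) : blockAssignment (π * τ) w = blockAssignment π w := by
    obtain _ | ⟨k, x⟩ := w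
    · rfl
    obtain rfl | hk := eq_or_ne k l
    · simp only [ne_eq, Option.some.injEq, Prod.mk.injEq, true_and] at hwa hw0
      simp [τ, Equiv.swap_apply_of_ne_of_ne hwa hw0]
    · simp [τ, Pi.mulSingle_eq_of_ne hk]
  have hv0 : v ≠ some (l, 0) := fun h => some_mem_properVertices.1 (h ▸ hv) rfl
  have hmatrix (π : K → Equiv.Perm R) :
      (tverbergMatrix u (π * τ)).updateRow (some (l, a))
          (q ∘ blockShift K (blockAssignment (π * τ) v)) =
        (tverbergMatrix u π).updateRow (some (l, a)) (q ∘ blockShift K (blockAssignment π v)) := by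
    refine funext fun w => ?_
    obtain rfl | hwa := eq_or_ne w (some (l, a))
    · rw [updateRow_self, updateRow_self, hassign π hva hv0]
    rw [updateRow_ne hwa, updateRow_ne hwa]
    obtain rfl | hw0 := eq_or_ne w (some (l, 0))
    · simp only [tverbergMatrix_row, hu, colorIndicator_comp_blockShift]
    · rw [tverbergMatrix_row, tverbergMatrix_row, hassign π hwa hw0]
  refine self_eq_neg.1 ?_
  conv_lhs => rw [exchangeCount, ← Equiv.sum_comp (Equiv.mulRight τ)]
  simp only [Equiv.coe_mulRight, hmatrix, signProd_mul, τ, signProd_mulSingle_swap l ha]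
  simp [exchangeCount]

theorem coneSign_submatrix_blockShift (hR : Odd (Fintype.card R)) (c : R)
    (U : Matrix (Option (K × R)) (Option (K × R)) 𝕜) :
    coneSign (properVertices K R) (apexVector K R 𝕜) (U.submatrix id (blockShift K c)) =
      coneSign (properVertices K R) (apexVector K R 𝕜) U := by
  have hapex : apexVector K R 𝕜 ∘ blockShift K c = apexVector K R 𝕜 := by
    funext v
    obtain _ | ⟨k, t⟩ := v <;> simp [apexVector]
  have hvecMul (l : Option (K × R) → 𝕜) :
      l ᵥ* U.submatrix id (blockShift K c) = (l ᵥ* U) ∘ blockShift K c := rfl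
  have hiff (l : Option (K × R) → 𝕜) :
      l ᵥ* U.submatrix id (blockShift K c) = apexVector K R 𝕜 ↔ l ᵥ* U = apexVector K R 𝕜 := by
    conv_lhs => rw [hvecMul, ← hapex]
    exact (blockShift K c).surjective.injective_comp_right.eq_iff
  simp [coneSign, hiff, det_permute', sign_blockShift hR]

/- Once the row `none` is placed in the block of `(k, a)`, translating all blocks is a symmetry. -/
theorem card_dvd_exchangeCount_none (hR : Odd (Fintype.card R)) (k : K) (a : R) :
    (Fintype.card R : ℤ) ∣ exchangeCount u (some (k, a)) q none := by
  refine card_dvd_sum_of_equivariant (fun π => π k a)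
    (fun c => Equiv.mulLeft fun _ : K => Equiv.addLeft c) (fun c π => rfl) fun c π => ?_
  rw [Equiv.coe_mulLeft, signProd_mul, signProd_const_addLeft hR, one_mul,
    ← coneSign_submatrix_blockShift hR c ((tverbergMatrix u π).updateRow none _)]
  congr 2
  ext v w
  obtain _ | ⟨k', x⟩ := v <;>
    simp [tverbergMatrix_apply, blockShift_add, add_comm c]

theorem card_dvd_signedCount_sub_update [IsStrictOrderedRing 𝕜] (hR : Odd (Fintype.card R))
    (hfree : ∀ k, u (some (k, 0)) = colorIndicator k)
    (hu : ∀ v ∈ properVertices K R, 0 < u v none) (hv : v ∈ properVertices K R) (hq : 0 < q none)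
    (H : ∀ π, WallFree (properVertices K R) (apexVector K R 𝕜) (tverbergMatrix u π)
      (q ∘ blockShift K (blockAssignment π v))) :
    (Fintype.card R : ℤ) ∣ signedCount u - signedCount (Function.update u v q) := by
  have hcocycle : signedCount u = ∑ s ∈ properVertices K R, exchangeCount u v q s := by
    simp only [exchangeCount]
    rw [Finset.sum_comm, signedCount]
    refine Finset.sum_congr rfl fun π _ => ?_
    rw [← Finset.mul_sum, coneSign_eq_sum_updateRow (φ := Pi.single none 1)
      (U := tverbergMatrix u π) ?_ ?_ ?_ (H π)]
    · simpa [tverbergMatrix_apply] using hu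
    · intro w hw
      obtain ⟨k, rfl⟩ := notMem_properVertices.1 hw
      simp [tverbergMatrix_apply, hfree, colorIndicator]
    · simpa using hq
  rw [hcocycle, ← exchangeCount_self, ← Finset.sum_erase_eq_sub hv]
  refine Finset.dvd_sum fun s hs => ?_
  obtain ⟨hsv, hs⟩ := Finset.mem_erase.1 hs
  obtain _ | ⟨l, a⟩ := s
  · obtain ⟨⟨k, a⟩, rfl⟩ := Option.ne_none_iff_exists'.1 hsv.symm
    exact card_dvd_exchangeCount_none hR k a
  · exact exchangeCount_some_eq_zero (hfree l) (some_mem_properVertices.1 hs) hv hsv.symm ▸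
      dvd_zero _

end ConeSign

end SignedCount

section StandardConfig

open Matrix

variable {K R 𝕜 : Type*}

theorem card_filter_perm_apply_eq_self [Fintype R] [DecidableEq R] (a : R) :
    (Finset.univ.filter fun p : Equiv.Perm R => p a = a).card = (Fintype.card R - 1).factorial := by
  have horbit := MulAction.card_orbit_mul_card_stabilizer_eq_card_group (Equiv.Perm R) a
  have hstab : Fintype.card (MulAction.stabilizer (Equiv.Perm R) a) =
      (Finset.univ.filter fun p : Equiv.Perm R => p a = a).card := by
    simp [Fintype.card_subtype]
  have hcard : 0 < Fintype.card R := Fintype.card_pos_iff.2 ⟨a⟩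
  rw [hstab, Fintype.card_congr (Equiv.setCongr (MulAction.orbit_eq_univ (Equiv.Perm R) a)),
    Fintype.card_setUniv, Fintype.card_perm, ← Nat.mul_factorial_pred hcard.ne'] at horbit
  exact Nat.eq_of_mul_eq_mul_left hcard horbit

variable [DecidableEq K] [DecidableEq R] [AddCommGroup R]

/-- The configuration in which, in affine coordinates, all vertices of color `k` lie at the basis
vector `e_k` of `𝕜^K` and the vertex `none` at the sum of the basis vectors. Its signed count is
computed directly. -/
def standardConfig (K R 𝕜 : Type*) [DecidableEq K] [DecidableEq R] [Zero R] [Zero 𝕜] [One 𝕜] :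
    Option (K × R) → Option (K × R) → 𝕜
  | none, none => 1
  | none, some (_, t) => if t = 0 then 1 else 0
  | some (_, a), none => if a = 0 then 0 else 1
  | some (k, a), some (k', t) => if k' = k ∧ (a = 0 ∨ t = 0) then 1 else 0

theorem standardConfig_zero [Zero 𝕜] [One 𝕜] (k : K) :
    standardConfig K R 𝕜 (some (k, 0)) = colorIndicator k := by
  funext w
  obtain _ | ⟨k', t⟩ := w <;> simp [standardConfig, colorIndicator]

variable [Fintype K] [Fintype R]

theorem standardConfig_apply_none [Zero 𝕜] [One 𝕜] {v : Option (K × R)}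
    (hv : v ∈ properVertices K R) : standardConfig K R 𝕜 v none = 1 := by
  obtain _ | ⟨k, a⟩ := v
  · rfl
  · simp [standardConfig, some_mem_properVertices.1 hv]

variable [Field 𝕜]

theorem vecMul_tverbergMatrix_standardConfig_none (l : Option (K × R) → 𝕜)
    (π : K → Equiv.Perm R) : (l ᵥ* tverbergMatrix (standardConfig K R 𝕜) π) none =
      ∑ v ∈ properVertices K R, l v := by
  rw [properVertices, Finset.sum_filter]
  refine Finset.sum_congr rfl fun v _ => ?_
  obtain _ | ⟨k, a⟩ := v <;> simp [tverbergMatrix_apply, standardConfig]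

theorem vecMul_tverbergMatrix_standardConfig_some (l : Option (K × R) → 𝕜)
    (π : K → Equiv.Perm R) (k : K) (a : R) :
    (l ᵥ* tverbergMatrix (standardConfig K R 𝕜) π) (some (k, π k a)) =
      (if π k a = 0 then l none else 0) + (l (some (k, 0)) +
        if a = 0 then 0 else l (some (k, a))) := by
  have hentry (k' : K) (a' : R) :
      l (some (k', a')) * tverbergMatrix (standardConfig K R 𝕜) π (some (k', a'))
          (some (k, π k a)) =
        if k = k' then (if a' = 0 then l (some (k, 0)) else 0) +
          (if a' = a then if a = 0 then 0 else l (some (k, a)) else 0) else 0 := by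
    obtain rfl | hk := eq_or_ne k k'
    · simp only [tverbergMatrix_apply, blockAssignment_some, blockShift_some, standardConfig,
        sub_eq_zero, (π k).injective.eq_iff, eq_comm (a := a)]
      grind
    · simp [tverbergMatrix_apply, standardConfig, hk]
  simp only [vecMul, dotProduct, Fintype.sum_option, Fintype.sum_prod_type, hentry]
  simp [tverbergMatrix_apply, standardConfig, Finset.sum_add_distrib]

theorem apply_eq_apply_none_of_vecMul_standardConfig_one {l : Option (K × R) → 𝕜} {c : 𝕜}
    (hl : l ᵥ* tverbergMatrix (standardConfig K R 𝕜) 1 = c • apexVector K R 𝕜)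
    (v : Option (K × R)) : l v = if v ∈ properVertices K R then l none else -l none := by
  have hcoord (k : K) (a : R) := (vecMul_tverbergMatrix_standardConfig_some l 1 k a).symm.trans
    (congrFun hl _)
  have hzero (k : K) : l none + l (some (k, 0)) = 0 := by simpa [apexVector] using hcoord k 0
  obtain _ | ⟨k, a⟩ := v
  · simp
  obtain rfl | ha := eq_or_ne a 0
  · simpa using eq_neg_of_add_eq_zero_right (hzero k)
  · have := hcoord k a
    simp only [Pi.one_apply, Equiv.Perm.one_apply, ha, if_false, zero_add, apexVector,
      Pi.smul_apply, Pi.single_apply, reduceCtorEq, smul_zero] at this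
    simp only [some_mem_properVertices, ne_eq, ha, not_false_eq_true, if_true]
    linear_combination this - hzero k

variable [LinearOrder 𝕜]

theorem coneSign_standardConfig_eq_zero [IsStrictOrderedRing 𝕜] {π : K → Equiv.Perm R}
    (hπ : ∃ k, π k 0 ≠ 0) :
    coneSign (properVertices K R) (apexVector K R 𝕜) (tverbergMatrix (standardConfig K R 𝕜) π) =
      0 := by
  refine if_neg ?_
  rintro ⟨l, hl, hpos⟩
  obtain ⟨k, hk⟩ := hπ
  obtain ⟨a, ha⟩ := (π k).surjective 0
  have ha0 : a ≠ 0 := fun h => hk (h ▸ ha)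
  have hcoord (x : R) := (vecMul_tverbergMatrix_standardConfig_some l π k x).symm.trans
    (congrFun hl _)
  have hfree : l (some (k, 0)) = 0 := by simpa [hk, apexVector] using hcoord 0
  have hsum : l none + l (some (k, a)) = 0 := by
    simpa [ha, ha0, hfree, apexVector] using hcoord a
  exact (add_pos (hpos _ none_mem_properVertices) (hpos _ (some_mem_properVertices.2 ha0))).ne'
    hsum

theorem isUnit_coneSign_standardConfig_one [IsStrictOrderedRing 𝕜] :
    IsUnit (coneSign (properVertices K R) (apexVector K R 𝕜)
      (tverbergMatrix (standardConfig K R 𝕜) 1)) := by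
  set F := properVertices K R
  have hcard : 0 < (F.card : 𝕜) :=
    Nat.cast_pos.2 (Finset.card_pos.2 ⟨none, none_mem_properVertices⟩)
  have hdet : (tverbergMatrix (standardConfig K R 𝕜) 1).det ≠ 0 := by
    rw [Ne, ← exists_vecMul_eq_zero_iff]
    rintro ⟨l, hl0, hl⟩
    have hform := apply_eq_apply_none_of_vecMul_standardConfig_one (l := l) (c := 0)
      (by rw [hl, zero_smul])
    have hsum := (vecMul_tverbergMatrix_standardConfig_none l 1).symm.trans (congrFun hl none)
    rw [Finset.sum_congr rfl fun v hv => (hform v).trans (if_pos hv), Finset.sum_const,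
      nsmul_eq_mul, Pi.zero_apply, mul_eq_zero, or_iff_right hcard.ne'] at hsum
    exact hl0 (funext fun v => by simp [hform v, hsum])
  have hsol : ∃ l, l ᵥ* tverbergMatrix (standardConfig K R 𝕜) 1 = apexVector K R 𝕜 ∧
      ∀ v ∈ F, 0 < l v := by
    refine ⟨fun v => if v ∈ F then (F.card : 𝕜)⁻¹ else -(F.card : 𝕜)⁻¹, ?_, fun v hv => ?_⟩
    · funext w
      obtain _ | ⟨k, t⟩ := w
      · rw [vecMul_tverbergMatrix_standardConfig_none,
          Finset.sum_congr rfl fun v hv => if_pos hv]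
        simp [F, apexVector, hcard.ne']
      · refine (vecMul_tverbergMatrix_standardConfig_some _ 1 k t).trans ?_
        obtain rfl | ht := eq_or_ne t 0 <;> simp [F, apexVector, *]
    · simpa [hv] using hcard
  rw [coneSign, if_pos hsol]
  obtain h | h := hdet.lt_or_gt <;> simp [h]

theorem signProd_mul_coneSign_standardConfig [IsStrictOrderedRing 𝕜] {π : K → Equiv.Perm R}
    (hπ : ∀ k, π k 0 = 0) :
    signProd π * coneSign (properVertices K R) (apexVector K R 𝕜)
        (tverbergMatrix (standardConfig K R 𝕜) π) =
      coneSign (properVertices K R) (apexVector K R 𝕜)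
        (tverbergMatrix (standardConfig K R 𝕜) 1) := by
  let σ : Equiv.Perm (Option (K × R)) := (Equiv.prodCongrRight π).optionCongr
  have hzero (k : K) (a : R) : π k a = 0 ↔ a = 0 :=
    (π k).injective.eq_iff' (hπ k)
  have hσ (v : Option (K × R)) : σ v ∈ properVertices K R ↔ v ∈ properVertices K R := by
    obtain _ | ⟨k, a⟩ := v <;> simp [σ, hzero]
  have hsign : (Equiv.Perm.sign σ : ℤ) = signProd π := by
    simp [σ, signProd, Equiv.optionCongr_sign, Equiv.Perm.sign_prodCongrRight]
  have hmatrix : tverbergMatrix (standardConfig K R 𝕜) π =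
      (tverbergMatrix (standardConfig K R 𝕜) 1).submatrix σ id := by
    ext v w
    obtain _ | ⟨k, a⟩ := v <;> obtain _ | ⟨k', t⟩ := w <;>
      simp [σ, tverbergMatrix_apply, standardConfig, hzero]
  rw [hmatrix, coneSign_submatrix_perm hσ, ← mul_assoc, hsign, signProd_mul_self, one_mul]

theorem not_card_dvd_signedCount_standardConfig [IsStrictOrderedRing 𝕜]
    (hR : (Fintype.card R).Prime) :
    ¬ (Fintype.card R : ℤ) ∣ signedCount (standardConfig K R 𝕜) := by
  set ε := coneSign (properVertices K R) (apexVector K R 𝕜)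
    (tverbergMatrix (standardConfig K R 𝕜) 1)
  have hterm (π : K → Equiv.Perm R) : signProd π * coneSign (properVertices K R)
      (apexVector K R 𝕜) (tverbergMatrix (standardConfig K R 𝕜) π) =
        if ∀ k, π k 0 = 0 then ε else 0 := by
    split_ifs with hπ
    · exact signProd_mul_coneSign_standardConfig hπ
    · rw [coneSign_standardConfig_eq_zero (not_forall.1 hπ), mul_zero]
  have hcount : (Finset.univ.filter fun π : K → Equiv.Perm R => ∀ k, π k 0 = 0).card =
      (Fintype.card R - 1).factorial ^ Fintype.card K := by
    have hpi : (Finset.univ.filter fun π : K → Equiv.Perm R => ∀ k, π k 0 = 0) =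
        Fintype.piFinset fun _ => Finset.univ.filter fun p => p 0 = 0 := by
      ext
      simp
    simp [hpi, Fintype.card_piFinset, card_filter_perm_apply_eq_self]
  rw [signedCount, Finset.sum_congr rfl fun π _ => hterm π, ← Finset.sum_filter,
    Finset.sum_const, hcount, nsmul_eq_mul, isUnit_coneSign_standardConfig_one.dvd_mul_right,
    Int.natCast_dvd_natCast]
  intro hdvd
  have := hR.dvd_factorial.1 (hR.dvd_of_dvd_pow hdvd)
  have := hR.pos
  lia

end StandardConfig

section AvoidsWalls

open Matrix

variable {𝕜 J : Type*} [Field 𝕜]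

theorem span_insert_image_compl_pair_ne_top [Finite J] (b : J → 𝕜) (U : J → J → 𝕜)
    {i j : J} (hij : i ≠ j) : Submodule.span 𝕜 (insert b (U '' {i, j}ᶜ)) ≠ ⊤ := by
  cases nonempty_fintype J
  have hcard : (insert b (({i, j}ᶜ : Finset J).image U)).card < Module.finrank 𝕜 (J → 𝕜) := by
    have hpair := Finset.card_le_univ ({i, j} : Finset J)
    have hinsert := Finset.card_insert_le b (({i, j}ᶜ : Finset J).image U)
    have himage := Finset.card_image_le (s := ({i, j}ᶜ : Finset J)) (f := U)
    rw [Finset.card_compl] at himage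
    rw [Finset.card_pair hij] at hpair himage
    rw [Module.finrank_pi]
    lia
  simpa only [Finset.coe_insert, Finset.coe_image, Finset.coe_compl, Finset.coe_singleton,
    Set.image_id] using span_image_ne_top_of_card_lt id hcard

variable [Fintype J] {F : Finset J} {a b : J → 𝕜} {U : Matrix J J 𝕜}

theorem mem_span_of_vecMul_add_smul_eq {l : J → 𝕜} {t : 𝕜} {i j : J} (hi : l i = 0) (hj : l j = 0)
    (ht : t ≠ 0) (h : l ᵥ* U + t • a = b) :
    a ∈ Submodule.span 𝕜 (insert b (U '' {i, j}ᶜ)) := by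
  have ha : a = t⁻¹ • (b - l ᵥ* U) := by rw [← h, add_sub_cancel_left, inv_smul_smul₀ ht]
  rw [ha, vecMul_eq_sum]
  refine Submodule.smul_mem _ _ (Submodule.sub_mem _ (Submodule.subset_span (Set.mem_insert _ _))
    (Submodule.sum_mem _ fun k _ => ?_))
  by_cases hk : l k = 0
  · simp [hk]
  · refine Submodule.smul_mem _ _ (Submodule.subset_span (Set.mem_insert_of_mem _
      (Set.mem_image_of_mem U ?_)))
    rintro (rfl | rfl)
    exacts [hk hi, hk hj]

variable [LinearOrder 𝕜]

/-- The point `b` lies on no wall of the cone over the rows of `U` in `F`, the other rows being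
free directions. -/
def AvoidsWalls (F : Finset J) (b : J → 𝕜) (U : Matrix J J 𝕜) : Prop :=
  ∀ l : J → 𝕜, (∀ j ∈ F, 0 ≤ l j) → l ᵥ* U = b → ∀ i ∈ F, l i ≠ 0

theorem AvoidsWalls.wallFree (hU : AvoidsWalls F b U)
    (ha : ∀ i j, i ≠ j → a ∉ Submodule.span 𝕜 (insert b (U '' {i, j}ᶜ))) : WallFree F b U a := by
  intro l t hl _ h
  have hzero (ht : t = 0) : ∀ i ∈ F, l i ≠ 0 := hU l hl (by simpa [ht] using h)
  refine ⟨fun i hi j _ hli hlj => ?_, hzero⟩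
  by_contra hij
  exact ha i j hij (mem_span_of_vecMul_add_smul_eq hli hlj (fun ht => hzero ht i hi hli) h)

theorem WallFree.avoidsWalls_updateRow [DecidableEq J] (H : WallFree F b U a) {j : J}
    (hj : j ∈ F) : AvoidsWalls F b (U.updateRow j a) := by
  intro l hl h i hi hli
  rw [vecMul_updateRow] at h
  have hnonneg (k) (hk : k ∈ F) : 0 ≤ Function.update l j 0 k := by
    rw [Function.update_apply]
    split_ifs
    exacts [le_rfl, hl k hk]
  obtain ⟨honly, hnone⟩ := H _ _ hnonneg (hl j hj) h
  have hij : i = j := honly i hi j hj (by rw [Function.update_apply, hli, ite_self]) (by simp)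
  subst hij
  exact hnone hli i hi (by simp)

end AvoidsWalls

section ColoredTverberg

open Matrix Topology

variable {K R : Type*} [DecidableEq K] [DecidableEq R] [AddCommGroup R] [Fintype K] [Fintype R]

theorem avoidsWalls_standardConfig {𝕜 : Type*} [Field 𝕜] [LinearOrder 𝕜] [IsStrictOrderedRing 𝕜]
    (π : K → Equiv.Perm R) : AvoidsWalls (properVertices K R) (apexVector K R 𝕜)
      (tverbergMatrix (standardConfig K R 𝕜) π) := by
  intro l hl h
  have hsum := congrFun h none
  have hcoord (k : K) (a : R) := (vecMul_tverbergMatrix_standardConfig_some l π k a).symm.trans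
    (congrFun h (some (k, π k a)))
  simp only [vecMul_tverbergMatrix_standardConfig_none, apexVector, Pi.single_eq_same] at hsum
  simp only [apexVector, Pi.single_eq_of_ne, ne_eq, reduceCtorEq, not_false_eq_true] at hcoord
  have hfree (k : K) : l none + l (some (k, 0)) = 0 := by
    have hzero := hcoord k 0
    by_cases hk : π k 0 = 0
    · simpa [hk] using hzero
    · have ha : (π k).symm 0 ≠ 0 := fun ha => hk ((π k).symm_apply_eq.1 ha).symm
      have happ := hcoord k ((π k).symm 0)
      have hnone := hl none (by simp)
      have hsome := hl (some (k, (π k).symm 0)) (by simpa using ha)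
      simp only [hk, ha, Equiv.apply_symm_apply, if_true, if_false] at hzero happ
      linarith
  have hconst (v) (hv : v ∈ properVertices K R) : l v = l none := by
    obtain _ | ⟨k, a⟩ := v
    · rfl
    · have ha := some_mem_properVertices.1 hv
      have happ := hcoord k a
      have hzero := hcoord k 0
      have hk := hfree k
      have hne (h0 : π k 0 = 0) : π k a ≠ 0 := fun h => ha ((π k).injective (h.trans h0.symm))
      rw [if_neg ha] at happ
      split_ifs at happ hzero <;> grind
  intro v hv hlv
  rw [Finset.sum_eq_zero fun w hw => by rw [hconst w hw, ← hconst v hv, hlv]] at hsum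
  exact zero_ne_one hsum

theorem exists_wallFree_mem_nhds {u : Option (K × R) → Option (K × R) → ℝ}
    (hu : ∀ π, AvoidsWalls (properVertices K R) (apexVector K R ℝ) (tverbergMatrix u π))
    (v : Option (K × R)) {q₀ : Option (K × R) → ℝ} {s : Set (Option (K × R) → ℝ)}
    (hs : s ∈ 𝓝 q₀) : ∃ q ∈ s, ∀ π, WallFree (properVertices K R) (apexVector K R ℝ)
      (tverbergMatrix u π) (q ∘ blockShift K (blockAssignment π v)) := by
  let V (x : (K → Equiv.Perm R) × {p : Option (K × R) × Option (K × R) // p.1 ≠ p.2}) :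
      Submodule ℝ (Option (K × R) → ℝ) :=
    (Submodule.span ℝ (insert (apexVector K R ℝ)
      (tverbergMatrix u x.1 '' {x.2.1.1, x.2.1.2}ᶜ))).comap
        (LinearMap.funLeft ℝ ℝ (blockShift K (blockAssignment x.1 v)))
  have hV : ∀ x, V x ≠ ⊤ := fun x h => by
    refine span_insert_image_compl_pair_ne_top (apexVector K R ℝ) (tverbergMatrix u x.1) x.2.2
      (top_unique ?_)
    rw [← LinearMap.range_eq_top.2 (LinearMap.funLeft_surjective_of_injective ℝ ℝ _
      (blockShift K (blockAssignment x.1 v)).injective)]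
    exact LinearMap.range_le_iff_comap.2 h
  obtain ⟨q, hqs, hq⟩ := mem_closure_iff_nhds.1 (dense_setOf_forall_notMem_submodule hV q₀) s hs
  exact ⟨q, hqs, fun π => (hu π).wallFree fun i j hij => hq (π, ⟨(i, j), hij⟩)⟩

theorem exists_generic_config (hR : Odd (Fintype.card R)) {u₀ : Option (K × R) → Option (K × R) → ℝ}
    {s : Option (K × R) → Set (Option (K × R) → ℝ)} (hs : ∀ v, s v ∈ 𝓝 (u₀ v))
    (hpos : ∀ v ∈ properVertices K R, ∀ q ∈ s v, 0 < q none) (A : Finset (Option (K × R)))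
    (hA : A ⊆ properVertices K R) :
    ∃ u : Option (K × R) → Option (K × R) → ℝ, (∀ v ∈ A, u v ∈ s v) ∧
      (∀ v ∉ A, u v = standardConfig K R ℝ v) ∧
      (∀ π, AvoidsWalls (properVertices K R) (apexVector K R ℝ) (tverbergMatrix u π)) ∧
      (Fintype.card R : ℤ) ∣ signedCount (standardConfig K R ℝ) - signedCount u := by
  induction A using Finset.induction_on with
  | empty => exact ⟨standardConfig K R ℝ, by simp, fun _ _ => rfl, avoidsWalls_standardConfig,
      by simp⟩
  | insert v A hv ih =>
    obtain ⟨hvF, hAF⟩ := Finset.insert_subset_iff.1 hA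
    obtain ⟨u, hus, hustd, hwalls, hdvd⟩ := ih hAF
    obtain ⟨q, hqs, hq⟩ := exists_wallFree_mem_nhds hwalls v (hs v)
    have hstep := card_dvd_signedCount_sub_update hR (u := u) (fun k => ?_) (fun w hw => ?_) hvF
      (hpos v hvF q hqs) hq
    · refine ⟨Function.update u v q, fun w hw => ?_, fun w hw => ?_, fun π => ?_, ?_⟩
      · obtain rfl | hwv := eq_or_ne w v
        · simpa using hqs
        · simpa [hwv] using hus w (Finset.mem_of_mem_insert_of_ne hw hwv)
      · rw [Finset.mem_insert, not_or] at hw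
        rw [Function.update_of_ne hw.1, hustd w hw.2]
      · rw [tverbergMatrix_update]
        exact (hq π).avoidsWalls_updateRow hvF
      · simpa using dvd_add hdvd hstep
    · rw [hustd _ fun h => some_mem_properVertices.1 (hAF h) rfl, standardConfig_zero]
    · by_cases hwA : w ∈ A
      · exact hpos w hw _ (hus w hwA)
      · rw [hustd w hwA, standardConfig_apply_none hw]
        exact one_pos

theorem exists_pos_vecMul_tverbergMatrix_eq_mem_nhds (hR : (Fintype.card R).Prime)
    (hR2 : Fintype.card R ≠ 2) {u₀ : Option (K × R) → Option (K × R) → ℝ}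
    (hfree : ∀ k, u₀ (some (k, 0)) = colorIndicator k)
    (hpos : ∀ v ∈ properVertices K R, 0 < u₀ v none)
    {O : Set (Option (K × R) → Option (K × R) → ℝ)} (hO : O ∈ 𝓝 u₀) :
    ∃ u ∈ O, (∀ k, u (some (k, 0)) = colorIndicator k) ∧ ∃ (π : K → Equiv.Perm R) (l : _ → ℝ),
      l ᵥ* tverbergMatrix u π = apexVector K R ℝ ∧ ∀ v ∈ properVertices K R, 0 < l v := by
  rw [nhds_pi, Filter.mem_pi] at hO
  obtain ⟨I, -, s, hs, hsO⟩ := hO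
  let s' (v) := if v ∈ properVertices K R then s v ∩ {q | 0 < q none} else Set.univ
  have hs' (v) : s' v ∈ 𝓝 (u₀ v) := by
    by_cases hv : v ∈ properVertices K R
    · rw [show s' v = s v ∩ {q | 0 < q none} from if_pos hv]
      exact Filter.inter_mem (hs v) ((continuous_apply none).continuousAt.eventually_const_lt
        (hpos v hv))
    · rw [show s' v = Set.univ from if_neg hv]
      exact Filter.univ_mem
  have hpos' : ∀ v ∈ properVertices K R, s' v = s v ∩ {q | 0 < q none} := fun v hv => if_pos hv
  obtain ⟨u, hus, hustd, -, hdvd⟩ := exists_generic_config (hR.odd_of_ne_two hR2) hs'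
    (fun v hv q hq => (hpos' v hv ▸ hq).2) _ subset_rfl
  have hufree (k : K) : u (some (k, 0)) = colorIndicator k := by
    rw [hustd _ (by simp), standardConfig_zero]
  refine ⟨u, hsO fun v _ => ?_, hufree, ?_⟩
  · by_cases hv : v ∈ properVertices K R
    · exact (hpos' v hv ▸ hus v hv).1
    · obtain ⟨k, rfl⟩ := notMem_properVertices.1 hv
      rw [hufree, ← hfree]
      exact mem_of_mem_nhds (hs _)
  · by_contra! hnone
    refine not_card_dvd_signedCount_standardConfig (K := K) (𝕜 := ℝ) hR ?_
    have hzero : signedCount u = 0 := Finset.sum_eq_zero fun π _ => by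
      rw [coneSign, if_neg, mul_zero]
      rintro ⟨l, hl, hlpos⟩
      obtain ⟨v, hv, hlv⟩ := hnone π l hl
      exact hlv.not_gt (hlpos v hv)
    rwa [hzero, sub_zero] at hdvd

end ColoredTverberg

section Balanced

open Matrix Topology

variable {K R : Type*} [DecidableEq K] [DecidableEq R] [AddCommGroup R] [Fintype K] [Fintype R]

/-- The coefficients `l` at the actual vertices realize a common point of the blocks: the apex
coordinates of the weighted vectors add up to `1`, and the weighted block sums all agree. -/
def IsBalanced (u : Option (K × R) → Option (K × R) → ℝ) (π : K → Equiv.Perm R)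
    (l : Option (K × R) → ℝ) : Prop :=
  ∑ v ∈ properVertices K R, l v * tverbergMatrix u π v none = 1 ∧
    ∀ k t, ∑ v ∈ properVertices K R, l v * tverbergMatrix u π v (some (k, t)) =
      ∑ v ∈ properVertices K R, l v * tverbergMatrix u π v (some (k, 0))

theorem sum_eq_sum_properVertices_add {M : Type*} [AddCommMonoid M] (f : Option (K × R) → M) :
    ∑ v, f v = ∑ v ∈ properVertices K R, f v + ∑ k, f (some (k, 0)) := by
  have hcompl : (properVertices K R)ᶜ = Finset.univ.image fun k : K => some (k, (0 : R)) := by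
    ext v
    simp only [Finset.mem_compl, notMem_properVertices, Finset.mem_image, Finset.mem_univ,
      true_and, eq_comm]
  rw [← Finset.sum_add_sum_compl (properVertices K R) f, hcompl,
    Finset.sum_image fun k _ k' _ h => by simpa using h]

theorem isBalanced_of_vecMul_eq_apexVector {u : Option (K × R) → Option (K × R) → ℝ}
    {π : K → Equiv.Perm R} {l : Option (K × R) → ℝ}
    (hfree : ∀ k, u (some (k, 0)) = colorIndicator k)
    (hl : l ᵥ* tverbergMatrix u π = apexVector K R ℝ) : IsBalanced u π l := by
  have hrow (k : K) : tverbergMatrix u π (some (k, 0)) = colorIndicator k := by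
    rw [tverbergMatrix_row, hfree, colorIndicator_comp_blockShift]
  have hsplit (w : Option (K × R)) :
      ∑ v ∈ properVertices K R, l v * tverbergMatrix u π v w +
        ∑ k, l (some (k, 0)) * (colorIndicator k : Option (K × R) → ℝ) w = apexVector K R ℝ w := by
    simp only [← hl, ← hrow]
    exact (sum_eq_sum_properVertices_add fun v => l v * tverbergMatrix u π v w).symm
  have hsome (k : K) (t : R) :
      ∑ v ∈ properVertices K R, l v * tverbergMatrix u π v (some (k, t)) = -l (some (k, 0)) := by
    simpa [colorIndicator, apexVector, add_eq_zero_iff_eq_neg] using hsplit (some (k, t))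
  exact ⟨by simpa [colorIndicator, apexVector] using hsplit none, fun k t => by
    rw [hsome, hsome]⟩

theorem isClosed_setOf_isBalanced (π : K → Equiv.Perm R) :
    IsClosed {z : (Option (K × R) → Option (K × R) → ℝ) × (Option (K × R) → ℝ) |
      IsBalanced z.1 π z.2} := by
  simp only [IsBalanced, tverbergMatrix_apply, Set.ofPred_and, Set.ofPred_forall]
  exact (isClosed_eq (by fun_prop) (by fun_prop)).inter (isClosed_iInter fun k =>
    isClosed_iInter fun t => isClosed_eq (by fun_prop) (by fun_prop))

theorem IsBalanced.congr {u : Option (K × R) → Option (K × R) → ℝ} {π : K → Equiv.Perm R}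
    {l l' : Option (K × R) → ℝ} (h : IsBalanced u π l)
    (hll' : ∀ v ∈ properVertices K R, l v = l' v) : IsBalanced u π l' := by
  have hsum (w : Option (K × R)) : ∑ v ∈ properVertices K R, l' v * tverbergMatrix u π v w =
      ∑ v ∈ properVertices K R, l v * tverbergMatrix u π v w :=
    Finset.sum_congr rfl fun v hv => by rw [hll' v hv]
  simpa only [IsBalanced, hsum] using h

theorem exists_isBalanced (hR : (Fintype.card R).Prime) (hR2 : Fintype.card R ≠ 2)
    {u : Option (K × R) → Option (K × R) → ℝ}
    (hfree : ∀ k, u (some (k, 0)) = colorIndicator k)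
    (hpos : ∀ v ∈ properVertices K R, 1 / 2 < u v none) :
    ∃ (π : K → Equiv.Perm R) (l : Option (K × R) → ℝ), 0 ≤ l ∧ IsBalanced u π l := by
  let solvable : Set (Option (K × R) → Option (K × R) → ℝ) :=
    ⋃ π, {u | ∃ l ∈ Set.Icc 0 (fun _ => 2), IsBalanced u π l}
  have hclosed : IsClosed solvable := isClosed_iUnion_of_finite fun π =>
    isClosed_setOf_exists_mem isCompact_Icc (isClosed_setOf_isBalanced π)
  suffices hu : u ∈ solvable by
    obtain ⟨π, l, hl, hbal⟩ := Set.mem_iUnion.1 hu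
    exact ⟨π, l, hl.1, hbal⟩
  by_contra hu
  have hhalf : ∀ᶠ u' in 𝓝 u, ∀ v ∈ properVertices K R, 1 / 2 < u' v none :=
    (Filter.eventually_all_finset _).2 fun v hv =>
      (isOpen_lt continuous_const (by fun_prop)).mem_nhds (hpos v hv)
  obtain ⟨u', ⟨hu', hhalf'⟩, hfree', π, l, hl, hlpos⟩ :=
    exists_pos_vecMul_tverbergMatrix_eq_mem_nhds hR hR2 hfree
      (fun v hv => one_half_pos.trans (hpos v hv))
      (Filter.inter_mem (hclosed.isOpen_compl.mem_nhds hu) hhalf)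
  have hbal := isBalanced_of_vecMul_eq_apexVector hfree' hl
  refine hu' (Set.mem_iUnion.2 ⟨π, fun v => if v ∈ properVertices K R then l v else 0,
    ⟨fun v => ?_, fun v => ?_⟩, hbal.congr fun v hv => (if_pos hv).symm⟩)
  · dsimp only [Pi.zero_apply]
    split_ifs with hv
    exacts [(hlpos v hv).le, le_rfl]
  · dsimp only
    split_ifs with hv
    · have hle := Finset.single_le_sum (f := fun v => l v * tverbergMatrix u' π v none)
        (fun w hw => mul_nonneg (hlpos w hw).le (one_half_pos.trans (hhalf' w hw)).le) hv
      have hlv : l v * (1 / 2) < l v * tverbergMatrix u' π v none :=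
        mul_lt_mul_of_pos_left (hhalf' v hv) (hlpos v hv)
      rw [hbal.1] at hle
      linarith
    · norm_num

theorem exists_blockAssignment_sum_eq (hR : (Fintype.card R).Prime) (hR2 : Fintype.card R ≠ 2)
    (P : Option (K × R) → K → ℝ) :
    ∃ (π : K → Equiv.Perm R) (l : Option (K × R) → ℝ), 0 ≤ l ∧
      ∑ v ∈ properVertices K R, l v = 1 ∧
      ∀ t, ∑ v ∈ properVertices K R with blockAssignment π v = t, l v • P v =
        ∑ v ∈ properVertices K R with blockAssignment π v = 0, l v • P v := by
  let u (v w : Option (K × R)) : ℝ :=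
    if v ∈ properVertices K R then w.elim 1 fun x => if x.2 = 0 then P v x.1 else 0
    else v.elim 0 (fun y => colorIndicator y.1 w)
  have hu (v) (hv : v ∈ properVertices K R) (k : K) (t i : R) :
      u v (blockShift K i (some (k, t))) = if i = t then P v k else 0 := by
    simp [u, hv, sub_eq_zero, eq_comm]
  have hu' (v) (hv : v ∈ properVertices K R) : u v none = 1 := if_pos hv
  obtain ⟨π, l, hl, hapex, hbal⟩ := exists_isBalanced hR hR2 (u := u)
    (fun k => by simp [u]) fun v hv => by norm_num [hu' v hv]
  have hblock (k : K) (t : R) :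
      (∑ v ∈ properVertices K R with blockAssignment π v = t, l v • P v) k =
        ∑ v ∈ properVertices K R, l v * tverbergMatrix u π v (some (k, t)) := by
    rw [Finset.sum_apply, Finset.sum_filter]
    refine Finset.sum_congr rfl fun v hv => ?_
    rw [tverbergMatrix_apply, hu v hv]
    simp
  refine ⟨π, l, hl, ?_, fun t => funext fun k => by rw [hblock, hblock, hbal]⟩
  rw [← hapex]
  exact Finset.sum_congr rfl fun v hv => by simp [tverbergMatrix_apply, hu' v hv]

end Balanced

section TverbergAssignment

variable {V C R E : Type*} [AddCommGroup E] [Module ℝ E]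

/-- A colored Tverberg partition of the points `pt v`, colored by `c`, whose blocks are labeled
by `R`: the block of `v` is `τ v`, each block contains each color at most once, and the convex
hulls of all blocks share a point. -/
def IsTverbergAssignment (c : V → C) (pt : V → E) (τ : V → R) : Prop :=
  (∀ v w, c v = c w → τ v = τ w → v = w) ∧ ∃ x, ∀ i, x ∈ convexHull ℝ (pt '' {v | τ v = i})

theorem exists_mem_convexHull_image_erase [FiniteDimensional ℝ E] [DecidableEq V] {pt : V → E}
    {x : E} {B : Finset V} (hB : Module.finrank ℝ E + 1 < B.card)
    (hx : x ∈ convexHull ℝ (pt '' B)) : ∃ w ∈ B, x ∈ convexHull ℝ (pt '' (B.erase w)) := by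
  rw [convexHull_eq_union] at hx
  simp only [Set.mem_iUnion] at hx
  obtain ⟨T, hTB, hT, hxT⟩ := hx
  obtain ⟨S, hSB, hS, rfl⟩ := Finset.exists_subset_injOn_image_eq_of_surjOn (f := pt) (B : Set V)
    T hTB
  have hcard : S.card ≤ Module.finrank ℝ E + 1 := by
    have hle := hT.card_le_finrank_succ
    rw [Fintype.card_coe, Finset.card_image_of_injOn hS] at hle
    exact hle.trans (Nat.add_le_add_right (Submodule.finrank_le _) 1)
  obtain ⟨w, hwB, hwS⟩ := Finset.exists_mem_notMem_of_card_lt_card (hcard.trans_lt hB)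
  refine ⟨w, hwB, convexHull_mono ?_ hxT⟩
  rw [Finset.coe_image]
  exact Set.image_mono (Finset.coe_subset.2 (Finset.subset_erase.2 ⟨hSB, hwS⟩))

/- In barycentric coordinates the equality of the weighted block sums includes that of the weights
of the blocks, so all blocks have the same center of mass. -/
theorem exists_mem_convexHull_of_sum_smul_coords_eq {K : Type*} [Finite K] [Fintype V] [Finite R]
    [DecidableEq R] (b : AffineBasis K ℝ E) {pt : V → E} {τ : V → R} {l : V → ℝ} {m : K → ℝ}
    (hl : 0 ≤ l) (hsum : ∑ v, l v = 1)
    (hm : ∀ t, ∑ v with τ v = t, l v • b.coords (pt v) = m) :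
    ∃ x, ∀ t, x ∈ convexHull ℝ (pt '' {v | τ v = t}) := by
  cases nonempty_fintype K
  cases nonempty_fintype R
  have hcoord (t : R) (k : K) : m k = ∑ v with τ v = t, l v * b.coord k (pt v) := by
    simp [← hm t]
  have hweight (t : R) : ∑ v with τ v = t, l v = ∑ k, m k := by
    simp_rw [hcoord t]
    rw [Finset.sum_comm]
    simp_rw [← Finset.mul_sum, b.sum_coord_apply_eq_one, mul_one]
  have hpoint (t : R) : ∑ v with τ v = t, l v • pt v = ∑ k, m k • b k := by
    simp_rw [hcoord t, Finset.sum_smul]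
    rw [Finset.sum_comm]
    simp_rw [mul_smul, ← Finset.smul_sum, b.linear_combination_coord_eq_self]
  have htotal : Fintype.card R * ∑ k, m k = 1 := by
    rw [← hsum, ← Finset.sum_fiberwise Finset.univ τ l]
    simp [hweight]
  refine ⟨(∑ k, m k)⁻¹ • ∑ k, m k • b k, fun t => ?_⟩
  have hpos : 0 < ∑ v with τ v = t, l v := by
    refine (Finset.sum_nonneg fun v _ => hl v).lt_of_ne fun h => ?_
    rw [← hweight t, ← h, mul_zero] at htotal
    exact zero_ne_one htotal
  have hmem := Finset.centerMass_mem_convexHull (s := pt '' {v | τ v = t}) {v | τ v = t}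
    (fun v _ => hl v) hpos (z := pt) (by simpa using fun v hv => ⟨v, hv, rfl⟩)
  rwa [Finset.centerMass, hweight, hpoint] at hmem

section Equiv

variable {K : Type*} [Fintype K] [DecidableEq K] [AddCommGroup R] [Fintype R] [DecidableEq R]
  {c : V → Option K}

theorem exists_isTverbergAssignment_of_equiv (b : AffineBasis K ℝ E)
    (hR : (Fintype.card R).Prime) (hR2 : Fintype.card R ≠ 2) (pt : V → E)
    (g : V ≃ properVertices K R) (hg : ∀ v, (g v).1.map Prod.fst = c v) :
    ∃ τ : V → R, IsTverbergAssignment c pt τ := by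
  have : Fintype V := Fintype.ofEquiv _ g.symm
  obtain ⟨π, l, hl, hsum, hbal⟩ := exists_blockAssignment_sum_eq hR hR2 fun w : Option (K × R) =>
    if hw : w ∈ properVertices K R then b.coords (pt (g.symm ⟨w, hw⟩)) else 0
  refine ⟨fun v => blockAssignment π (g v), fun v w hcvw hτ => ?_,
    exists_mem_convexHull_of_sum_smul_coords_eq b (l := fun v => l (g v)) (fun v => hl _) ?_
      fun t => (Eq.trans ?_ (hbal t))⟩
  · refine g.injective (Subtype.ext ?_)
    simp only [← hg] at hcvw
    rcases hv : (g v).1 with _ | ⟨k, a⟩ <;> rcases hw : (g w).1 with _ | ⟨k', a'⟩ <;>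
      simp_all
  · rw [← hsum, ← Finset.sum_coe_sort (properVertices K R)]
    exact Equiv.sum_comp g fun w => l w
  · rw [Finset.sum_filter, Finset.sum_filter, ← Finset.sum_coe_sort (properVertices K R)]
    exact Fintype.sum_equiv g _ _ (by simp)

variable [Fintype V]

theorem exists_equiv_properVertices (hnone : Fintype.card {v // c v = none} = 1)
    (hsome : ∀ k, Fintype.card {v // c v = some k} = Fintype.card R - 1) :
    ∃ g : V ≃ properVertices K R, ∀ v, (g v).1.map Prod.fst = c v := by
  have hcard (o : Option K) : Fintype.card {v // c v = o} =
      Fintype.card {w : properVertices K R // w.1.map Prod.fst = o} := by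
    obtain _ | k := o
    · rw [hnone, eq_comm, Fintype.card_eq_one_iff]
      exact ⟨⟨⟨none, none_mem_properVertices⟩, rfl⟩, by simp⟩
    · rw [hsome, ← Set.card_ne_eq (0 : R)]
      refine Fintype.card_of_bijective
        (f := fun a => ⟨⟨some (k, a.1), some_mem_properVertices.2 a.2⟩, rfl⟩)
        ⟨fun a a' h => by simpa [Subtype.ext_iff] using h, ?_⟩
      rintro ⟨⟨_ | ⟨k', a⟩, hw⟩, h⟩
      · simp at h
      · obtain rfl : k' = k := by simpa using h
        exact ⟨⟨a, some_mem_properVertices.1 hw⟩, rfl⟩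
  let e (o : Option K) := Fintype.equivOfCardEq (hcard o)
  exact ⟨Equiv.ofFiberEquiv e, Equiv.ofFiberEquiv_map e⟩

end Equiv

theorem exists_isTverbergAssignment [Fintype V] {K : Type*} [Finite K] [DecidableEq K]
    [AddCommGroup R] [Fintype R] {c : V → Option K} (b : AffineBasis K ℝ E)
    (hR : (Fintype.card R).Prime) (hR2 : Fintype.card R ≠ 2)
    (hnone : Fintype.card {v // c v = none} = 1)
    (hsome : ∀ k, Fintype.card {v // c v = some k} = Fintype.card R - 1) (pt : V → E) :
    ∃ τ : V → R, IsTverbergAssignment c pt τ := by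
  cases nonempty_fintype K
  obtain ⟨g, hg⟩ := exists_equiv_properVertices hnone hsome
  exact exists_isTverbergAssignment_of_equiv b hR hR2 pt g hg

section GetD

variable {K : Type*} {c : V → Option K} {pt : V → E} {τ : V → R} {v₀ : V}

theorem IsTverbergAssignment.getD_of_forall_ne (h : IsTverbergAssignment c pt τ)
    (hv₀ : ∀ v, c v = none ↔ v = v₀) {k : K} (hk : ∀ v, c v = some k → τ v ≠ τ v₀) :
    IsTverbergAssignment (fun v => (c v).getD k) pt τ := by
  refine ⟨fun v w hcvw hτvw => ?_, h.2⟩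
  rcases hv : c v with _ | kv <;> rcases hw : c w with _ | kw <;>
    simp only [hv, hw, Option.getD_none, Option.getD_some] at hcvw
  · exact ((hv₀ v).1 hv).trans ((hv₀ w).1 hw).symm
  · exact (hk w (hcvw ▸ hw) ((hv₀ v).1 hv ▸ hτvw.symm)).elim
  · exact (hk v (hcvw ▸ hv) ((hv₀ w).1 hw ▸ hτvw)).elim
  · exact h.1 v w (hv.trans (hcvw ▸ hw.symm)) hτvw

theorem IsTverbergAssignment.exists_mem_convexHull_ne [Finite V] [Finite K]
    (h : IsTverbergAssignment c pt τ) (b : AffineBasis K ℝ E) (hv₀ : c v₀ = none)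
    (hall : ∀ k, ∃ v, c v = some k ∧ τ v = τ v₀) :
    ∃ x, (∀ i, x ∈ convexHull ℝ (pt '' {v | τ v = i})) ∧
      ∃ w, τ w = τ v₀ ∧ x ∈ convexHull ℝ (pt '' {v | τ v = τ v₀ ∧ v ≠ w}) := by
  cases nonempty_fintype V
  cases nonempty_fintype K
  have := b.finiteDimensional
  obtain ⟨x, hx⟩ := h.2
  choose u hcu hτu using hall
  have hu : Function.Injective fun o : Option K => o.elim v₀ u := by
    refine Function.Injective.of_comp (f := c) ?_
    have hid : (c ∘ fun o : Option K => o.elim v₀ u) = id := by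
      funext o
      cases o <;> simp [hv₀, hcu]
    exact hid ▸ Function.injective_id
  have hcard : Module.finrank ℝ E + 1 < (Finset.univ.filter fun v => τ v = τ v₀).card := by
    rw [← b.card_eq_finrank_add_one]
    calc Fintype.card K < Fintype.card (Option K) := by simp
      _ = (Finset.univ.image fun o : Option K => o.elim v₀ u).card := by
        rw [Finset.card_image_of_injective _ hu, Finset.card_univ]
      _ ≤ _ := Finset.card_le_card fun v hv => by
        obtain ⟨o, -, rfl⟩ := Finset.mem_image.1 hv
        cases o <;> simp [hτu]
  obtain ⟨w, hw, hxw⟩ := exists_mem_convexHull_image_erase hcard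
    (by simpa using hx (τ v₀))
  refine ⟨x, hx, w, by simpa using hw, ?_⟩
  convert hxw using 3
  ext v
  simp

theorem IsTverbergAssignment.eq_of_getD_eq_of_update_eq (h : IsTverbergAssignment c pt τ)
    (hv₀ : ∀ v, c v = none ↔ v = v₀) {u w : V} {k : K} {i : R} (hw : τ w = τ v₀)
    (hwk : (c w).getD k = k) (hcu : c u = some k) (hτu : τ u = τ v₀)
    (hi : ∀ v, c v = some k → τ v ≠ i) (v v' : V) (hc : (c v).getD k = (c v').getD k)
    (hτ : Function.update τ w i v = Function.update τ w i v') : v = v' := by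
  have hmoved (v : V) (hv : (c v).getD k = k) : τ v ≠ i := by
    rcases hcv : c v with _ | k'
    · rw [(hv₀ v).1 hcv, ← hτu]
      exact hi u hcu
    · exact hi v (by simpa [hcv] using hv)
  have hkept (v : V) (hvw : v ≠ w) (hwv₀ : w ≠ v₀) (hcv : c v = some k) : τ v ≠ τ v₀ := by
    obtain ⟨k', hk'⟩ := Option.ne_none_iff_exists'.1 (mt (hv₀ w).1 hwv₀)
    obtain rfl : k' = k := by simpa [hk'] using hwk
    exact fun hτv => hvw (h.1 v w (hcv.trans hk'.symm) (hτv.trans hw.symm))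
  by_cases hv : v = w <;> by_cases hv' : v' = w
  · exact hv.trans hv'.symm
  · rw [hv, hwk] at hc
    rw [hv, Function.update_self, Function.update_of_ne hv'] at hτ
    exact (hmoved v' hc.symm hτ.symm).elim
  · rw [hv', hwk] at hc
    rw [hv', Function.update_self, Function.update_of_ne hv] at hτ
    exact (hmoved v hc hτ).elim
  rw [Function.update_of_ne hv, Function.update_of_ne hv'] at hτ
  rcases hcv : c v with _ | kv <;> rcases hcv' : c v' with _ | kv' <;>
    simp only [hcv, hcv', Option.getD_none, Option.getD_some] at hc
  · exact ((hv₀ v).1 hcv).trans ((hv₀ v').1 hcv').symm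
  · obtain rfl := (hv₀ v).1 hcv
    exact (hkept v' hv' (Ne.symm hv) (hc ▸ hcv') hτ.symm).elim
  · obtain rfl := (hv₀ v').1 hcv'
    exact (hkept v hv (Ne.symm hv') (hc ▸ hcv) hτ).elim
  · exact h.1 v v' (hcv.trans (hc ▸ hcv'.symm)) hτ

theorem IsTverbergAssignment.exists_getD_of_forall_exists [Fintype V] [Finite K] [DecidableEq K]
    [Nonempty K] [Fintype R] (h : IsTverbergAssignment c pt τ) (b : AffineBasis K ℝ E)
    (hv₀ : ∀ v, c v = none ↔ v = v₀)
    (hsome : ∀ k, Fintype.card {v // c v = some k} < Fintype.card R)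
    (hall : ∀ k, ∃ v, c v = some k ∧ τ v = τ v₀) :
    ∃ (k : K) (τ' : V → R), IsTverbergAssignment (fun v => (c v).getD k) pt τ' := by
  obtain ⟨x, hx, w, hw, hxw⟩ := h.exists_mem_convexHull_ne b ((hv₀ v₀).2 rfl) hall
  obtain ⟨k, hwk⟩ : ∃ k, (c w).getD k = k := by
    rcases c w with _ | k
    exacts [⟨Classical.arbitrary K, rfl⟩, ⟨k, rfl⟩]
  obtain ⟨u, hcu, hτu⟩ := hall k
  obtain ⟨i, hi⟩ : ∃ i, ∀ v, c v = some k → τ v ≠ i := by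
    by_contra! hsurj
    refine (hsome k).not_ge (Fintype.card_le_of_surjective (fun v => τ v.1) fun i => ?_)
    obtain ⟨v, hcv, hτv⟩ := hsurj i
    exact ⟨⟨v, hcv⟩, hτv⟩
  refine ⟨k, Function.update τ w i, h.eq_of_getD_eq_of_update_eq hv₀ hw hwk hcu hτu hi,
    x, fun j => ?_⟩
  rcases eq_or_ne j (τ v₀) with rfl | hj
  · refine convexHull_mono (Set.image_mono ?_) hxw
    rintro v ⟨hτv, hvw⟩
    exact (Function.update_of_ne hvw i τ).trans hτv
  · refine convexHull_mono (Set.image_mono fun v hτv => ?_) (hx j)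
    have hvw : v ≠ w := by
      rintro rfl
      exact hj (hτv.symm.trans hw)
    exact (Function.update_of_ne hvw i τ).trans hτv

end GetD

/- If the block of the singleton color contains all colors, Carathéodory's theorem makes one of
its vertices superfluous, and there is a block lacking that vertex's color to move it to. -/
theorem exists_isTverbergAssignment_getD [Fintype V] {K : Type*} [Finite K] [DecidableEq K]
    [Nonempty K] [AddCommGroup R] [Fintype R] {c : V → Option K} (b : AffineBasis K ℝ E)
    (hR : (Fintype.card R).Prime) (hR2 : Fintype.card R ≠ 2)
    (hnone : Fintype.card {v // c v = none} = 1)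
    (hsome : ∀ k, Fintype.card {v // c v = some k} = Fintype.card R - 1) (pt : V → E) :
    ∃ (k : K) (τ : V → R), IsTverbergAssignment (fun v => (c v).getD k) pt τ := by
  obtain ⟨τ, hτ⟩ := exists_isTverbergAssignment b hR hR2 hnone hsome pt
  obtain ⟨⟨v₀, hv₀⟩, huniq⟩ := Fintype.card_eq_one_iff.1 hnone
  have hnone_iff (v : V) : c v = none ↔ v = v₀ :=
    ⟨fun hv => congrArg Subtype.val (huniq ⟨v, hv⟩), fun hv => hv ▸ hv₀⟩
  by_cases hk : ∃ k, ∀ v, c v = some k → τ v ≠ τ v₀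
  · obtain ⟨k, hk⟩ := hk
    exact ⟨k, τ, hτ.getD_of_forall_ne hnone_iff hk⟩
  · push Not at hk
    exact hτ.exists_getD_of_forall_exists b hnone_iff
      (fun k => (hsome k).trans_lt (Nat.sub_one_lt hR.ne_zero)) hk

end TverbergAssignment

section BarycentricCoordinates

open scoped Matrix

variable {K E : Type*} [Fintype K] [AddCommGroup E] [Module ℝ E]

theorem coords_sum_smul (b : AffineBasis K ℝ E) {q : K → E} {l : K → ℝ} (hl : ∑ j, l j = 1) :
    b.coords (∑ j, l j • q j) = l ᵥ* b.toMatrix q := by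
  rw [← Finset.univ.affineCombination_eq_linear_combination q l hl,
    Finset.univ.map_affineCombination q l hl,
    Finset.univ.affineCombination_eq_linear_combination _ l hl]
  funext k
  simp [Matrix.vecMul, dotProduct, AffineBasis.toMatrix]

theorem mem_convexHull_range_iff_exists_sum_smul (q : K → E) (x : E) :
    x ∈ convexHull ℝ (Set.range q) ↔
      ∃ l : K → ℝ, (∀ j, 0 ≤ l j) ∧ ∑ j, l j = 1 ∧ ∑ j, l j • q j = x := by
  have himage : Set.range q =
      Fintype.linearCombination ℝ q '' Set.range fun i : K => Pi.single i (1 : ℝ) := by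
    rw [← Set.range_comp]
    congr 1
    funext i
    simp
  rw [himage, ← LinearMap.image_convexHull, convexHull_rangle_single_eq_stdSimplex]
  simp [stdSimplex, Fintype.linearCombination_apply, and_assoc]

theorem memCone_toMatrix_iff (b : AffineBasis K ℝ E) (q : K → E) (x : E) :
    MemCone (b.toMatrix q) (b.coords x) ↔ x ∈ convexHull ℝ (Set.range q) := by
  rw [mem_convexHull_range_iff_exists_sum_smul]
  refine exists_congr fun l => and_congr_right fun _ => ⟨fun h => ?_, ?_⟩
  · have hl : ∑ j, l j = 1 := by
      have hrow : b.toMatrix q *ᵥ 1 = 1 := by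
        funext j
        simp [Matrix.mulVec, dotProduct_one, AffineBasis.toMatrix]
      rw [← dotProduct_one, ← hrow, Matrix.dotProduct_mulVec, h, dotProduct_one]
      exact b.sum_coord_apply_eq_one x
    refine ⟨hl, b.ext_elem fun k => ?_⟩
    exact congrFun ((coords_sum_smul b hl).trans h) k
  · rintro ⟨hl, rfl⟩
    exact (coords_sum_smul b hl).symm

theorem det_toMatrix_ne_zero [DecidableEq K] (b : AffineBasis K ℝ E) {q : K → E}
    (hq : AffineIndependent ℝ q) : (b.toMatrix q).det ≠ 0 := by
  have := b.finiteDimensional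
  exact ((Matrix.isUnit_iff_isUnit_det _).1 ((b.isUnit_toMatrix_iff q).2
    ⟨hq, hq.affineSpan_eq_top_iff_card_eq_finrank_add_one.2 b.card_eq_finrank_add_one⟩)).ne_zero

end BarycentricCoordinates

theorem GenPos.affineIndependent {d : ℕ} {P : Set (Fin d → ℝ)} (hP : GenPos d P) {J : Type*}
    [Fintype J] (hJ : Fintype.card J ≤ d + 1) {q : J → Fin d → ℝ} (hq : Function.Injective q)
    (hqP : ∀ j, q j ∈ P) : AffineIndependent ℝ q := by
  rcases subsingleton_or_nontrivial J with _ | _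
  · exact affineIndependent_of_subsingleton ℝ q
  obtain ⟨n, hn⟩ := Nat.exists_eq_add_of_le' (Fintype.one_lt_card : 1 < Fintype.card J)
  rw [affineIndependent_iff_not_finrank_vectorSpan_le ℝ q hn]
  intro hle
  obtain ⟨S, hSq, hS⟩ : ∃ S ⊆ Finset.univ.image q,
      S.card = Module.finrank ℝ (vectorSpan ℝ (Set.range q)) + 2 := by
    refine Finset.exists_subset_card_eq ?_
    rw [Finset.card_image_of_injective _ hq, Finset.card_univ, hn]
    omega
  have hSq : (S : Set (Fin d → ℝ)) ⊆ Set.range q := by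
    simpa using Finset.coe_subset.2 hSq
  refine hP _ (by omega) S (hSq.trans (Set.range_subset_iff.2 hqP)) hS
    ⟨affineSpan ℝ (Set.range q), ?_, hSq.trans (subset_affineSpan ℝ _)⟩
  rw [direction_affineSpan]

section TverbergPartition

variable {V C K R E : Type*} [AddCommGroup E] [Module ℝ E]

/-- The unordered colored Tverberg partitions, into `r` blocks, of the points `pt v` colored by
`c`. -/
def tverbergPartitions (c : V → C) (pt : V → E) (r : ℕ) : Set (Finset (Finset V)) :=
  {P | P.card = r ∧ (∀ B ∈ P, ∀ B' ∈ P, B ≠ B' → Disjoint B B') ∧ (∀ v, ∃ B ∈ P, v ∈ B) ∧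
    (∀ B ∈ P, Set.InjOn c B) ∧ ∃ x, ∀ B ∈ P, x ∈ convexHull ℝ (pt '' B)}

theorem tverbergCount_eq_ncard (d N r : ℕ) (f : (Fin (N + 1) → ℝ) →ᵃ[ℝ] (Fin d → ℝ))
    (c : Fin (N + 1) → Fin (d + 2)) :
    tverbergCount d N r f c =
      (tverbergPartitions c (fun i => f (Pi.single i 1)) r).ncard := by
  have hcover (P : Finset (Finset (Fin (N + 1)))) :
      P.biUnion id = Finset.univ ↔ ∀ v, ∃ B ∈ P, v ∈ B := by
    simp [Finset.eq_univ_iff_forall]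
  have hrainbow (B : Finset (Fin (N + 1))) :
      (∀ j, (B.filter fun i => c i = j).card ≤ 1) ↔ Set.InjOn c B := by
    simp only [Finset.card_le_one, Finset.mem_filter, Set.InjOn, Finset.mem_coe]
    exact ⟨fun h v hv w hw hvw => h (c w) v ⟨hv, hvw⟩ w ⟨hw, rfl⟩,
      fun h j v hv w hw => h hv.1 hw.1 (hv.2.trans hw.2.symm)⟩
  simp only [tverbergCount, tverbergPartitions, hcover, hrainbow]

theorem tverbergPartitions_subset_of_factorsThrough {C' : Type*} {c : V → C} {c' : V → C'}
    (h : c'.FactorsThrough c) (pt : V → E) (r : ℕ) :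
    tverbergPartitions c' pt r ⊆ tverbergPartitions c pt r :=
  fun _ ⟨hcard, hdisj, hcover, hc, hx⟩ =>
    ⟨hcard, hdisj, hcover, fun B hB _ hv _ hw hvw => hc B hB hv hw (h hvw), hx⟩

variable [Fintype V]

theorem IsTverbergAssignment.image_fibers_mem [Fintype R] [DecidableEq R] [DecidableEq (Finset V)]
    {c : V → C} {pt : V → E} {τ : V → R} (h : IsTverbergAssignment c pt τ) :
    (Finset.univ.image fun i => ({v | τ v = i} : Finset V)) ∈
      tverbergPartitions c pt (Fintype.card R) := by
  obtain ⟨hτ, x, hx⟩ := h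
  have hne (i : R) : ∃ v, τ v = i := by
    obtain ⟨_, v, hv, -⟩ := convexHull_nonempty_iff.1 ⟨x, hx i⟩
    exact ⟨v, hv⟩
  refine ⟨?_, ?_, fun v => ⟨_, Finset.mem_image_of_mem _ (Finset.mem_univ (τ v)), by simp⟩, ?_,
    x, ?_⟩
  · rw [Finset.card_image_of_injective _ fun i j hij => ?_, Finset.card_univ]
    obtain ⟨v, hv⟩ := hne i
    simpa [hv] using Finset.ext_iff.1 hij v
  all_goals simp only [Finset.forall_mem_image, Finset.mem_univ, true_imp_iff]
  · rintro i j hij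
    refine Finset.disjoint_left.2 fun v hvi hvj => hij ?_
    rw [← (Finset.mem_filter.1 hvi).2, (Finset.mem_filter.1 hvj).2]
  · intro i v hv w hw hvw
    refine hτ v w hvw ?_
    rw [(Finset.mem_filter.1 hv).2, (Finset.mem_filter.1 hw).2]
  · simpa using hx

/-- The labels of those blocks of `τ` that contain every color. -/
def fullLabels (c : V → K) (τ : V → R) : Set R :=
  {i | ∀ k, ∃ v, c v = k ∧ τ v = i}

theorem card_add_one_le_card_fullLabels_add [Fintype K] [Fintype R] {c : V → K} {τ : V → R}
    [Fintype (fullLabels c τ)] (hτ : ∀ v w, c v = c w → τ v = τ w → v = w)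
    (hV : Fintype.card V = Fintype.card K * (Fintype.card R - 1) + 1) :
    Fintype.card R + 1 ≤ Fintype.card (fullLabels c τ) + Fintype.card K := by
  have hmissing (i : {i // i ∉ fullLabels c τ}) : ∃ k, ∀ v, c v = k → τ v ≠ i := by
    simpa [fullLabels] using i.2
  choose k hk using hmissing
  have hinj : Function.Injective
      (Sum.elim (fun v => (c v, τ v)) fun i : {i // i ∉ fullLabels c τ} => (k i, i.1)) := by
    refine Function.Injective.sumElim (fun v w hvw => ?_) (fun i j hij => ?_) fun v i hvi => ?_
    · exact hτ v w (Prod.mk.inj hvw).1 (Prod.mk.inj hvw).2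
    · exact Subtype.ext (Prod.mk.inj hij).2
    · exact hk i v (Prod.mk.inj hvi).1 (Prod.mk.inj hvi).2
  have hcard := Fintype.card_le_of_injective _ hinj
  have hcompl := Fintype.card_subtype_compl fun i => i ∈ fullLabels c τ
  have hle := Fintype.card_subtype_le fun i => i ∈ fullLabels c τ
  have hR : Fintype.card R ≠ 0 := fun h => by
    have := Fintype.card_eq_zero_iff.1 h
    have := Function.isEmpty τ
    simp at hV
  obtain ⟨n, hn⟩ := Nat.exists_eq_succ_of_ne_zero hR
  rw [Fintype.card_sum, Fintype.card_prod, hcompl, hV, hn, Nat.succ_sub_one,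
    Nat.mul_succ] at hcard
  change Fintype.card (fullLabels c τ) ≤ _ at hle
  change _ + (_ - Fintype.card (fullLabels c τ)) ≤ _ at hcard
  omega

theorem IsRainbowMatching.card_eq_card {I : Type*} [Fintype I] [Nonempty K] {S : Finset (K → I)}
    (hS : IsRainbowMatching (fun _ => Set.univ) S) : S.card = Fintype.card I := by
  have h := (hS (Classical.arbitrary K)).ncard_eq
  rwa [Set.ncard_coe_finset, Set.ncard_univ, Nat.card_eq_fintype_card] at h

section Rematch

variable {c : V → K} {pt : V → E} {τ : V → R} {F : Set R} {S : Finset (K → F)}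

/-- The rainbow set of vertices that takes its vertex of color `k` from the block of `τ` labeled
`s k`. -/
def rainbowBlock [DecidableEq R] (c : V → K) (τ : V → R) (s : K → F) : Finset V :=
  {v | (s (c v) : R) = τ v}

/-- The blocks obtained from those of `τ` when the blocks with labels in `F` are cut up and
reassembled as prescribed by the matching `S`. -/
def rematchedBlock [DecidableEq R] (c : V → K) (τ : V → R) (S : Finset (K → F)) :
    {i // i ∉ F} ⊕ S → Finset V :=
  Sum.elim (fun i => ({v | τ v = i} : Finset V)) fun s => rainbowBlock c τ s.1

theorem exists_forall_eq_iff_mem_rematchedBlock [DecidableEq R]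
    (hS : IsRainbowMatching (fun _ => Set.univ) S) (c : V → K) (τ : V → R) :
    ∃ σ : V → {i // i ∉ F} ⊕ S, ∀ v t, σ v = t ↔ v ∈ rematchedBlock c τ S t := by
  suffices H : ∀ v, ∃ t', ∀ t, t' = t ↔ v ∈ rematchedBlock c τ S t from Classical.skolem.1 H
  intro v
  by_cases hv : τ v ∈ F
  · obtain ⟨s, hs, hsv⟩ := hS.exists_mem_eq (j := c v) (Set.mem_univ ⟨τ v, hv⟩)
    refine ⟨Sum.inr ⟨s, hs⟩, ?_⟩
    rintro (i | ⟨s', hs'⟩)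
    · have hi : τ v ≠ i := fun h => i.2 (h ▸ hv)
      simpa [rematchedBlock] using hi
    · have hss' : s = s' ↔ s' (c v) = ⟨τ v, hv⟩ :=
        ⟨fun h => h ▸ hsv, fun h => (hS (c v)).injOn hs hs' (hsv.trans h.symm)⟩
      simp [rematchedBlock, rainbowBlock, hss', Subtype.ext_iff]
  · refine ⟨Sum.inl ⟨τ v, hv⟩, ?_⟩
    rintro (i | ⟨s, hs⟩)
    · simp [rematchedBlock, Subtype.ext_iff]
    · have hsv : (s (c v) : R) ≠ τ v := fun h => hv (h ▸ (s (c v)).2)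
      simpa [rematchedBlock, rainbowBlock] using hsv

theorem image_rematchedBlock_mem_tverbergPartitions [Nonempty K] [Fintype R] [DecidableEq R]
    [DecidableEq (Finset V)] [DecidablePred (· ∈ F)] {x : E}
    (hτ : ∀ v w, c v = c w → τ v = τ w → v = w)
    (hx : ∀ i, x ∈ convexHull ℝ (pt '' {v | τ v = i}))
    (hS : IsRainbowMatching (fun _ => Set.univ) S)
    (hSx : ∀ s ∈ S, x ∈ convexHull ℝ (pt '' rainbowBlock c τ s)) :
    Finset.univ.image (rematchedBlock c τ S) ∈ tverbergPartitions c pt (Fintype.card R) := by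
  obtain ⟨σ, hσ⟩ := exists_forall_eq_iff_mem_rematchedBlock hS c τ
  have hσT : IsTverbergAssignment c pt σ := by
    refine ⟨fun v w hcvw hσvw => hτ v w hcvw ?_, x, fun t => ?_⟩
    · have hv := (hσ v _).1 rfl
      have hw := (hσ w _).1 hσvw.symm
      rcases hσv : σ v with i | s <;>
        simp only [hσv, rematchedBlock, Sum.elim_inl, Sum.elim_inr, rainbowBlock,
          Finset.mem_filter_univ] at hv hw
      · exact hv.trans hw.symm
      · rw [← hv, ← hw, hcvw]
    · simp only [hσ]
      rcases t with i | s
      · simpa [rematchedBlock] using hx i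
      · exact hSx s.1 s.2
  have hcard : Fintype.card ({i // i ∉ F} ⊕ S) = Fintype.card R := by
    rw [Fintype.card_sum, Fintype.card_coe, hS.card_eq_card, add_comm]
    exact (Fintype.card_congr (Equiv.sumCompl (· ∈ F))).symm ▸ Fintype.card_sum.symm
  rw [← hcard]
  convert hσT.image_fibers_mem using 2
  funext t
  ext v
  simp [hσ]

theorem injective_image_rematchedBlock [Nonempty K] [Fintype R] [DecidableEq R]
    [DecidableEq (Finset V)] [DecidablePred (· ∈ F)] (hF : F ⊆ fullLabels c τ) :
    Function.Injective fun S : Finset (K → F) => Finset.univ.image (rematchedBlock c τ S) := by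
  have hsub (S S' : Finset (K → F))
      (h : Finset.univ.image (rematchedBlock c τ S) = Finset.univ.image (rematchedBlock c τ S')) :
      S ⊆ S' := by
    intro s hs
    obtain ⟨t, ht⟩ : ∃ t, rematchedBlock c τ S' t = rainbowBlock c τ s := by
      have hs' := Finset.mem_image_of_mem (rematchedBlock c τ S)
        (Finset.mem_univ (Sum.inr ⟨s, hs⟩))
      rw [h] at hs'
      exact (Finset.mem_image.1 hs').imp fun _ => And.right
    have hmem (k : K) : ∃ v, c v = k ∧ τ v = s k ∧ v ∈ rematchedBlock c τ S' t := by
      obtain ⟨v, hcv, hτv⟩ := hF (s k).2 k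
      exact ⟨v, hcv, hτv, by simp [ht, rainbowBlock, hcv, hτv]⟩
    rcases t with i | s'
    · obtain ⟨v, -, hτv, hv⟩ := hmem (Classical.arbitrary K)
      refine (i.2 ?_).elim
      rw [← (Finset.mem_filter.1 hv).2, hτv]
      exact (s _).2
    · suffices s = s' from this ▸ s'.2
      funext k
      obtain ⟨v, rfl, hτv, hv⟩ := hmem k
      exact Subtype.ext (hτv.symm.trans (Finset.mem_filter.1 hv).2.symm)
  exact fun S S' h => (hsub S S' h).antisymm (hsub S' S h.symm)

end Rematch

theorem IsTverbergAssignment.two_pow_le_ncard_tverbergPartitions [Fintype K] [Nontrivial K]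
    [Fintype R] {c : V → K} {pt : V → E} {τ : V → R} (h : IsTverbergAssignment c pt τ)
    (b : AffineBasis K ℝ E)
    (hV : Fintype.card V = Fintype.card K * (Fintype.card R - 1) + 1)
    (hind : ∀ u : K → V, Function.Injective u → AffineIndependent ℝ fun k => pt (u k)) :
    2 ^ (Fintype.card R + 1 - 2 * Fintype.card K) ≤
      (tverbergPartitions c pt (Fintype.card R)).ncard := by
  obtain ⟨hτ, x, hx⟩ := h
  have hfull (k : K) (i : fullLabels c τ) : ∃ v, c v = k ∧ τ v = i := i.2 k
  choose u hcu hτu using hfull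
  have hu (i : fullLabels c τ) : Function.Injective fun k => u k i :=
    Function.LeftInverse.injective (g := c) fun k => hcu k i
  have hmem (i : fullLabels c τ) : x ∈ convexHull ℝ (Set.range fun k => pt (u k i)) := by
    refine convexHull_mono ?_ (hx i)
    rintro _ ⟨v, hv, rfl⟩
    exact ⟨c v, congrArg pt (hτ _ _ (hcu _ _) ((hτu _ _).trans hv.symm))⟩
  have hcount := two_pow_le_card_closedHitMatchings (φ := 1) (b := b.coords x)
    (p := fun k i => b.coords (pt (u k i)))
    (fun k i => by simp [dotProduct_one]) (by simp [dotProduct_one])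
    (fun i => det_toMatrix_ne_zero b (hind _ (hu i)))
    fun i => (memCone_toMatrix_iff b _ x).2 (hmem i)
  refine (Nat.pow_le_pow_right two_pos ?_).trans (hcount.trans ?_)
  · have := card_add_one_le_card_fullLabels_add hτ hV
    omega
  rw [← Set.ncard_coe_finset]
  refine Set.ncard_le_ncard_of_injOn (fun S => Finset.univ.image (rematchedBlock c τ S)) ?_
    (injective_image_rematchedBlock subset_rfl).injOn (Set.toFinite _)
  intro S hS
  obtain ⟨hS, hSx⟩ := mem_hitMatchings.1 hS
  refine image_rematchedBlock_mem_tverbergPartitions hτ hx hS fun s hs => ?_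
  refine convexHull_mono ?_ ((memCone_toMatrix_iff b (fun k => pt (u k (s k))) x).1 (hSx s hs))
  rintro _ ⟨k, rfl⟩
  exact ⟨u k (s k), by simp [rainbowBlock, hcu, hτu], rfl⟩

theorem two_pow_le_ncard_tverbergPartitions [Fintype K] [DecidableEq K] [Nontrivial K]
    [AddCommGroup R] [Fintype R] {c : V → Option K} (b : AffineBasis K ℝ E)
    (hR : (Fintype.card R).Prime) (hR2 : Fintype.card R ≠ 2)
    (hnone : Fintype.card {v // c v = none} = 1)
    (hsome : ∀ k, Fintype.card {v // c v = some k} = Fintype.card R - 1) {pt : V → E}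
    (hind : ∀ u : K → V, Function.Injective u → AffineIndependent ℝ fun k => pt (u k)) :
    2 ^ (Fintype.card R + 1 - 2 * Fintype.card K) ≤
      (tverbergPartitions c pt (Fintype.card R)).ncard := by
  have hV : Fintype.card V = Fintype.card K * (Fintype.card R - 1) + 1 := by
    rw [Fintype.card_congr (Equiv.sigmaFiberEquiv c).symm, Fintype.card_sigma,
      Fintype.sum_option, hnone, Finset.sum_congr rfl fun k _ => hsome k]
    simp [add_comm]
  obtain ⟨k, τ, hτ⟩ := exists_isTverbergAssignment_getD b hR hR2 hnone hsome pt
  exact (hτ.two_pow_le_ncard_tverbergPartitions b hV hind).trans (Set.ncard_le_ncard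
    (tverbergPartitions_subset_of_factorsThrough (fun _ _ h => congrArg (·.getD k) h) pt _)
    (Set.toFinite _))

end TverbergPartition

theorem tverbergCount_lower_bound_general (d r N : ℕ) (hd : 1 ≤ d) (hrp : Nat.Prime r)
    (hr : r ≠ 2) (f : (Fin (N + 1) → ℝ) →ᵃ[ℝ] (Fin d → ℝ))
    (c : Fin (N + 1) → Fin (d + 2))
    (hc : ∀ j : Fin (d + 2),
      (Finset.univ.filter fun i => c i = j).card = if (j : ℕ) = d + 1 then 1 else r - 1)
    (hinj : Function.Injective fun i : Fin (N + 1) => f (Pi.single i 1))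
    (hgen : GenPos d (Set.range fun i : Fin (N + 1) => f (Pi.single i 1))) :
    2 ^ (r - 2 * d - 1) ≤ tverbergCount d N r f c := by
  have : NeZero r := ⟨hrp.ne_zero⟩
  have : Nontrivial (Fin (d + 1)) := Fin.nontrivial_iff_two_le.2 (by omega)
  obtain ⟨b⟩ := AffineBasis.exists_affineBasis_of_finiteDimensional (ι := Fin (d + 1)) (k := ℝ)
    (P := Fin d → ℝ) (by simp)
  let pt (i : Fin (N + 1)) : Fin d → ℝ := f (Pi.single i 1)
  let c' (i : Fin (N + 1)) : Option (Fin (d + 1)) := finSuccEquivLast (c i)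
  have hfiber (o : Option (Fin (d + 1))) : Fintype.card {i // c' i = o} =
      if (finSuccEquivLast.symm o : ℕ) = d + 1 then 1 else r - 1 := by
    rw [← hc, Fintype.card_subtype]
    simp only [c', Equiv.eq_symm_apply]
  have hcount := two_pow_le_ncard_tverbergPartitions (R := ZMod r) (c := c') (pt := pt) b
    (by rwa [ZMod.card]) (by rwa [ZMod.card]) ((hfiber none).trans (by simp))
    (fun k => (hfiber (some k)).trans (by simp [k.is_lt.ne])) fun u hu =>
      hgen.affineIndependent (by simp) (hinj.comp hu) fun k => Set.mem_range_self (u k)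
  rw [ZMod.card, Fintype.card_fin] at hcount
  rw [tverbergCount_eq_ncard]
  refine (Nat.pow_le_pow_right two_pos (by omega)).trans (hcount.trans (Set.ncard_le_ncard
    (tverbergPartitions_subset_of_factorsThrough (fun _ _ h => congrArg finSuccEquivLast h) _ _)
    (Set.toFinite _)))

/-- For `d ≥ 2` and a prime `r ≥ 2d + 2`, with `N = (d+1)(r-1)`: for any affine map `f`
on the standard `N`-simplex whose vertices are colored with `d + 2` colors with color
classes `|C_0| = … = |C_d| = r - 1`, `|C_{d+1}| = 1`, and whose `N + 1` vertex images are
in general position, the number of unordered colored Tverberg partitions satisfies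
`T(f) ≥ 2^(r - 2d - 1)`. -/
theorem tverbergCount_lower_bound (d r N : ℕ) (hd : 2 ≤ d) (hr : 2 * d + 2 ≤ r)
    (hrp : Nat.Prime r) (hN : N = (d + 1) * (r - 1))
    (f : (Fin (N + 1) → ℝ) →ᵃ[ℝ] (Fin d → ℝ))
    (c : Fin (N + 1) → Fin (d + 2))
    (hc : ∀ j : Fin (d + 2),
      (Finset.univ.filter fun i => c i = j).card = if (j : ℕ) = d + 1 then 1 else r - 1)
    (hinj : Function.Injective fun i : Fin (N + 1) => f (Pi.single i 1))
    (hgen : GenPos d (Set.range fun i : Fin (N + 1) => f (Pi.single i 1))) :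
    2 ^ (r - 2 * d - 1) ≤ tverbergCount d N r f c :=
  tverbergCount_lower_bound_general d r N (by omega) hrp (by omega) f c hc hinj hgen
end

section
/- Let d ≥ 2 and let X be a set of 2(d+1) points in ℝ^d partitioned into d+1 color classes C_0, …, C_d of exactly 2 points each, with X ∪ {0} in general position. Then the number of rainbow (d+1)-element subsets of X whose convex hull contains the origin is even. -/
open scoped Classical

/-!
Call a family with one vector of each color a transversal, and fix a vector `v` outside the
finitely many proper subspaces spanned by `d - 1` vectors of a transversal. For a transversal `p`,
call an index `i` a *door* if `v` lies in the cone of the vectors `p j`, `j ≠ i`. The nonnegative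
solutions `l` of `∑ l j • p j = v` form a closed interval on a line; by the choice of `v` it is not
a single point, and exactly one coordinate of `l` vanishes at each endpoint, so that the doors
correspond to the endpoints. The interval is a ray if `0` is in the convex hull of `p`, and is
bounded or empty otherwise; hence the number of doors is odd exactly when `0` is in the convex
hull. On the other hand, whether `i` is a door of `p` does not depend on `p i`, so with an even
number of candidates for `p i` each `i` is a door of an even number of transversals.
-/

open Finset Module
open scoped Function

section FunctionsIndependentOfACoordinate

variable {ι : Type*} [Fintype ι] {κ : ι → Type*} [∀ i, Fintype (κ i)]

lemma card_dvd_card_filter_of_forall_update (i : ι) {Q : (∀ j, κ j) → Prop}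
    (hQ : ∀ f a, Q (Function.update f i a) ↔ Q f) :
    Fintype.card (κ i) ∣ #{f | Q f} := by
  let e := Equiv.piSplitAt i κ
  have he : ∀ f a, e.symm (a, (e f).2) = Function.update f i a := by
    intro f a
    ext j
    by_cases hj : j = i
    · subst hj
      simp [e]
    · simp [e, hj]
  have hcard :
      #{f | Q f} = #((univ : Finset (κ i)) ×ˢ univ.filter fun g => ∃ a, Q (e.symm (a, g))) :=
    card_equiv e fun f => by
      simp only [mem_filter, mem_univ, true_and, mem_product, he, hQ]
      exact ⟨fun h => ⟨f i, h⟩, fun ⟨_, h⟩ => h⟩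
  exact ⟨_, by rw [hcard, card_product, card_univ]⟩

end FunctionsIndependentOfACoordinate

section Transversals

variable {ι α : Type*} {C : ι → Finset α}

lemma eq_of_mem_of_mem_of_pairwise_disjoint (hC : Pairwise (Disjoint on C)) {i j : ι} {x : α}
    (hi : x ∈ C i) (hj : x ∈ C j) : i = j :=
  hC.eq (not_disjoint_iff.2 ⟨x, hi, hj⟩)

lemma transversal_injective (hC : Pairwise (Disjoint on C)) (f : ∀ i, C i) :
    Function.Injective fun i => (f i : α) := fun i j (h : (f i : α) = f j) =>
  eq_of_mem_of_mem_of_pairwise_disjoint hC (f i).2 (h ▸ (f j).2)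

variable [Fintype ι] [DecidableEq α]

lemma image_transversal_injective (hC : Pairwise (Disjoint on C)) :
    Function.Injective fun f : ∀ i, C i => univ.image fun i => (f i : α) := by
  intro f g hfg
  ext i
  have hmem : (f i : α) ∈ univ.image fun i => (f i : α) := mem_image_of_mem _ (mem_univ i)
  obtain ⟨j, -, hj⟩ := mem_image.1 (hfg.subset hmem)
  obtain rfl : j = i := eq_of_mem_of_mem_of_pairwise_disjoint hC (g j).2 (hj ▸ (f i).2)
  exact hj.symm

lemma image_transversal_inter (hC : Pairwise (Disjoint on C)) (f : ∀ i, C i) (i : ι) :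
    (univ.image fun j => (f j : α)) ∩ C i = {(f i : α)} := by
  ext x
  simp only [mem_inter, mem_image, mem_univ, true_and, mem_singleton]
  constructor
  · rintro ⟨⟨j, rfl⟩, hj⟩
    rw [eq_of_mem_of_mem_of_pairwise_disjoint hC (f j).2 hj]
  · rintro rfl
    exact ⟨⟨i, rfl⟩, (f i).2⟩

lemma exists_image_transversal_eq {B : Finset α} (hBC : B ⊆ univ.biUnion C)
    (hcard : Fintype.card ι ≤ #B) (hrainbow : ∀ i, #(B ∩ C i) ≤ 1) :
    ∃ f : ∀ i, C i, (univ.image fun i => (f i : α)) = B := by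
  have hB : B = univ.biUnion fun i => B ∩ C i := by
    rw [← inter_biUnion, inter_eq_left.2 hBC]
  have hsum : ∑ i, #(B ∩ C i) = ∑ _i : ι, 1 := by
    refine le_antisymm (sum_le_sum fun i _ => hrainbow i) ?_
    calc ∑ _i : ι, 1 = Fintype.card ι := by simp
      _ ≤ #(univ.biUnion fun i => B ∩ C i) := hB ▸ hcard
      _ ≤ ∑ i, #(B ∩ C i) := card_biUnion_le
  have hone : ∀ i, ∃ x, B ∩ C i = {x} := fun i =>
    card_eq_one.1 ((sum_eq_sum_iff_of_le fun i _ => hrainbow i).1 hsum i (mem_univ i))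
  choose x hx using hone
  have hxC : ∀ i, x i ∈ C i := fun i => inter_subset_right (hx i ▸ mem_singleton_self _)
  refine ⟨fun i => ⟨x i, hxC i⟩, ?_⟩
  rw [hB]
  simp only [hx, biUnion_singleton]

lemma ncard_rainbow_eq_ncard_transversal (hC : Pairwise (Disjoint on C))
    (P : Finset α → Prop) :
    {B : Finset α | B ⊆ univ.biUnion C ∧ #B = Fintype.card ι ∧ (∀ i, #(B ∩ C i) ≤ 1) ∧ P B}.ncard =
      {f : ∀ i, C i | P (univ.image fun i => (f i : α))}.ncard := by
  rw [← Set.ncard_image_of_injective _ (image_transversal_injective hC)]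
  congr 1
  ext B
  constructor
  · rintro ⟨hBC, hcard, hrainbow, hP⟩
    obtain ⟨f, rfl⟩ := exists_image_transversal_eq hBC hcard.ge hrainbow
    exact ⟨f, hP, rfl⟩
  · rintro ⟨f, hP, rfl⟩
    refine ⟨image_subset_iff.2 fun i _ => mem_biUnion.2 ⟨i, mem_univ i, (f i).2⟩, ?_, ?_, hP⟩
    · rw [card_image_of_injective _ (transversal_injective hC f), card_univ]
    · intro i
      rw [image_transversal_inter hC, card_singleton]

end Transversals

section SignedThresholds

variable {K ι : Type*} [CommRing K] [LinearOrder K] [IsStrictOrderedRing K] [Fintype ι]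
  {t c : ι → K}

-- For `t j = m j / c j`, the numbers `(t j - t i) * c j` are the coordinates of the point of the
-- line `m - s • c` at which the `i`-th coordinate vanishes.
lemma card_filter_pos_and_forall_nonneg (ht : Function.Injective t) (hc : ∀ i, c i ≠ 0) :
    #{i | 0 < c i ∧ ∀ j, 0 ≤ (t j - t i) * c j} =
      if (∃ i, 0 < c i) ∧ ∀ i j, c i < 0 → 0 < c j → t i < t j then 1 else 0 := by
  split_ifs with h
  · obtain ⟨⟨k, hk⟩, hlt⟩ := h
    obtain ⟨a, ha, hmin⟩ := exists_min_image {i | 0 < c i} t ⟨k, by simpa using hk⟩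
    simp only [mem_filter, mem_univ, true_and] at ha hmin
    refine card_eq_one.2 ⟨a, ?_⟩
    ext i
    simp only [mem_filter, mem_univ, true_and, mem_singleton]
    constructor
    · rintro ⟨hi, hsep⟩
      have hia : t i ≤ t a := sub_nonneg.1 (nonneg_of_mul_nonneg_left (hsep a) ha)
      exact ht (hia.antisymm (hmin i hi))
    · rintro rfl
      refine ⟨ha, fun j => ?_⟩
      rcases (hc j).lt_or_gt with hj | hj
      · exact mul_nonneg_of_nonpos_of_nonpos (sub_nonpos.2 (hlt j i hj ha).le) hj.le
      · exact mul_nonneg (sub_nonneg.2 (hmin j hj)) hj.le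
  · refine card_eq_zero.2 (filter_eq_empty_iff.2 ?_)
    rintro i - ⟨hi, hsep⟩
    refine h ⟨⟨i, hi⟩, fun j k hj hk => ?_⟩
    have hji : t j ≤ t i := sub_nonpos.1 (nonpos_of_mul_nonneg_left (hsep j) hj)
    have hik : t i ≤ t k := sub_nonneg.1 (nonneg_of_mul_nonneg_left (hsep k) hk)
    exact (hji.trans hik).lt_of_ne (ht.ne (by rintro rfl; exact lt_asymm hj hk))

lemma card_filter_neg_and_forall_nonneg (ht : Function.Injective t) (hc : ∀ i, c i ≠ 0) :
    #{i | c i < 0 ∧ ∀ j, 0 ≤ (t j - t i) * c j} =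
      if (∃ i, c i < 0) ∧ ∀ i j, c i < 0 → 0 < c j → t i < t j then 1 else 0 := by
  have h := card_filter_pos_and_forall_nonneg (neg_injective.comp ht) (c := -c)
    fun i => neg_ne_zero.2 (hc i)
  have hmul : ∀ i j, (-t j - -t i) * -c j = (t j - t i) * c j := fun i j => by ring
  simp only [Pi.neg_apply, Function.comp_apply, Left.neg_pos_iff, Left.neg_neg_iff, hmul,
    neg_lt_neg_iff] at h
  rw [h]
  congr 2
  exact propext ⟨fun H i j hi hj => H j i hj hi, fun H i j hi hj => H j i hj hi⟩

lemma odd_card_filter_forall_nonneg_iff [Nonempty ι] (ht : Function.Injective t)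
    (hc : ∀ i, c i ≠ 0) :
    Odd #{i | ∀ j, 0 ≤ (t j - t i) * c j} ↔ (∀ i, 0 < c i) ∨ ∀ i, c i < 0 := by
  have hsplit : #{i | ∀ j, 0 ≤ (t j - t i) * c j} =
      #{i | 0 < c i ∧ ∀ j, 0 ≤ (t j - t i) * c j} +
        #{i | c i < 0 ∧ ∀ j, 0 ≤ (t j - t i) * c j} := by
    rw [← card_filter_add_card_filter_not fun i => 0 < c i, filter_filter, filter_filter]
    simp only [and_comm, not_lt, (hc _).le_iff_lt]
  have hpos : (∀ i, 0 < c i) ↔ ¬ ∃ i, c i < 0 := by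
    simp only [not_exists, not_lt, (hc _).symm.le_iff_lt]
  have hneg : (∀ i, c i < 0) ↔ ¬ ∃ i, 0 < c i := by
    simp only [not_exists, not_lt, (hc _).le_iff_lt]
  have hex : (∃ i, 0 < c i) ∨ ∃ i, c i < 0 := by
    obtain ⟨i⟩ := ‹Nonempty ι›
    exact (hc i).lt_or_gt.symm.imp (⟨i, ·⟩) (⟨i, ·⟩)
  rw [hsplit, card_filter_pos_and_forall_nonneg ht hc, card_filter_neg_and_forall_nonneg ht hc,
    hpos, hneg]
  by_cases hP : ∃ i, 0 < c i
  · by_cases hN : ∃ i, c i < 0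
    · simp only [hP, hN, true_and, not_true_eq_false, or_self, iff_false, Nat.not_odd_iff_even]
      exact Even.add_self _
    · have hN' : ∀ i, ¬ c i < 0 := not_exists.1 hN
      simp [hP, hN']
  · have hP' : ∀ i, ¬ 0 < c i := not_exists.1 hP
    simp [hP', hex.resolve_left hP]

end SignedThresholds

section LinearAlgebra

variable {K V ι : Type*} [Field K] [AddCommGroup V] [Module K V]

lemma exists_le_finrank_add_one_eq [FiniteDimensional K V] {W : Submodule K V} (hW : W ≠ ⊤) :
    ∃ H : Submodule K V, W ≤ H ∧ finrank K H + 1 = finrank K V := by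
  obtain ⟨f, hf, hWf⟩ := W.exists_le_ker_of_lt_top hW.lt_top
  exact ⟨LinearMap.ker f, hWf, Module.Dual.finrank_ker_add_one_of_ne_zero hf⟩

lemma span_image_ne_top_of_ncard_lt [Finite ι] {p : ι → V} {s : Set ι}
    (hs : s.ncard < finrank K V) :
    Submodule.span K (p '' s) ≠ ⊤ := by
  intro htop
  have hle : finrank K (Submodule.span K (p '' s)) ≤ s.ncard := by
    have := Fintype.ofFinite ι
    rw [Set.image_eq_range, ← Nat.card_coe_set_eq, Nat.card_eq_fintype_card]
    exact finrank_range_le_card _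
  rw [htop, finrank_top] at hle
  omega

lemma exists_forall_notMem_of_forall_ne_top [Infinite K] {α : Type*} [Finite α]
    (W : α → Submodule K V) (hW : ∀ a, W a ≠ ⊤) : ∃ v, ∀ a, v ∉ W a := by
  by_contra! h
  obtain ⟨a, ha⟩ := Subspace.exists_eq_top_of_iUnion_eq_univ (p := W)
    (Set.eq_univ_of_forall fun v => Set.mem_iUnion.2 (h v))
  exact hW a ha

variable [Fintype ι] {p : ι → V}

lemma eq_zero_of_sum_smul_eq_zero {i : ι} (hp : LinearIndepOn K p {i}ᶜ) {c : ι → K}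
    (hc : ∑ j, c j • p j = 0) (hi : c i = 0) : c = 0 := by
  have hsum : ∑ j ∈ {i}ᶜ, c j • p j = 0 := by
    rw [← hc, Fintype.sum_eq_add_sum_compl i, hi, zero_smul, zero_add]
  ext j
  by_cases hj : j = i
  · rw [hj, hi, Pi.zero_apply]
  · exact linearIndepOn_iff'.1 hp {i}ᶜ c (by simp) hsum j (by simpa using hj)

lemma eq_div_mul_of_sum_smul_eq_zero {i : ι} (hp : LinearIndepOn K p {i}ᶜ) {c w : ι → K}
    (hc : ∑ j, c j • p j = 0) (hci : c i ≠ 0) (hw : ∑ j, w j • p j = 0) (j : ι) :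
    w j = w i / c i * c j := by
  have hzero : (fun j => w j - w i / c i * c j) = 0 := by
    refine eq_zero_of_sum_smul_eq_zero hp ?_ (by rw [div_mul_cancel₀ _ hci, sub_self])
    simp only [sub_smul, mul_smul, sum_sub_distrib, ← smul_sum, hc, hw, smul_zero, sub_zero]
  exact sub_eq_zero.1 (congrFun hzero j)

lemma sum_sub_mul_smul_eq {c m : ι → K} {v : V} (hc : ∑ j, c j • p j = 0)
    (hm : ∑ j, m j • p j = v) (s : K) : ∑ j, (m j - s * c j) • p j = v := by
  simp only [sub_smul, mul_smul, sum_sub_distrib, ← smul_sum, hc, hm, smul_zero, sub_zero]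

lemma exists_forall_ne_zero_sum_smul_eq_zero [FiniteDimensional K V]
    (hcard : finrank K V < Fintype.card ι) (hp : ∀ i, LinearIndepOn K p {i}ᶜ) :
    ∃ c : ι → K, (∀ i, c i ≠ 0) ∧ ∑ j, c j • p j = 0 := by
  have hker := LinearMap.ker_ne_bot_of_finrank_lt (f := Fintype.linearCombination K p)
    (by simpa using hcard)
  obtain ⟨c, hc, hne⟩ := Submodule.exists_mem_ne_zero_of_ne_bot hker
  rw [LinearMap.mem_ker, Fintype.linearCombination_apply] at hc
  exact ⟨c, fun i hi => hne (eq_zero_of_sum_smul_eq_zero (hp i) hc hi), hc⟩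

lemma exists_sum_smul_eq [FiniteDimensional K V] {i : ι}
    (hcard : Fintype.card ι = finrank K V + 1) (hp : LinearIndepOn K p {i}ᶜ) (v : V) :
    ∃ m : ι → K, ∑ j, m j • p j = v := by
  have htop : Submodule.span K (p '' {i}ᶜ) = ⊤ := by
    rw [Set.image_eq_range]
    refine hp.span_eq_top_of_card_eq_finrank' ?_
    rw [Fintype.card_compl_set, Set.card_singleton, hcard, Nat.add_sub_cancel]
  have hv : v ∈ Submodule.span K (Set.range p) :=
    Submodule.span_mono (Set.image_subset_range _ _) (htop ▸ Submodule.mem_top)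
  exact (Submodule.mem_span_range_iff_exists_fun K).1 hv

lemma sum_smul_mem_span_image_compl {c : ι → K} {s : Set ι} (hc : ∀ i ∈ s, c i = 0) :
    ∑ j, c j • p j ∈ Submodule.span K (p '' sᶜ) := by
  refine Submodule.sum_mem _ fun j _ => ?_
  by_cases hj : j ∈ s
  · rw [hc j hj, zero_smul]
    exact Submodule.zero_mem _
  · exact Submodule.smul_mem _ _ (Submodule.subset_span ⟨j, hj, rfl⟩)

lemma div_injective_of_notMem_span {v : V}
    (hv : Pairwise fun i j => v ∉ Submodule.span K (p '' {i, j}ᶜ))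
    {c m : ι → K} (hc : ∑ j, c j • p j = 0) (hne : ∀ j, c j ≠ 0) (hm : ∑ j, m j • p j = v) :
    Function.Injective fun i => m i / c i := by
  intro i j hij
  by_contra hne_ij
  refine hv hne_ij (sum_sub_mul_smul_eq hc hm (m i / c i) ▸ sum_smul_mem_span_image_compl ?_)
  rintro k (rfl | rfl)
  · rw [div_mul_cancel₀ _ (hne k), sub_self]
  · rw [show m i / c i = m k / c k from hij, div_mul_cancel₀ _ (hne k), sub_self]

lemma exists_forall_notMem_span_image_compl_pair [Infinite K] {α : Type*} [Finite α]
    (hcard : Fintype.card ι = finrank K V + 1) (P : α → ι → V) :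
    ∃ v, ∀ a, Pairwise fun i j => v ∉ Submodule.span K (P a '' {i, j}ᶜ) := by
  obtain ⟨v, hv⟩ := exists_forall_notMem_of_forall_ne_top
    (fun x : α × {y : ι × ι // y.1 ≠ y.2} =>
      Submodule.span K (P x.1 '' {x.2.1.1, x.2.1.2}ᶜ)) fun ⟨a, ⟨i, j⟩, hij⟩ => by
    refine span_image_ne_top_of_ncard_lt ?_
    have hcompl := Set.ncard_add_ncard_compl {i, j}
    rw [Set.ncard_pair hij, Nat.card_eq_fintype_card] at hcompl
    dsimp only
    omega
  exact ⟨v, fun a i j hij => hv (a, ⟨(i, j), hij⟩)⟩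

end LinearAlgebra

section ConvexHull

variable {K V ι : Type*} [Field K] [LinearOrder K] [IsStrictOrderedRing K] [AddCommGroup V]
  [Module K V] [Fintype ι] {p : ι → V}

lemma mem_convexHull_range_iff_exists_mem_stdSimplex {x : V} :
    x ∈ convexHull K (Set.range p) ↔ ∃ w ∈ stdSimplex K ι, ∑ i, w i • p i = x := by
  have hrange : Set.range p =
      Fintype.linearCombination K p '' Set.range fun i => Pi.single i 1 := by
    rw [← Set.range_comp]
    simp [Function.comp_def]
  rw [hrange, ← LinearMap.image_convexHull, convexHull_rangle_single_eq_stdSimplex]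
  simp only [Set.mem_image, Fintype.linearCombination_apply]

lemma zero_mem_convexHull_range_of_pos [Nonempty ι] {c : ι → K} (hc : ∑ j, c j • p j = 0)
    (hpos : ∀ i, 0 < c i) : (0 : V) ∈ convexHull K (Set.range p) := by
  have hmem := univ.centerMass_mem_convexHull (w := c) (z := p) (s := Set.range p)
    (fun i _ => (hpos i).le) (sum_pos (fun i _ => hpos i) univ_nonempty)
    fun i _ => Set.mem_range_self i
  rwa [centerMass, hc, smul_zero] at hmem

lemma zero_mem_convexHull_range_iff [Nonempty ι] (hp : ∀ i, LinearIndepOn K p {i}ᶜ) {c : ι → K}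
    (hc : ∑ j, c j • p j = 0) (hne : ∀ i, c i ≠ 0) :
    (0 : V) ∈ convexHull K (Set.range p) ↔ (∀ i, 0 < c i) ∨ ∀ i, c i < 0 := by
  constructor
  · rw [mem_convexHull_range_iff_exists_mem_stdSimplex]
    rintro ⟨w, ⟨hw_nonneg, hw_sum⟩, hw⟩
    have hw_pos : ∀ i, 0 < w i := fun i => (hw_nonneg i).lt_of_ne' fun hi => by
      simp [eq_zero_of_sum_smul_eq_zero (hp i) hw hi] at hw_sum
    obtain ⟨i⟩ := ‹Nonempty ι›
    have hprop := eq_div_mul_of_sum_smul_eq_zero (hp i) hw (hw_pos i).ne' hc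
    rcases (hne i).lt_or_gt with hi | hi
    · exact .inr fun j => hprop j ▸ mul_neg_of_neg_of_pos (div_neg_of_neg_of_pos hi (hw_pos i))
        (hw_pos j)
    · exact .inl fun j => hprop j ▸ mul_pos (div_pos hi (hw_pos i)) (hw_pos j)
  · rintro (hpos | hneg)
    · exact zero_mem_convexHull_range_of_pos hc hpos
    · exact zero_mem_convexHull_range_of_pos (c := -c) (by simp [hc]) fun i => by simpa using hneg i

end ConvexHull

section Doors

variable {K V ι : Type*} [Field K] [LinearOrder K] [AddCommGroup V] [Module K V] [Fintype ι]
  {p : ι → V} {v : V}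

variable (K) in
/-- The index `i` is a *door* of the family `p` with respect to `v` if `v` lies in the convex cone
spanned by the vectors `p j` with `j ≠ i`. -/
def IsDoor (v : V) (p : ι → V) (i : ι) : Prop :=
  ∃ l : ι → K, l i = 0 ∧ (∀ j, 0 ≤ l j) ∧ ∑ j, l j • p j = v

lemma isDoor_congr {q : ι → V} {i : ι} (h : ∀ j ≠ i, p j = q j) :
    IsDoor K v p i ↔ IsDoor K v q i := by
  refine exists_congr fun l => and_congr_right fun hl => and_congr_right fun _ => ?_
  rw [sum_congr rfl fun j _ => ?_]
  by_cases hj : j = i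
  · rw [hj, hl, zero_smul, zero_smul]
  · rw [h j hj]

-- The solutions of `∑ l j • p j = v` are `m - s • c`, and the `i`-th coordinate vanishes at
-- `s = m i / c i`.
lemma isDoor_iff {i : ι} (hp : LinearIndepOn K p {i}ᶜ) {c m : ι → K} (hc : ∑ j, c j • p j = 0)
    (hne : ∀ j, c j ≠ 0) (hm : ∑ j, m j • p j = v) :
    IsDoor K v p i ↔ ∀ j, 0 ≤ (m j / c j - m i / c i) * c j := by
  simp only [sub_mul, div_mul_cancel₀ _ (hne _)]
  constructor
  · rintro ⟨l, hli, hl_nonneg, hl⟩ j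
    have hdiff : ∑ j, (m j - l j) • p j = 0 := by
      simp only [sub_smul, sum_sub_distrib, hm, hl, sub_self]
    have hj := eq_div_mul_of_sum_smul_eq_zero hp hc (hne i) hdiff j
    rw [hli, sub_zero] at hj
    rw [← hj, sub_sub_cancel]
    exact hl_nonneg j
  · exact fun h => ⟨fun j => m j - m i / c i * c j, by simp [hne i], h,
      sum_sub_mul_smul_eq hc hm _⟩

variable [IsStrictOrderedRing K] [FiniteDimensional K V]

lemma odd_card_isDoor_iff (hcard : Fintype.card ι = finrank K V + 1)
    (hp : ∀ i, LinearIndepOn K p {i}ᶜ)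
    (hv : Pairwise fun i j => v ∉ Submodule.span K (p '' {i, j}ᶜ)) :
    Odd #{i | IsDoor K v p i} ↔ (0 : V) ∈ convexHull K (Set.range p) := by
  have : Nonempty ι := Fintype.card_pos_iff.1 (by omega)
  obtain ⟨c, hne, hc⟩ := exists_forall_ne_zero_sum_smul_eq_zero (by omega) hp
  obtain ⟨m, hm⟩ := exists_sum_smul_eq hcard (hp (Classical.arbitrary ι)) v
  simp only [isDoor_iff (hp _) hc hne hm]
  rw [odd_card_filter_forall_nonneg_iff (div_injective_of_notMem_span hv hc hne hm) hne,
    zero_mem_convexHull_range_iff hp hc hne]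

theorem even_ncard_zero_mem_convexHull_range {κ : ι → Type*} [∀ i, Fintype (κ i)]
    (hcard : Fintype.card ι = finrank K V + 1) (heven : ∀ i, Even (Fintype.card (κ i)))
    (x : ∀ i, κ i → V) (hind : ∀ (f : ∀ i, κ i) i, LinearIndepOn K (fun j => x j (f j)) {i}ᶜ) :
    Even {f : ∀ i, κ i | (0 : V) ∈ convexHull K (Set.range fun i => x i (f i))}.ncard := by
  obtain ⟨v, hv⟩ := exists_forall_notMem_span_image_compl_pair hcard
    fun (f : ∀ i, κ i) i => x i (f i)
  have hdoor : ∀ i, Even #{f : ∀ i, κ i | IsDoor K v (fun j => x j (f j)) i} := by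
    intro i
    have hdvd := card_dvd_card_filter_of_forall_update i (κ := κ)
      (Q := fun f => IsDoor K v (fun j => x j (f j)) i)
      fun f a => isDoor_congr fun j hj => by rw [Function.update_of_ne hj]
    exact even_iff_two_dvd.2 ((heven i).two_dvd.trans hdvd)
  have hcount : ∑ f : ∀ i, κ i, #{i | IsDoor K v (fun j => x j (f j)) i} =
      ∑ i, #{f : ∀ i, κ i | IsDoor K v (fun j => x j (f j)) i} :=
    sum_card_bipartiteAbove_eq_sum_card_bipartiteBelow _
  have hsum := hcount ▸ even_sum _ fun i _ => hdoor i
  simpa only [even_sum_iff_even_card_odd, odd_card_isDoor_iff hcard (hind _) (hv _),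
    Set.ncard_eq_toFinset_card', Set.toFinset_ofPred] using hsum

theorem even_rainbow_simplices_general [DecidableEq V] {d : ℕ} (hV : finrank K V = d)
    (hι : Fintype.card ι = d + 1) (C : ι → Finset V) (heven : ∀ i, Even #(C i))
    (hdisj : Pairwise (Disjoint on C))
    (hind : ∀ B ⊆ univ.biUnion C, #B = d → LinearIndepOn K id (B : Set V)) :
    Even {B : Finset V | B ⊆ univ.biUnion C ∧ #B = d + 1 ∧ (∀ i, #(B ∩ C i) ≤ 1) ∧
      (0 : V) ∈ convexHull K (B : Set V)}.ncard := by
  have htransversal : ∀ (f : ∀ i, C i) i, LinearIndepOn K (fun j => (f j : V)) {i}ᶜ := by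
    intro f i
    have hinj := transversal_injective hdisj f
    rw [linearIndepOn_iff_image hinj.injOn]
    have hB := hind (({i}ᶜ : Finset ι).image fun j => (f j : V))
      (image_subset_iff.2 fun j _ => mem_biUnion.2 ⟨j, mem_univ j, (f j).2⟩)
      (by rw [card_image_of_injective _ hinj, card_compl, card_singleton, hι, Nat.add_sub_cancel])
    simpa using hB
  rw [← hι, ncard_rainbow_eq_ncard_transversal hdisj]
  simpa using even_ncard_zero_mem_convexHull_range (hV.symm ▸ hι) (by simpa using heven)
    (fun i (y : C i) => (y : V)) htransversal

end Doors

lemma GenPos.linearIndepOn {d : ℕ} {P : Set (Fin d → ℝ)} (hP : GenPos d (P ∪ {0})) (h0 : 0 ∉ P)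
    {B : Finset (Fin d → ℝ)} (hBP : ↑B ⊆ P) (hcard : #B = d) :
    LinearIndepOn ℝ id (B : Set (Fin d → ℝ)) := by
  by_contra hdep
  have hspan : Submodule.span ℝ (B : Set (Fin d → ℝ)) ≠ ⊤ := fun htop =>
    hdep (linearIndependent_of_top_le_span_of_card_eq_finrank (by simp [htop]) (by simp [hcard]))
  obtain ⟨H, hBH, hH⟩ := exists_le_finrank_add_one_eq hspan
  rw [finrank_fin_fun] at hH
  refine hP (finrank ℝ H) (by omega) (insert 0 B) ?_ ?_ ⟨H.toAffineSubspace, ?_, ?_⟩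
  · rw [coe_insert, Set.union_singleton]
    exact Set.insert_subset_insert hBP
  · rw [card_insert_of_notMem fun h => h0 (hBP h), hcard]
    omega
  · rw [Submodule.toAffineSubspace_direction]
  · rw [coe_insert, Set.insert_subset_iff]
    exact ⟨H.zero_mem, Submodule.subset_span.trans hBH⟩

/-- **Deza et al., special case.** For `d ≥ 2` and a set `X` of `2(d+1)` points in `ℝ^d`
partitioned into `d + 1` color classes of exactly two points each, with `X ∪ {0}` in
general position, the number of rainbow `(d+1)`-element subsets of `X` whose convex hull
contains the origin is even. -/
theorem even_rainbow_simplices (d : ℕ) (hd : 2 ≤ d)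
    (X : Finset (Fin d → ℝ)) (C : Fin (d + 1) → Finset (Fin d → ℝ))
    (hXcard : X.card = 2 * (d + 1))
    (hccard : ∀ i : Fin (d + 1), (C i).card = 2)
    (hcdisj : ∀ i j : Fin (d + 1), i ≠ j → Disjoint (C i) (C j))
    (hX : X = Finset.univ.biUnion C)
    (h0X : (0 : Fin d → ℝ) ∉ X)
    (hgen : GenPos d (↑X ∪ {0})) :
    Even (Set.ncard { B : Finset (Fin d → ℝ) | B ⊆ X ∧ B.card = d + 1 ∧
      (∀ i : Fin (d + 1), (B ∩ C i).card ≤ 1) ∧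
      (0 : Fin d → ℝ) ∈ convexHull ℝ (B : Set (Fin d → ℝ)) }) := by
  subst hX
  exact even_rainbow_simplices_general (by simp) (by simp) C (fun i => hccard i ▸ even_two)
    (fun i j => hcdisj i j) fun B hB hcard => hgen.linearIndepOn h0X (coe_subset.2 hB) hcard
end

section
/- Let d ≥ 1, let S be a set of d points in ℝ^d, and let q ∈ ℝ^d be a point such that the set S ∪ {q} ∪ {0} (of d+2 points) is in general position. Then the origin 0 lies in the convex hull of S ∪ {q} if and only if −q lies in the convex cone generated by S (the set of all nonnegative linear combinations of points of S). -/
/-!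
If `0 ∉ conv S`, then `0 ∈ conv (S ∪ {q})` exactly when `0` lies on a segment from `q` to some
`y ∈ conv S`, that is, when `-q` is a nonnegative multiple of such a `y`, and these multiples sweep
out the cone generated by `S`. General position makes `S ∪ {0}` affinely independent,
so `0 ∉ conv S`.
-/

open scoped Classical

section ConvexCone

variable {𝕜 E : Type*} [Field 𝕜] [LinearOrder 𝕜] [IsStrictOrderedRing 𝕜]
  [AddCommGroup E] [Module 𝕜 E] {s : Set E} {x q : E}

theorem mem_pointedCone_hull_iff_exists_smul_convexHull (hs : s.Nonempty) :
    x ∈ PointedCone.hull 𝕜 s ↔ ∃ y ∈ convexHull 𝕜 s, ∃ r : 𝕜, 0 ≤ r ∧ r • y = x := by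
  constructor
  · intro hx
    induction hx using Submodule.span_induction with
    | mem y hy => exact ⟨y, subset_convexHull 𝕜 s hy, 1, zero_le_one, one_smul 𝕜 y⟩
    | zero =>
      obtain ⟨y, hy⟩ := hs.convexHull (𝕜 := 𝕜)
      exact ⟨y, hy, 0, le_rfl, zero_smul 𝕜 y⟩
    | add _ _ _ _ ih₁ ih₂ =>
      obtain ⟨y, hy, a, ha, rfl⟩ := ih₁
      obtain ⟨z, hz, b, hb, rfl⟩ := ih₂
      obtain ⟨w, hw, hwyz⟩ := (convex_convexHull 𝕜 s).exists_mem_add_smul_eq hy hz ha hb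
      exact ⟨w, hw, a + b, add_nonneg ha hb, hwyz⟩
    | smul c _ _ ih =>
      obtain ⟨y, hy, a, ha, rfl⟩ := ih
      exact ⟨y, hy, c * a, mul_nonneg c.2 ha, mul_smul (c : 𝕜) a y⟩
  · rintro ⟨y, hy, r, hr, rfl⟩
    have hy_cone : y ∈ PointedCone.hull 𝕜 s :=
      convexHull_min PointedCone.subset_hull (PointedCone.convex _) hy
    exact (PointedCone.hull 𝕜 s).smul_mem hr hy_cone

theorem zero_mem_convexHull_insert_iff_neg_mem_hull (h0 : (0 : E) ∉ convexHull 𝕜 s) :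
    (0 : E) ∈ convexHull 𝕜 (insert q s) ↔ -q ∈ PointedCone.hull 𝕜 s := by
  rcases s.eq_empty_or_nonempty with rfl | hs
  · simp [eq_comm]
  calc (0 : E) ∈ convexHull 𝕜 (insert q s)
    _ ↔ ∃ y ∈ convexHull 𝕜 s, SameRay 𝕜 (-q) y := by
      simp only [convexHull_insert hs, mem_convexJoin, Set.mem_singleton_iff, exists_eq_left,
        mem_segment_iff_sameRay, zero_sub, sub_zero]
    _ ↔ ∃ y ∈ convexHull 𝕜 s, ∃ r : 𝕜, 0 ≤ r ∧ r • y = -q :=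
      exists_congr fun y ↦ and_congr_right fun hy ↦ SameRay.sameRay_comm.trans
        (exists_nonneg_left_iff_sameRay (ne_of_mem_of_not_mem hy h0)).symm
    _ ↔ -q ∈ PointedCone.hull 𝕜 s :=
      (mem_pointedCone_hull_iff_exists_smul_convexHull hs).symm

end ConvexCone

theorem mem_pointedCone_hull_finset {R M : Type*} [Semiring R] [PartialOrder R] [IsOrderedRing R]
    [AddCommMonoid M] [Module R M] {S : Finset M} {x : M} :
    x ∈ PointedCone.hull R (S : Set M) ↔
      ∃ c : M → R, (∀ y ∈ S, 0 ≤ c y) ∧ x = ∑ y ∈ S, c y • y := by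
  constructor
  · intro hx
    obtain ⟨c, -, hc⟩ := Submodule.mem_span_finset.1 hx
    exact ⟨fun y ↦ c y, fun y _ ↦ (c y).2, hc.symm⟩
  · rintro ⟨c, hc, rfl⟩
    exact Submodule.sum_mem _ fun y hy ↦
      (PointedCone.hull R (S : Set M)).smul_mem (hc y hy) (PointedCone.subset_hull hy)

section AffineIndependence

variable {k V P : Type*} [AddCommGroup V]

theorem notMem_affineSpan_of_affineIndependent_insert [Ring k] [Nontrivial k] [Module k V]
    [AddTorsor V P] {s : Set P} {p : P}
    (h : AffineIndependent k ((↑) : ↑(insert p s) → P)) (hp : p ∉ s) : p ∉ affineSpan k s := by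
  have himage : ((↑) : ↑(insert p s) → P) '' ((↑) ⁻¹' s) = s := by
    rw [Subtype.image_preimage_coe, Set.inter_eq_right]
    exact Set.subset_insert p s
  have hiff := h.mem_affineSpan_iff ⟨p, Set.mem_insert p s⟩ ((↑) ⁻¹' s)
  rw [himage] at hiff
  exact hiff.not.2 hp

theorem finrank_vectorSpan_of_affineIndependent_erase [DivisionRing k] [Module k V]
    [AddTorsor V P] [DecidableEq P] {T : Finset P} {p : P} {n : ℕ} (hcard : T.card = n + 2)
    (hT : ¬ AffineIndependent k ((↑) : T → P)) (hp : p ∈ T)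
    (herase : AffineIndependent k ((↑) : T.erase p → P)) :
    Module.finrank k (vectorSpan k (T : Set P)) = n := by
  have hrange (U : Finset P) : Set.range ((↑) : U → P) = U := Subtype.range_coe
  have hle : Module.finrank k (vectorSpan k (T : Set P)) ≤ n := by
    rw [← hrange, finrank_vectorSpan_le_iff_not_affineIndependent k _ (by simpa using hcard)]
    exact hT
  have herase_finrank : Module.finrank k (vectorSpan k (T.erase p : Set P)) = n := by
    rw [← hrange]
    exact herase.finrank_vectorSpan (by simp [hp, hcard])
  have := finiteDimensional_vectorSpan_of_finite k T.finite_toSet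
  exact hle.antisymm <| herase_finrank.ge.trans <|
    Submodule.finrank_mono <| vectorSpan_mono k <| Finset.coe_subset.2 (T.erase_subset p)

end AffineIndependence

theorem GenPos.mono {d : ℕ} {P Q : Set (Fin d → ℝ)} (hQ : GenPos d Q) (hPQ : P ⊆ Q) :
    GenPos d P :=
  fun j hj S hS ↦ hQ j hj S (hS.trans hPQ)

-- A minimal affinely dependent subset of `j + 2` points would span a flat of dimension exactly `j`.
theorem GenPos.affineIndependent_s11 {d : ℕ} {P : Set (Fin d → ℝ)} (hP : GenPos d P)
    (T : Finset (Fin d → ℝ)) (hTP : ↑T ⊆ P) (hT : T.card ≤ d + 1) :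
    AffineIndependent ℝ ((↑) : T → Fin d → ℝ) := by
  induction T using Finset.eraseInduction with
  | _ T ih =>
  rcases Nat.lt_or_ge T.card 2 with hsmall | hlarge
  · have : Subsingleton T := Finset.card_le_one_iff_subsingleton_coe.1 (Nat.le_of_lt_succ hsmall)
    exact affineIndependent_of_subsingleton ℝ _
  obtain ⟨j, hj⟩ := Nat.exists_eq_add_of_le' hlarge
  obtain ⟨p, hp⟩ : T.Nonempty := Finset.card_pos.1 (by omega)
  have herase : AffineIndependent ℝ ((↑) : T.erase p → Fin d → ℝ) :=
    ih p hp ((Finset.coe_subset.2 (T.erase_subset p)).trans hTP) (T.card_erase_le.trans hT)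
  by_contra hdep
  refine hP j (by omega) T hTP hj ⟨affineSpan ℝ T, ?_, subset_affineSpan ℝ _⟩
  rw [direction_affineSpan]
  exact finrank_vectorSpan_of_affineIndependent_erase hj hdep hp herase

theorem GenPos.notMem_convexHull {d : ℕ} {S : Finset (Fin d → ℝ)} {p : Fin d → ℝ}
    (hgen : GenPos d (insert p ↑S)) (hS : S.card ≤ d) (hp : p ∉ S) :
    p ∉ convexHull ℝ (S : Set (Fin d → ℝ)) := by
  have hindep : AffineIndependent ℝ ((↑) : ↑(insert p (S : Set (Fin d → ℝ))) → Fin d → ℝ) := by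
    rw [← Finset.coe_insert]
    exact hgen.affineIndependent_s11 (insert p S) (Finset.coe_insert p S).subset
      ((Finset.card_insert_le p S).trans (Nat.succ_le_succ hS))
  exact fun hmem ↦ notMem_affineSpan_of_affineIndependent_insert hindep hp
    (convexHull_subset_affineSpan _ hmem)

theorem origin_mem_convexHull_iff_neg_mem_cone_general (d : ℕ)
    (S : Finset (Fin d → ℝ)) (hS : S.card ≤ d) (q : Fin d → ℝ) (h0S : (0 : Fin d → ℝ) ∉ S)
    (hgen : GenPos d (insert 0 ↑S)) :
    (0 : Fin d → ℝ) ∈ convexHull ℝ (↑S ∪ {q} : Set (Fin d → ℝ)) ↔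
      ∃ lam : (Fin d → ℝ) → ℝ, (∀ s ∈ S, 0 ≤ lam s) ∧ -q = ∑ s ∈ S, lam s • s := by
  rw [Set.union_singleton,
    zero_mem_convexHull_insert_iff_neg_mem_hull (hgen.notMem_convexHull hS h0S),
    mem_pointedCone_hull_finset]

/-- For `d ≥ 1`, a set `S` of `d` points in `ℝ^d` and a point `q` such that the `d + 2`
points of `S ∪ {q} ∪ {0}` are in general position: the origin lies in the convex hull of
`S ∪ {q}` if and only if `-q` lies in the convex cone generated by `S`. -/
theorem origin_mem_convexHull_iff_neg_mem_cone (d : ℕ) (hd : 1 ≤ d)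
    (S : Finset (Fin d → ℝ)) (hS : S.card = d)
    (q : Fin d → ℝ) (hqS : q ∉ S) (h0S : (0 : Fin d → ℝ) ∉ S) (hq0 : q ≠ 0)
    (hgen : GenPos d ((↑S ∪ {q}) ∪ {0})) :
    (0 : Fin d → ℝ) ∈ convexHull ℝ (↑S ∪ {q} : Set (Fin d → ℝ)) ↔
      ∃ lam : (Fin d → ℝ) → ℝ, (∀ s ∈ S, 0 ≤ lam s) ∧ -q = ∑ s ∈ S, lam s • s := by
  exact origin_mem_convexHull_iff_neg_mem_cone_general d S hS.le q h0S (hgen.mono (by grind))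
end
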